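/- arXiv:2511.20064 — 7 statements merged into one kernel-verified Lean document; each statement's English description precedes it below -/
import Mathlib

section
/- Let ν ≥ 1 be an integer, and let u : ℝ → ℝ^ν and u' : ℝ → ℝ^ν be such that u has derivative u'(τ) at every τ ∈ [0,1] and u' is integrable on [0,1]. Then for every η > 0, every ρ with 0 < ρ ≤ 1, and every t ∈ (0,1), one has ‖u(t)‖ ≤ 2η + ∫₀¹ (‖u'(τ)‖ − η/ρ)_+ dτ + (1/ρ) ∫₀¹ (‖u(τ)‖ − η)_+ dτ. -/
open MeasureTheory Filter Topology

/-- Truncated one-dimensional Sobolev embedding (Lemma 2.10). -/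
theorem truncated_sobolev_1d (ν : ℕ) (hν : 1 ≤ ν)
    (u u' : ℝ → EuclideanSpace ℝ (Fin ν))
    (hderiv : ∀ τ ∈ Set.Icc (0:ℝ) 1, HasDerivAt u (u' τ) τ)
    (hint : IntegrableOn u' (Set.Icc (0:ℝ) 1))
    (η : ℝ) (hη : 0 < η) (ρ : ℝ) (hρ : 0 < ρ) (hρ1 : ρ ≤ 1)
    (t : ℝ) (ht : t ∈ Set.Ioo (0:ℝ) 1) :
    ‖u t‖ ≤ 2 * η + (∫ τ in Set.Icc (0:ℝ) 1, max (‖u' τ‖ - η / ρ) 0)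
      + (1 / ρ) * ∫ τ in Set.Icc (0:ℝ) 1, max (‖u τ‖ - η) 0 := by
  obtain ⟨ht0, ht1⟩ := ht
  obtain ⟨a, ha0, hat, hta, ha1⟩ : ∃ a : ℝ, 0 ≤ a ∧ a ≤ t ∧ t ≤ a + ρ ∧ a + ρ ≤ 1 := by
    rcases le_total t (1 - ρ) with h | h
    · exact ⟨t, by linarith, le_rfl, by linarith, by linarith⟩
    · exact ⟨1 - ρ, by linarith, h, by linarith, by linarith⟩
  have hJ : Set.Icc a (a + ρ) ⊆ Set.Icc (0:ℝ) 1 := Set.Icc_subset_Icc ha0 ha1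
  have hcont : ContinuousOn u (Set.Icc (0:ℝ) 1) :=
    fun x hx => (hderiv x hx).continuousAt.continuousWithinAt
  have hB : IntegrableOn (fun τ => max (‖u τ‖ - η) 0) (Set.Icc (0:ℝ) 1) := by
    apply ContinuousOn.integrableOn_Icc
    exact ContinuousOn.sup (hcont.norm.sub continuousOn_const) continuousOn_const
  have hA : IntegrableOn (fun τ => max (‖u' τ‖ - η / ρ) 0) (Set.Icc (0:ℝ) 1) :=
    (hint.norm.sub (integrableOn_const (by simp))).pos_part
  set A := ∫ τ in Set.Icc (0:ℝ) 1, max (‖u' τ‖ - η / ρ) 0 with hAdef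
  set B := ∫ τ in Set.Icc (0:ℝ) 1, max (‖u τ‖ - η) 0 with hBdef
  have hAJ : ∫ τ in Set.Icc a (a + ρ), max (‖u' τ‖ - η / ρ) 0 ≤ A :=
    setIntegral_mono_set hA (Eventually.of_forall fun x => le_max_right _ _) hJ.eventuallyLE
  have hBJ : ∫ τ in Set.Icc a (a + ρ), max (‖u τ‖ - η) 0 ≤ B :=
    setIntegral_mono_set hB (Eventually.of_forall fun x => le_max_right _ _) hJ.eventuallyLE
  have hU : ∫ τ in Set.Icc a (a + ρ), ‖u' τ‖ ≤ A + η := by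
    have hc : IntegrableOn (fun _ : ℝ => η / ρ) (Set.Icc a (a + ρ)) :=
      integrableOn_const (by simp)
    have h1 : ∫ τ in Set.Icc a (a + ρ), ‖u' τ‖ ≤
        ∫ τ in Set.Icc a (a + ρ), (max (‖u' τ‖ - η / ρ) 0 + η / ρ) := by
      apply setIntegral_mono_on ((hint.mono_set hJ).norm) ((hA.mono_set hJ).add hc)
        measurableSet_Icc
      intro x _
      have := le_max_left (‖u' x‖ - η / ρ) 0
      simp only [Pi.add_apply]
      linarith
    rw [integral_add (hA.mono_set hJ) hc] at h1
    have h2 : ∫ τ in Set.Icc a (a + ρ), η / ρ = η := by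
      simp [hρ.le]
      field_simp
    linarith
  have key : ∀ s ∈ Set.Icc a (a + ρ), ‖u t‖ - 2 * η - A ≤ max (‖u s‖ - η) 0 := by
    intro s hs
    have hsub : Set.uIcc s t ⊆ Set.Icc a (a + ρ) := Set.uIcc_subset_Icc hs ⟨hat, hta⟩
    have hii : IntervalIntegrable u' volume s t := by
      rw [intervalIntegrable_iff]
      exact hint.mono_set ((Set.uIoc_subset_uIcc.trans hsub).trans hJ)
    have hftc := intervalIntegral.integral_eq_sub_of_hasDerivAt
      (fun x hx => hderiv x (hJ (hsub hx))) hii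
    have h1 : ‖u t - u s‖ ≤ ∫ τ in Set.uIoc s t, ‖u' τ‖ := by
      rw [← hftc]; exact intervalIntegral.norm_integral_le_integral_norm_uIoc
    have h2 : ∫ τ in Set.uIoc s t, ‖u' τ‖ ≤ ∫ τ in Set.Icc a (a + ρ), ‖u' τ‖ :=
      setIntegral_mono_set ((hint.mono_set hJ).norm)
        (Eventually.of_forall fun x => norm_nonneg _)
        (Set.uIoc_subset_uIcc.trans hsub).eventuallyLE
    have h3 := norm_sub_norm_le (u t) (u s)
    have h4 := le_max_left (‖u s‖ - η) 0
    linarith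
  have h5 : ∫ τ in Set.Icc a (a + ρ), (‖u t‖ - 2 * η - A) ≤
      ∫ τ in Set.Icc a (a + ρ), max (‖u τ‖ - η) 0 :=
    setIntegral_mono_on (integrableOn_const (by simp)) (hB.mono_set hJ) measurableSet_Icc key
  have h6 : ∫ τ in Set.Icc a (a + ρ), (‖u t‖ - 2 * η - A) = ρ * (‖u t‖ - 2 * η - A) := by
    simp [hρ.le]
  have h7 : ‖u t‖ - 2 * η - A ≤ B / ρ := by
    rw [le_div_iff₀ hρ]; linarith
  rw [one_div_mul_eq_div]
  linarith
end

section
/- For every integer k ≥ 1 there exists a constant C > 0 such that the following holds for every integer ν ≥ 1: if Ω ⊆ ℝ^k is open, u : Ω → ℝ^ν is k-times continuously differentiable, η > 0, ρ > 0, and x ∈ Ω is such that the open ball B_ρ(x) is contained in Ω, then ‖u(x)‖ ≤ C ( η + ∫_Ω (‖D^k u(y)‖ − η/ρ^k)_+ dy + ρ^{−k} ∫_Ω (‖u(y)‖ − η)_+ dy ). -/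
open MeasureTheory Filter Topology ENNReal

lemma altsum (n i : ℕ) (hi : i < n) (x : ℝ) :
    ∑ j ∈ Finset.range (n+1), ((-1:ℝ)^j * n.choose j) * (x + j)^i = 0 := by
  have h := congrFun (fwdDiff_iter_pow_eq_zero_of_lt (R := ℝ) hi) x
  rw [fwdDiff_iter_eq_sum_shift] at h
  have h2 : ((-1:ℝ)^n) * ∑ j ∈ Finset.range (n+1), ((-1:ℝ)^j * n.choose j) * (x + j)^i = 0 := by
    rw [Finset.mul_sum, ← Pi.zero_apply (M := fun _ => ℝ) x, ← h]
    refine Finset.sum_congr rfl fun j hj => ?_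
    have hj' : j ≤ n := by simpa [Nat.lt_succ_iff] using hj
    have : (-1:ℝ)^n = (-1)^(n-j) * (-1)^j := by rw [← pow_add]; congr 1; omega
    have e : (-1:ℝ)^j * (-1)^j = 1 := by rw [← mul_pow]; simp
    simp only [zsmul_eq_mul, nsmul_eq_mul, mul_one]
    push_cast
    rw [this]
    linear_combination ((-1:ℝ)^(n-j) * n.choose j * (x+j)^i) * e
  rcases mul_eq_zero.1 h2 with h3 | h3
  · simp at h3
  · exact h3

lemma oneD {F : Type*} [NormedAddCommGroup F] [NormedSpace ℝ F] [CompleteSpace F] (n : ℕ)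
    (U : Set ℝ) (hUo : IsOpen U) (hU : Set.Icc (0:ℝ) 1 ⊆ U) (f : ℝ → F)
    (hf : ContDiffOn ℝ (n+1 : ℕ) f U) :
    IntegrableOn (fun s : ℝ => s^n * ‖iteratedDerivWithin (n+1) f U s‖) (Set.Ioc 0 1) ∧
    ‖f 0‖ ≤ (∑ j ∈ Finset.range (n+1), ((n+1).choose (j+1) : ℝ) * ‖f ((j+1:ℕ)/(n+1:ℕ))‖) +
      2^(n+1) * (n+1:ℕ)^n * ∫ s in Set.Ioc (0:ℝ) 1, s^n * ‖iteratedDerivWithin (n+1) f U s‖ := by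
  set k : ℝ := ((n+1 : ℕ) : ℝ) with hk
  have hk1 : (1:ℝ) ≤ k := by rw [hk]; push_cast; linarith [(Nat.cast_nonneg n : (0:ℝ) ≤ n)]
  have hk0 : 0 < k := by linarith
  set I := ∫ s in Set.Ioc (0:ℝ) 1, s^n * ‖iteratedDerivWithin (n+1) f U s‖ with hI
  set D := iteratedDerivWithin (n+1) f U with hD
  have hDc : ContinuousOn D U := hf.continuousOn_iteratedDerivWithin le_rfl hUo.uniqueDiffOn
  set T : ℝ → ℝ → F := fun t y => taylorWithinEval f n U t y with hT
  have hder : ∀ y, ∀ t ∈ U, HasDerivAt (fun t => T t y) ((((n.factorial : ℕ) : ℝ)⁻¹ * (y - t)^n) • D t) t := by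
    intro y t ht
    have h := hasDerivWithinAt_taylorWithinEval (x := y) (y := t) (n := n) hUo.uniqueDiffOn
      (self_mem_nhdsWithin) ht le_rfl (hf.of_le (by exact_mod_cast Nat.le_succ n))
      (hf.differentiableOn_iteratedDerivWithin (by exact_mod_cast Nat.lt_succ_self n) hUo.uniqueDiffOn t ht)
    exact h.hasDerivAt (hUo.mem_nhds ht)
  have t0 : 1/k ∈ Set.Icc (0:ℝ) 1 := ⟨by positivity, by rw [div_le_one hk0]; exact hk1⟩
  have hint : IntegrableOn (fun s : ℝ => s^n * ‖D s‖) (Set.Ioc 0 1) := by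
    have : ContinuousOn (fun s : ℝ => s^n * ‖D s‖) (Set.Icc 0 1) :=
      (by fun_prop : Continuous fun s : ℝ => s^n).continuousOn.mul (hDc.mono hU).norm
    exact this.integrableOn_Icc.mono_set Set.Ioc_subset_Icc_self
  have key : ∀ y ∈ Set.Icc (0:ℝ) 1, (y = 0 ∨ 1/k ≤ y) → ‖f y - T (1/k) y‖ ≤ k^n * I := by
    intro y hy hyy
    have hsub : Set.uIcc (1/k) y ⊆ Set.Icc 0 1 := Set.uIcc_subset_Icc t0 hy
    have hftc : ∫ t in (1/k)..y, (((n.factorial : ℕ) : ℝ)⁻¹ * (y - t)^n) • D t = f y - T (1/k) y := by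
      rw [intervalIntegral.integral_eq_sub_of_hasDerivAt (f := fun t => T t y)]
      · simp [hT]
      · intro t ht; exact hder y t (hU (hsub ht))
      · apply ContinuousOn.intervalIntegrable
        exact (by fun_prop : Continuous fun t : ℝ => (((n.factorial : ℕ) : ℝ)⁻¹ * (y - t)^n)).continuousOn.smul
          (hDc.mono (hsub.trans hU))
    rw [← hftc]
    have hsub' : Set.uIoc (1/k) y ⊆ Set.Ioc 0 1 := by
      intro t ht
      rw [Set.uIoc, Set.mem_Ioc] at ht
      exact ⟨lt_of_le_of_lt (le_min t0.1 hy.1) ht.1, ht.2.trans (max_le t0.2 hy.2)⟩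
    refine (intervalIntegral.norm_integral_le_integral_norm_uIoc).trans ?_
    have hint2 : IntegrableOn (fun s : ℝ => k^n * (s^n * ‖D s‖)) (Set.Ioc 0 1) := hint.const_mul _
    calc ∫ t in Set.uIoc (1/k) y, ‖(((n.factorial : ℕ) : ℝ)⁻¹ * (y - t)^n) • D t‖
        ≤ ∫ t in Set.uIoc (1/k) y, k^n * (t^n * ‖D t‖) := by
          refine integral_mono_of_nonneg (Eventually.of_forall fun _ => norm_nonneg _) (hint2.mono_set hsub') ?_
          filter_upwards [ae_restrict_mem measurableSet_uIoc] with t ht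
          have ht' := hsub' ht
          rw [norm_smul, ← mul_assoc, ← mul_pow]
          gcongr
          rw [norm_mul, norm_pow, Real.norm_eq_abs, Real.norm_eq_abs]
          have h1 : |((n.factorial : ℕ) : ℝ)⁻¹| ≤ 1 := by
            rw [abs_of_nonneg (by positivity)]
            apply inv_le_one_of_one_le₀
            exact_mod_cast n.factorial_pos
          have h2 : |y - t| ≤ k * t := by
            rcases hyy with h | h
            · rw [h, zero_sub, abs_neg, abs_of_pos ht'.1]; nlinarith [ht'.1]
            · rw [Set.uIoc_of_le h] at ht
              have : 1 ≤ k * t := by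
                have := ht.1.le; rw [div_le_iff₀ hk0] at this; linarith
              rw [abs_of_nonneg (by linarith [ht.2])]
              linarith [ht'.1, hy.2]
          calc _ ≤ 1 * (k*t)^n := by gcongr
            _ = _ := one_mul _
      _ ≤ ∫ t in Set.Ioc (0:ℝ) 1, k^n * (t^n * ‖D t‖) := by
          refine setIntegral_mono_set hint2 ?_ (LE.le.eventuallyLE hsub')
          filter_upwards [ae_restrict_mem measurableSet_Ioc] with t ht
          have := ht.1
          simp only [Pi.zero_apply]; positivity
      _ = k^n * I := by rw [integral_const_mul]
  have key' : ∀ j ∈ Finset.range (n+1+1), ‖f (j/k) - T (1/k) (j/k)‖ ≤ k^n * I := by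
    intro j hj
    have hj' : (j:ℝ) ≤ k := by rw [hk]; exact_mod_cast Nat.lt_succ_iff.1 (Finset.mem_range.1 hj)
    refine key _ ⟨by positivity, by rw [div_le_one hk0]; exact hj'⟩ ?_
    rcases Nat.eq_zero_or_pos j with h | h
    · left; simp [h]
    · right; gcongr; exact_mod_cast h
  have hTsum : ∑ j ∈ Finset.range (n+1+1), ((-1:ℝ)^j * (n+1).choose j) • T (1/k) (j/k) = 0 := by
    simp only [hT, taylor_within_apply, Finset.smul_sum]
    rw [Finset.sum_comm]
    refine Finset.sum_eq_zero fun i hi => ?_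
    have h := altsum (n+1) i (Finset.mem_range.1 hi) (-1)
    simp only [smul_smul]
    rw [← Finset.sum_smul]
    convert zero_smul ℝ _
    rw [← mul_zero ((((i.factorial : ℕ) : ℝ)⁻¹ * (k⁻¹)^i)), ← h, Finset.mul_sum]
    refine Finset.sum_congr rfl fun j hj => ?_
    have : (j:ℝ)/k - 1/k = k⁻¹ * (-1 + j) := by field_simp; ring
    rw [this, mul_pow]; ring
  have hmain : ‖∑ j ∈ Finset.range (n+1+1), ((-1:ℝ)^j * (n+1).choose j) • f (j/k)‖ ≤ 2^(n+1) * k^n * I := by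
    have e : ∑ j ∈ Finset.range (n+1+1), ((-1:ℝ)^j * (n+1).choose j) • f (j/k)
       = ∑ j ∈ Finset.range (n+1+1), ((-1:ℝ)^j * (n+1).choose j) • (f (j/k) - T (1/k) (j/k)) := by
      simp only [smul_sub, Finset.sum_sub_distrib, hTsum, sub_zero]
    rw [e]
    calc _ ≤ ∑ j ∈ Finset.range (n+1+1), ((n+1).choose j : ℝ) * (k^n * I) := by
          refine norm_sum_le_of_le _ fun j hj => ?_
          rw [norm_smul, norm_mul, norm_pow, norm_neg, norm_one, one_pow, one_mul, Real.norm_natCast]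
          exact mul_le_mul_of_nonneg_left (key' j hj) (by positivity)
      _ = _ := by
          rw [← Finset.sum_mul, ← Nat.cast_sum, Nat.sum_range_choose]; push_cast; ring
  rw [Finset.sum_range_succ'] at hmain
  simp only [pow_zero, Nat.choose_zero_right, Nat.cast_one, one_mul, one_smul, Nat.cast_zero, zero_div] at hmain
  have h3 : ‖∑ j ∈ Finset.range (n+1), ((-1:ℝ)^(j+1) * (n+1).choose (j+1)) • f ((j+1:ℕ)/k)‖ ≤
     ∑ j ∈ Finset.range (n+1), ((n+1).choose (j+1) : ℝ) * ‖f ((j+1:ℕ)/k)‖ := by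
    refine norm_sum_le_of_le _ fun j hj => ?_
    rw [norm_smul, norm_mul, norm_pow, norm_neg, norm_one, one_pow, one_mul, Real.norm_natCast]
  have h4 := norm_sub_le (∑ j ∈ Finset.range (n+1), ((-1:ℝ)^(j+1) * (n+1).choose (j+1)) • f ((j+1:ℕ)/k) + f 0)
    (∑ j ∈ Finset.range (n+1), ((-1:ℝ)^(j+1) * (n+1).choose (j+1)) • f ((j+1:ℕ)/k))
  rw [add_sub_cancel_left] at h4
  refine ⟨hint, ?_⟩
  linarith

lemma lintegral_smul_var (n : ℕ) (s : ℝ) (hs : 0 < s) (F : EuclideanSpace ℝ (Fin (n+1)) → ℝ≥0∞)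
    (hF : Measurable F) :
    ∫⁻ h, F (s • h) = ENNReal.ofReal ((s^(n+1))⁻¹) * ∫⁻ z, F z := by
  have h := Measure.map_addHaar_smul (volume : Measure (EuclideanSpace ℝ (Fin (n+1)))) hs.ne'
  rw [finrank_euclideanSpace_fin, abs_of_nonneg (by positivity)] at h
  rw [← lintegral_map hF (measurable_const_smul s), h, lintegral_smul_measure, smul_eq_mul]

lemma radial (n : ℕ) (a : ℝ) (ha : 0 < a) :
    ∫⁻ s in Set.Ioi a, ENNReal.ofReal ((s^(n+2))⁻¹) ≤ ENNReal.ofReal ((a^(n+1))⁻¹) := by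
  have hlt : (-((n:ℝ)+2)) < -1 := by linarith [(Nat.cast_nonneg n : (0:ℝ) ≤ n)]
  have hi := integrableOn_Ioi_rpow_of_lt hlt ha
  have hv := integral_Ioi_rpow_of_lt hlt ha
  have e : ∫⁻ s in Set.Ioi a, ENNReal.ofReal ((s^(n+2))⁻¹) =
      ∫⁻ s in Set.Ioi a, ENNReal.ofReal (s ^ (-((n:ℝ)+2))) := by
    refine setLIntegral_congr_fun measurableSet_Ioi fun s hs => ?_
    have hs0 : 0 < s := ha.trans hs
    rw [Real.rpow_neg hs0.le]
    congr 2
    exact_mod_cast (Real.rpow_natCast s (n+2)).symm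
  rw [e, ← ofReal_integral_eq_lintegral_ofReal hi, hv]
  · apply ENNReal.ofReal_le_ofReal
    have e2 : a ^ (-((n:ℝ)+2) + 1) = (a^(n+1))⁻¹ := by
      rw [show (-((n:ℝ)+2) + 1) = -((n+1 : ℕ) : ℝ) by push_cast; ring, Real.rpow_neg ha.le, Real.rpow_natCast]
    rw [e2, show (-((n:ℝ)+2) + 1) = -((n:ℝ)+1) by ring, neg_div_neg_eq]
    apply div_le_self (by positivity)
    linarith [(Nat.cast_nonneg n : (0:ℝ) ≤ n)]
  · filter_upwards [ae_restrict_mem measurableSet_Ioi] with s hs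
    exact Real.rpow_nonneg (ha.trans hs).le _

lemma polar (n : ℕ) (ρ : ℝ) (hρ : 0 < ρ) (G : EuclideanSpace ℝ (Fin (n+1)) → ℝ≥0∞)
    (hG : Measurable G) :
    ∫⁻ h in Metric.ball (0 : EuclideanSpace ℝ (Fin (n+1))) ρ, ∫⁻ s in Set.Ioc (0:ℝ) 1,
      ENNReal.ofReal (s^n * ‖h‖^(n+1)) * G (s • h) ≤ ENNReal.ofReal (ρ^(n+1)) * ∫⁻ z, G z := by
  rw [lintegral_lintegral_swap]
  swap
  · apply Measurable.aemeasurable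
    have : Measurable fun p : EuclideanSpace ℝ (Fin (n+1)) × ℝ => p.2 • p.1 := by fun_prop
    have h2 := hG.comp this
    simp only [Function.uncurry_def]
    refine Measurable.mul (by fun_prop) h2
  set H : ℝ → EuclideanSpace ℝ (Fin (n+1)) → ℝ≥0∞ := fun s z =>
    {p : ℝ × EuclideanSpace ℝ (Fin (n+1)) | ‖p.2‖ < p.1 * ρ}.indicator
      (fun p => ENNReal.ofReal ((p.1^(n+2))⁻¹) * (ENNReal.ofReal (‖p.2‖^(n+1)) * G p.2)) (s, z) with hH
  have hHm : Measurable (Function.uncurry H) := by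
    have hms : MeasurableSet {p : ℝ × EuclideanSpace ℝ (Fin (n+1)) | ‖p.2‖ < p.1 * ρ} :=
      measurableSet_lt (by fun_prop) (by fun_prop)
    refine Measurable.indicator ?_ hms
    have h2 : Measurable fun p : ℝ × EuclideanSpace ℝ (Fin (n+1)) => G p.2 := hG.comp measurable_snd
    exact Measurable.mul (by fun_prop) (Measurable.mul (by fun_prop) h2)
  have step1 : ∀ s ∈ Set.Ioc (0:ℝ) 1, ∫⁻ h in Metric.ball (0 : EuclideanSpace ℝ (Fin (n+1))) ρ,
      ENNReal.ofReal (s^n * ‖h‖^(n+1)) * G (s • h) = ∫⁻ z, H s z := by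
    intro s hs
    have hs0 := hs.1
    set F : EuclideanSpace ℝ (Fin (n+1)) → ℝ≥0∞ := fun z =>
      ENNReal.ofReal (s^(n+1)) * H s z with hF
    have hHs : Measurable (H s) := hHm.of_uncurry_left
    have hFm : Measurable F := measurable_const.mul hHs
    have := lintegral_smul_var n s hs0 F hFm
    have e : ∫⁻ h in Metric.ball (0 : EuclideanSpace ℝ (Fin (n+1))) ρ,
      ENNReal.ofReal (s^n * ‖h‖^(n+1)) * G (s • h) = ∫⁻ h, F (s • h) := by
      rw [← lintegral_indicator measurableSet_ball]
      congr 1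
      ext h
      by_cases hh : ‖h‖ < ρ
      · have hb : h ∈ Metric.ball (0 : EuclideanSpace ℝ (Fin (n+1))) ρ := by simpa using hh
        have hc : (s, s • h) ∈ {p : ℝ × EuclideanSpace ℝ (Fin (n+1)) | ‖p.2‖ < p.1 * ρ} := by
          change ‖s • h‖ < s * ρ
          rw [norm_smul, Real.norm_eq_abs, abs_of_pos hs0]
          exact mul_lt_mul_of_pos_left hh hs0
        simp only [hF, hH]
        rw [Set.indicator_of_mem hb, Set.indicator_of_mem hc]
        simp only [norm_smul, Real.norm_eq_abs, abs_of_pos hs0]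
        rw [← mul_assoc, ← mul_assoc, ← ENNReal.ofReal_mul (by positivity), ← ENNReal.ofReal_mul (by positivity)]
        congr 2
        rw [mul_pow]
        field_simp
        ring
      · have hb : h ∉ Metric.ball (0 : EuclideanSpace ℝ (Fin (n+1))) ρ := by simpa using hh
        have hc : (s, s • h) ∉ {p : ℝ × EuclideanSpace ℝ (Fin (n+1)) | ‖p.2‖ < p.1 * ρ} := by
          change ¬ ‖s • h‖ < s * ρ
          rw [norm_smul, Real.norm_eq_abs, abs_of_pos hs0]
          exact fun hlt => hh (lt_of_mul_lt_mul_left hlt hs0.le)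
        simp only [hF, hH]
        rw [Set.indicator_of_notMem hb, Set.indicator_of_notMem hc, mul_zero]
    rw [e, this, hF, lintegral_const_mul _ hHs, ← mul_assoc, ← ENNReal.ofReal_mul (by positivity),
      inv_mul_cancel₀ (by positivity), ENNReal.ofReal_one, one_mul]
  rw [setLIntegral_congr_fun measurableSet_Ioc step1, lintegral_lintegral_swap hHm.aemeasurable,
    ← lintegral_const_mul _ hG]
  refine lintegral_mono fun z => ?_
  rcases eq_or_ne z 0 with rfl | hz
  · have : ∀ s, H s 0 = 0 := by
      intro s
      simp only [hH, Set.indicator_apply]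
      split_ifs <;> simp
    simp [this]
  have hz0 : 0 < ‖z‖ := norm_pos_iff.2 hz
  calc ∫⁻ s in Set.Ioc (0:ℝ) 1, H s z ≤ ∫⁻ s, H s z := lintegral_mono' Measure.restrict_le_self le_rfl
    _ = ∫⁻ s in Set.Ioi (‖z‖/ρ), ENNReal.ofReal ((s^(n+2))⁻¹) * (ENNReal.ofReal (‖z‖^(n+1)) * G z) := by
        rw [← lintegral_indicator measurableSet_Ioi]
        congr 1
        ext s
        simp only [hH, Set.indicator_apply, Set.mem_ofPred_eq, Set.mem_Ioi, div_lt_iff₀ hρ]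
    _ = (∫⁻ s in Set.Ioi (‖z‖/ρ), ENNReal.ofReal ((s^(n+2))⁻¹)) * (ENNReal.ofReal (‖z‖^(n+1)) * G z) := by
        rw [lintegral_mul_const _ (by fun_prop)]
    _ ≤ ENNReal.ofReal (((‖z‖/ρ)^(n+1))⁻¹) * (ENNReal.ofReal (‖z‖^(n+1)) * G z) := by
        gcongr
        exact radial n _ (by positivity)
    _ = _ := by
        rw [← mul_assoc, ← ENNReal.ofReal_mul (by positivity)]
        congr 2
        rw [div_pow]
        field_simp

lemma line_deriv {E F : Type*} [NormedAddCommGroup E] [NormedSpace ℝ E] [NormedAddCommGroup F]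
    [NormedSpace ℝ F] (k : ℕ) (Ω : Set E) (hΩ : IsOpen Ω) (u : E → F) (hu : ContDiffOn ℝ k u Ω)
    (x h : E) :
    IsOpen {s : ℝ | x + s • h ∈ Ω} ∧ ContDiffOn ℝ k (fun s : ℝ => u (x + s • h)) {s : ℝ | x + s • h ∈ Ω} ∧
    ∀ s, x + s • h ∈ Ω → ‖iteratedDerivWithin k (fun s : ℝ => u (x + s • h)) {s : ℝ | x + s • h ∈ Ω} s‖
      ≤ ‖h‖^k * ‖iteratedFDerivWithin ℝ k u Ω (x + s • h)‖ := by
  have ho : IsOpen {s : ℝ | x + s • h ∈ Ω} := hΩ.preimage (by fun_prop : Continuous fun s : ℝ => x + s • h)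
  have hcd : ContDiff ℝ k (fun s : ℝ => x + s • h) := by fun_prop
  refine ⟨ho, hu.comp hcd.contDiffOn fun s hs => hs, fun s hs => ?_⟩
  rw [iteratedDerivWithin_eq_iteratedFDerivWithin]
  set W : Set E := {z | x + z ∈ Ω} with hW
  have hWo : IsOpen W := hΩ.preimage (by fun_prop : Continuous fun z : E => x + z)
  have hWc : ContDiffOn ℝ k (fun z => u (x + z)) W :=
    hu.comp (by fun_prop : ContDiff ℝ k fun z : E => x + z).contDiffOn fun s hs => hs
  have h1 := (ContinuousLinearMap.toSpanSingleton ℝ h).iteratedFDerivWithin_comp_right hWc hWo.uniqueDiffOn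
    (IsOpen.uniqueDiffOn (by
      exact hWo.preimage (ContinuousLinearMap.toSpanSingleton ℝ h).continuous)) (x := s) (by simpa [hW] using hs) (i := k) le_rfl
  have h2 : iteratedFDerivWithin ℝ k (fun z => u (x + z)) W (s • h) = iteratedFDerivWithin ℝ k u Ω (x + s • h) := by
    rw [iteratedFDerivWithin_comp_add_left]
    congr 1
    ext z
    simp [hW, Set.mem_vadd_set_iff_neg_vadd_mem]
  have h3 : iteratedFDerivWithin ℝ k (fun s : ℝ => u (x + s • h)) {s : ℝ | x + s • h ∈ Ω} s =
      (iteratedFDerivWithin ℝ k u Ω (x + s • h)).compContinuousLinearMap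
        (fun _ => ContinuousLinearMap.toSpanSingleton ℝ h) := by
    rw [← h2]
    exact h1
  rw [h3, ContinuousMultilinearMap.compContinuousLinearMap_apply]
  refine (ContinuousMultilinearMap.le_opNorm _ _).trans ?_
  simp [mul_comm]

lemma meas_ind {E : Type*} [TopologicalSpace E] [MeasurableSpace E] [BorelSpace E] (s : Set E)
    (hs : IsOpen s) (f : E → ℝ) (hf : ContinuousOn f s) :
    Measurable (s.indicator fun z => ENNReal.ofReal (f z)) := by
  classical
  rw [← Set.piecewise_eq_indicator]
  exact ContinuousOn.measurable_piecewise (ENNReal.continuous_ofReal.comp_continuousOn hf)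
    continuousOn_const hs.measurableSet

lemma pointwise (n ν : ℕ) (Ω : Set (EuclideanSpace ℝ (Fin (n+1)))) (hΩ : IsOpen Ω)
    (u : EuclideanSpace ℝ (Fin (n+1)) → EuclideanSpace ℝ (Fin ν))
    (hu : ContDiffOn ℝ (n+1 : ℕ) u Ω) (ρ : ℝ) (x : EuclideanSpace ℝ (Fin (n+1)))
    (hb : Metric.ball x ρ ⊆ Ω) (V G : EuclideanSpace ℝ (Fin (n+1)) → ℝ≥0∞)
    (hV : V = (Metric.ball x ρ).indicator fun z => ENNReal.ofReal ‖u z‖)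
    (hG : G = (Metric.ball x ρ).indicator fun z => ENNReal.ofReal ‖iteratedFDerivWithin ℝ (n+1) u Ω z‖)
    (h : EuclideanSpace ℝ (Fin (n+1))) (hh : ‖h‖ < ρ) :
    ENNReal.ofReal ‖u x‖ ≤ (∑ j ∈ Finset.range (n+1), ENNReal.ofReal ((n+1).choose (j+1)) *
        V (x + (((j+1:ℕ):ℝ)/(n+1:ℕ)) • h)) +
      ENNReal.ofReal (2^(n+1) * (n+1:ℕ)^n) * ∫⁻ s in Set.Ioc (0:ℝ) 1,
        ENNReal.ofReal (s^n * ‖h‖^(n+1)) * G (x + s • h) := by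
  obtain ⟨ho, hc, hd⟩ := line_deriv (n+1) Ω hΩ u hu x h
  have hin : ∀ s ∈ Set.Icc (0:ℝ) 1, x + s • h ∈ Metric.ball x ρ := by
    intro s hs
    rw [mem_ball_iff_norm, add_sub_cancel_left, norm_smul, Real.norm_eq_abs, abs_of_nonneg hs.1]
    exact lt_of_le_of_lt (mul_le_of_le_one_left (norm_nonneg _) hs.2) hh
  obtain ⟨hint, hle⟩ := oneD n _ ho (fun s hs => hb (hin s hs)) _ hc
  simp only [zero_smul, add_zero] at hle
  refine (ENNReal.ofReal_le_ofReal hle).trans ?_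
  refine ENNReal.ofReal_add_le.trans ?_
  refine add_le_add ?_ ?_
  · rw [ENNReal.ofReal_sum_of_nonneg (fun _ _ => by positivity)]
    refine Finset.sum_le_sum fun j hj => ?_
    rw [ENNReal.ofReal_mul (by positivity), hV, Set.indicator_of_mem]
    apply hin
    refine ⟨by positivity, ?_⟩
    rw [div_le_one (by positivity)]
    exact_mod_cast Finset.mem_range.1 hj
  · rw [ENNReal.ofReal_mul (by positivity)]
    gcongr
    rw [ofReal_integral_eq_lintegral_ofReal hint]
    · refine setLIntegral_mono' measurableSet_Ioc fun s hs => ?_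
      have hs' : s ∈ Set.Icc (0:ℝ) 1 := ⟨hs.1.le, hs.2⟩
      have hs0 := hs.1
      rw [hG, Set.indicator_of_mem (hin s hs'), ← ENNReal.ofReal_mul (by positivity), mul_assoc]
      apply ENNReal.ofReal_le_ofReal
      gcongr
      exact hd s (hb (hin s hs'))
    · filter_upwards [ae_restrict_mem measurableSet_Ioc] with s hs
      have := hs.1
      simp only [Pi.zero_apply]; positivity

lemma trunc {E : Type*} [MeasurableSpace E] (μ : Measure E) (B Ω : Set E) (hB : B ⊆ Ω)
    (f : E → ℝ) (η : ℝ) (hη : 0 ≤ η) :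
    ∫⁻ y in B, ENNReal.ofReal (f y) ∂μ ≤ (∫⁻ y in Ω, ENNReal.ofReal (max (f y - η) 0) ∂μ) +
      ENNReal.ofReal η * μ B := by
  calc _ ≤ ∫⁻ y in B, (ENNReal.ofReal (max (f y - η) 0) + ENNReal.ofReal η) ∂μ := by
        refine lintegral_mono fun y => ?_
        rw [← ENNReal.ofReal_add (le_max_right _ _) hη]
        apply ENNReal.ofReal_le_ofReal
        linarith [le_max_left (f y - η) 0]
    _ = (∫⁻ y in B, ENNReal.ofReal (max (f y - η) 0) ∂μ) + ENNReal.ofReal η * μ B := by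
        rw [lintegral_add_right _ measurable_const, setLIntegral_const]
    _ ≤ _ := by
        gcongr

lemma averaged (n ν : ℕ) (Ω : Set (EuclideanSpace ℝ (Fin (n+1)))) (hΩ : IsOpen Ω)
    (u : EuclideanSpace ℝ (Fin (n+1)) → EuclideanSpace ℝ (Fin ν))
    (hu : ContDiffOn ℝ (n+1 : ℕ) u Ω) (ρ : ℝ) (hρ : 0 < ρ) (x : EuclideanSpace ℝ (Fin (n+1)))
    (hb : Metric.ball x ρ ⊆ Ω) :
    ENNReal.ofReal ‖u x‖ * volume (Metric.ball x ρ) ≤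
      ENNReal.ofReal (2^(n+1) * (n+1:ℕ)^(n+1)) *
      ((∫⁻ y in Metric.ball x ρ, ENNReal.ofReal ‖u y‖) +
        ENNReal.ofReal (ρ^(n+1)) *
          ∫⁻ y in Metric.ball x ρ, ENNReal.ofReal ‖iteratedFDerivWithin ℝ (n+1) u Ω y‖) := by
  obtain ⟨V, hV⟩ : ∃ V, V = (Metric.ball x ρ).indicator fun z => ENNReal.ofReal ‖u z‖ := ⟨_, rfl⟩
  obtain ⟨G, hG⟩ : ∃ G, G = (Metric.ball x ρ).indicator fun z =>
    ENNReal.ofReal ‖iteratedFDerivWithin ℝ (n+1) u Ω z‖ := ⟨_, rfl⟩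
  have hVm : Measurable V := by
    rw [hV]; exact meas_ind _ Metric.isOpen_ball _ (hu.continuousOn.mono hb).norm
  have hGm : Measurable G := by
    rw [hG]
    exact meas_ind _ Metric.isOpen_ball _
      ((hu.continuousOn_iteratedFDerivWithin le_rfl hΩ.uniqueDiffOn).mono hb).norm
  have hpw := pointwise n ν Ω hΩ u hu ρ x hb V G hV hG
  rw [← lintegral_indicator measurableSet_ball, ← lintegral_indicator measurableSet_ball, ← hV, ← hG]
  have hVx : Measurable fun z => V (x + z) := hVm.comp (measurable_const_add x)
  have hGx : Measurable fun z => G (x + z) := hGm.comp (measurable_const_add x)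
  have hIV : ∫⁻ z, V (x + z) = ∫⁻ z, V z := lintegral_add_left_eq_self V x
  have hIG : ∫⁻ z, G (x + z) = ∫⁻ z, G z := lintegral_add_left_eq_self G x
  have hvj : ∀ t : ℝ, Measurable fun h : EuclideanSpace ℝ (Fin (n+1)) => V (x + t • h) := fun t =>
    hVx.comp (measurable_const_smul t)
  have hvj_le : ∀ j : ℕ, ∫⁻ h in Metric.ball (0 : EuclideanSpace ℝ (Fin (n+1))) ρ,
      V (x + (((j+1:ℕ):ℝ)/(n+1:ℕ)) • h) ≤ ENNReal.ofReal ((n+1:ℕ)^(n+1)) * ∫⁻ z, V z := by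
    intro j
    refine (lintegral_mono' Measure.restrict_le_self le_rfl).trans ?_
    have := lintegral_smul_var n (((j+1:ℕ):ℝ)/(n+1:ℕ)) (by positivity) (fun z => V (x + z)) hVx
    rw [this, hIV]
    gcongr
    rw [← inv_pow, inv_div]
    gcongr
    apply div_le_self (by positivity)
    push_cast; linarith [(Nat.cast_nonneg j : (0:ℝ) ≤ j)]
  have hchoose : ∑ j ∈ Finset.range (n+1), ((n+1).choose (j+1) : ℝ) ≤ 2^(n+1) := by
    have h := Nat.sum_range_choose (n+1)
    rw [Finset.sum_range_succ'] at h
    have h' : ∑ j ∈ Finset.range (n+1), (n+1).choose (j+1) ≤ 2^(n+1) := by omega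
    exact_mod_cast h'
  calc ENNReal.ofReal ‖u x‖ * volume (Metric.ball x ρ)
      = ∫⁻ h in Metric.ball (0 : EuclideanSpace ℝ (Fin (n+1))) ρ, ENNReal.ofReal ‖u x‖ := by
        rw [setLIntegral_const, Measure.addHaar_ball_center]
    _ ≤ ∫⁻ h in Metric.ball (0 : EuclideanSpace ℝ (Fin (n+1))) ρ,
        ((∑ j ∈ Finset.range (n+1), ENNReal.ofReal ((n+1).choose (j+1)) *
        V (x + (((j+1:ℕ):ℝ)/(n+1:ℕ)) • h)) +
      ENNReal.ofReal (2^(n+1) * (n+1:ℕ)^n) * ∫⁻ s in Set.Ioc (0:ℝ) 1,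
        ENNReal.ofReal (s^n * ‖h‖^(n+1)) * G (x + s • h)) :=
        setLIntegral_mono' measurableSet_ball fun h hh => hpw h (by simpa using hh)
    _ = (∑ j ∈ Finset.range (n+1), ENNReal.ofReal ((n+1).choose (j+1)) *
        ∫⁻ h in Metric.ball (0 : EuclideanSpace ℝ (Fin (n+1))) ρ, V (x + (((j+1:ℕ):ℝ)/(n+1:ℕ)) • h)) +
      ENNReal.ofReal (2^(n+1) * (n+1:ℕ)^n) *
        ∫⁻ h in Metric.ball (0 : EuclideanSpace ℝ (Fin (n+1))) ρ, ∫⁻ s in Set.Ioc (0:ℝ) 1,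
        ENNReal.ofReal (s^n * ‖h‖^(n+1)) * G (x + s • h) := by
        rw [lintegral_add_left, lintegral_finsetSum, lintegral_const_mul' _ _ ENNReal.ofReal_ne_top]
        · congr 1
          refine Finset.sum_congr rfl fun j hj => ?_
          rw [lintegral_const_mul _ (hvj _)]
        · exact fun j hj => (hvj _).const_mul _
        · exact Finset.measurable_sum _ fun j hj => (hvj _).const_mul _
    _ ≤ (∑ j ∈ Finset.range (n+1), ENNReal.ofReal ((n+1).choose (j+1)) *
        (ENNReal.ofReal ((n+1:ℕ)^(n+1)) * ∫⁻ z, V z)) +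
      ENNReal.ofReal (2^(n+1) * (n+1:ℕ)^n) * (ENNReal.ofReal (ρ^(n+1)) * ∫⁻ z, G z) := by
        refine add_le_add (Finset.sum_le_sum fun j hj => ?_) ?_
        · gcongr
          exact hvj_le j
        · gcongr
          rw [← hIG]
          exact polar n ρ hρ (fun z => G (x + z)) hGx
    _ ≤ _ := by
        rw [mul_add, ← Finset.sum_mul, ← ENNReal.ofReal_sum_of_nonneg (fun _ _ => by positivity), ← mul_assoc,
          ← ENNReal.ofReal_mul (by positivity)]
        have h1 : (1:ℝ) ≤ (n+1:ℕ) := by push_cast; linarith [(Nat.cast_nonneg n : (0:ℝ) ≤ n)]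
        gcongr
        omega

theorem truncated_Wk1_embedding (k : ℕ) (hk : 1 ≤ k) :
    ∃ C : ℝ, 0 < C ∧ ∀ (ν : ℕ), 1 ≤ ν →
      ∀ (Ω : Set (EuclideanSpace ℝ (Fin k))), IsOpen Ω →
      ∀ (u : EuclideanSpace ℝ (Fin k) → EuclideanSpace ℝ (Fin ν)),
        ContDiffOn ℝ k u Ω →
      ∀ (η ρ : ℝ), 0 < η → 0 < ρ →
      ∀ x ∈ Ω, Metric.ball x ρ ⊆ Ω →
        ENNReal.ofReal ‖u x‖ ≤ ENNReal.ofReal C *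
          (ENNReal.ofReal η
            + (∫⁻ y in Ω,
                ENNReal.ofReal (max (‖iteratedFDerivWithin ℝ k u Ω y‖ - η / ρ ^ k) 0))
            + ENNReal.ofReal ((ρ ^ k)⁻¹) *
                ∫⁻ y in Ω, ENNReal.ofReal (max (‖u y‖ - η) 0)) := by
  obtain ⟨n, rfl⟩ : ∃ n, k = n + 1 := ⟨k - 1, by omega⟩
  set w : ℝ := (volume (Metric.ball (0 : EuclideanSpace ℝ (Fin (n+1))) 1)).toReal with hw
  have hw0 : 0 < w := ENNReal.toReal_pos (Metric.measure_ball_pos _ _ one_pos).ne' measure_ball_lt_top.ne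
  have hwe : volume (Metric.ball (0 : EuclideanSpace ℝ (Fin (n+1))) 1) = ENNReal.ofReal w :=
    (ENNReal.ofReal_toReal measure_ball_lt_top.ne).symm
  set A : ℝ := 2^(n+1) * ((n+1:ℕ):ℝ)^(n+1) with hA
  have hA0 : 0 < A := by positivity
  refine ⟨A * w⁻¹ * (1 + 2 * w), by positivity, ?_⟩
  intro ν _ Ω hΩ u hu η ρ hη hρ x _ hb
  have hav := averaged n ν Ω hΩ u hu ρ hρ x hb
  have hT1 := trunc volume (Metric.ball x ρ) Ω hb (fun y => ‖u y‖) η hη.le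
  have hT2 := trunc volume (Metric.ball x ρ) Ω hb (fun y => ‖iteratedFDerivWithin ℝ (n+1) u Ω y‖)
    (η / ρ^(n+1)) (by positivity)
  have hvol : volume (Metric.ball x ρ) = ENNReal.ofReal (ρ^(n+1) * w) := by
    rw [Measure.addHaar_ball_of_pos _ _ hρ, finrank_euclideanSpace_fin, hwe, ← ENNReal.ofReal_mul (by positivity)]
  rw [hvol, ← ENNReal.ofReal_mul (by positivity)] at hT1 hT2
  rw [hvol, ← hA] at hav
  set P := ∫⁻ y in Ω, ENNReal.ofReal (max (‖iteratedFDerivWithin ℝ (n+1) u Ω y‖ - η / ρ ^ (n+1)) 0)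
  set Q := ∫⁻ y in Ω, ENNReal.ofReal (max (‖u y‖ - η) 0)
  have hR : 0 < ρ^(n+1) := by positivity
  set R := ρ^(n+1)
  calc ENNReal.ofReal ‖u x‖ = ENNReal.ofReal ((R * w)⁻¹) * (ENNReal.ofReal ‖u x‖ * ENNReal.ofReal (R * w)) := by
        rw [mul_comm, mul_assoc, ← ENNReal.ofReal_mul (by positivity), mul_inv_cancel₀ (by positivity),
          ENNReal.ofReal_one, mul_one]
    _ ≤ ENNReal.ofReal ((R * w)⁻¹) * (ENNReal.ofReal A * ((Q + ENNReal.ofReal (η * (R * w))) +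
          ENNReal.ofReal R * (P + ENNReal.ofReal (η / R * (R * w))))) := by
        refine mul_le_mul_right (hav.trans ?_) _
        gcongr
    _ = ENNReal.ofReal (A * w⁻¹ * (2 * w)) * ENNReal.ofReal η + ENNReal.ofReal (A * w⁻¹) * P +
          ENNReal.ofReal (A * w⁻¹) * (ENNReal.ofReal R⁻¹ * Q) := by
        have e1 : ENNReal.ofReal ((R * w)⁻¹) * ENNReal.ofReal A = ENNReal.ofReal (A * w⁻¹) * ENNReal.ofReal R⁻¹ := by
          rw [← ENNReal.ofReal_mul (by positivity), ← ENNReal.ofReal_mul (by positivity)]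
          congr 1; field_simp
        have e2 : ENNReal.ofReal R⁻¹ * ENNReal.ofReal R = 1 := by
          rw [← ENNReal.ofReal_mul (by positivity), inv_mul_cancel₀ hR.ne', ENNReal.ofReal_one]
        have e3 : ENNReal.ofReal (A * w⁻¹ * (2 * w)) * ENNReal.ofReal η =
          ENNReal.ofReal (A * w⁻¹) * (ENNReal.ofReal R⁻¹ * (ENNReal.ofReal (η * (R * w)) + ENNReal.ofReal R * ENNReal.ofReal (η / R * (R * w)))) := by
          rw [← ENNReal.ofReal_mul (by positivity), ← ENNReal.ofReal_mul (by positivity), ← ENNReal.ofReal_add (by positivity) (by positivity), ← ENNReal.ofReal_mul (by positivity), ← ENNReal.ofReal_mul (by positivity)]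
          congr 1; field_simp; ring
        rw [← mul_assoc, e1, e3]
        have e4 : ENNReal.ofReal (A * w⁻¹) * P = ENNReal.ofReal (A * w⁻¹) * (ENNReal.ofReal R⁻¹ * ENNReal.ofReal R) * P := by
          rw [e2, mul_one]
        rw [e4]
        ring
    _ ≤ ENNReal.ofReal (A * w⁻¹ * (1 + 2 * w)) * ENNReal.ofReal η + ENNReal.ofReal (A * w⁻¹ * (1 + 2 * w)) * P +
          ENNReal.ofReal (A * w⁻¹ * (1 + 2 * w)) * (ENNReal.ofReal R⁻¹ * Q) := by
        have i1 : A * w⁻¹ * (2 * w) ≤ A * w⁻¹ * (1 + 2 * w) := by gcongr; linarith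
        have i2 : A * w⁻¹ ≤ A * w⁻¹ * (1 + 2 * w) := le_mul_of_one_le_right (by positivity) (by linarith)
        gcongr
    _ = _ := by ring
end

section
/- For every integer m ≥ 1, every s ∈ (0,1) and every p ∈ [1,∞) there exists a constant C > 0 such that for every integer ν ≥ 1, every open set Ω ⊆ ℝ^m, all measurable maps u₀, u₁ : Ω → ℝ^ν and every ρ > 0, one has ∬_{Ω×Ω} ‖(u₀−u₁)(x) − (u₀−u₁)(y)‖^p / ‖x−y‖^{m+sp} dx dy ≤ C ( ∬_{{(x,y) ∈ Ω×Ω : ‖x−y‖ ≤ ρ}} (‖u₀(x)−u₀(y)‖^p + ‖u₁(x)−u₁(y)‖^p) / ‖x−y‖^{m+sp} dx dy + ρ^{−sp} ∫_Ω ‖u₀−u₁‖^p ). -/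
open MeasureTheory Filter Topology ENNReal

lemma gag_norm_sub_rpow {E : Type*} [NormedAddCommGroup E] (a b : E) {p : ℝ} (hp : 1 ≤ p) :
    ‖a - b‖ ^ p ≤ 2 ^ p * (‖a‖ ^ p + ‖b‖ ^ p) := by
  have hp0 : 0 ≤ p := by linarith
  have h1 : ‖a - b‖ ≤ 2 * max ‖a‖ ‖b‖ := by
    have := norm_sub_le a b
    have := le_max_left ‖a‖ ‖b‖
    have := le_max_right ‖a‖ ‖b‖
    linarith
  have h2 : (max ‖a‖ ‖b‖) ^ p ≤ ‖a‖ ^ p + ‖b‖ ^ p := by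
    have ha : 0 ≤ ‖a‖ ^ p := by positivity
    have hb : 0 ≤ ‖b‖ ^ p := by positivity
    rcases max_choice ‖a‖ ‖b‖ with h | h <;> rw [h] <;> linarith
  calc ‖a - b‖ ^ p ≤ (2 * max ‖a‖ ‖b‖) ^ p := Real.rpow_le_rpow (norm_nonneg _) h1 hp0
    _ = 2 ^ p * (max ‖a‖ ‖b‖) ^ p := Real.mul_rpow (by norm_num) (by positivity)
    _ ≤ _ := by gcongr

/-- truncated kernel -/
noncomputable def gagK (m : ℕ) (r ρ : ℝ) : EuclideanSpace ℝ (Fin m) → ℝ≥0∞ :=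
  Set.indicator {y | ρ < ‖y‖} (fun y => ENNReal.ofReal (1 / ‖y‖ ^ r))

lemma gagK_meas (m : ℕ) (r ρ : ℝ) : Measurable (gagK m r ρ) := by
  unfold gagK
  apply Measurable.indicator
  · fun_prop
  · exact measurableSet_lt measurable_const measurable_norm

lemma gagK_fin (m : ℕ) (r : ℝ) (hr : (m : ℝ) < r) : ∫⁻ y, gagK m r 1 y < ∞ := by
  have hr0 : 0 ≤ r := le_trans (Nat.cast_nonneg m) hr.le
  have h := finite_integral_one_add_norm (E := EuclideanSpace ℝ (Fin m)) (μ := volume) (r := r)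
    (by simpa using hr)
  have hle : ∀ y, gagK m r 1 y ≤ ENNReal.ofReal (2 ^ r) * ENNReal.ofReal ((1 + ‖y‖) ^ (-r)) := by
    intro y
    unfold gagK
    apply Set.indicator_le' (s := {y | 1 < ‖y‖})
      (g := fun y => ENNReal.ofReal (2 ^ r) * ENNReal.ofReal ((1 + ‖y‖) ^ (-r)))
    · intro y (hy : 1 < ‖y‖)
      rw [← ENNReal.ofReal_mul (by positivity)]
      apply ENNReal.ofReal_le_ofReal
      have h0 : 0 < ‖y‖ := by linarith
      rw [Real.rpow_neg (by positivity), ← div_eq_mul_inv, div_le_div_iff₀ (by positivity) (by positivity), one_mul, ← Real.mul_rpow (by norm_num) h0.le]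
      apply Real.rpow_le_rpow <;> linarith
    · intro y _
      exact zero_le
  calc _ ≤ ∫⁻ y, ENNReal.ofReal (2 ^ r) * ENNReal.ofReal ((1 + ‖y‖) ^ (-r)) := lintegral_mono hle
    _ = ENNReal.ofReal (2 ^ r) * ∫⁻ y, ENNReal.ofReal ((1 + ‖y‖) ^ (-r)) :=
      lintegral_const_mul' _ _ ENNReal.ofReal_ne_top
    _ < ∞ := ENNReal.mul_lt_top ENNReal.ofReal_lt_top h

lemma gagK_scale (m : ℕ) (r ρ : ℝ) (hρ : 0 < ρ) :
    ∫⁻ y, gagK m r ρ y = ENNReal.ofReal (ρ ^ ((m : ℝ) - r)) * ∫⁻ y, gagK m r 1 y := by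
  have hmap := Measure.map_addHaar_smul (volume : Measure (EuclideanSpace ℝ (Fin m)))
    (r := ρ⁻¹) (by positivity)
  have h1 : ∫⁻ y, gagK m r 1 y ∂(Measure.map (fun x => ρ⁻¹ • x) volume)
      = ∫⁻ y, gagK m r 1 (ρ⁻¹ • y) :=
    lintegral_map (gagK_meas m r 1) (measurable_const_smul _)
  have h2 : ∀ y, gagK m r ρ y = ENNReal.ofReal (ρ ^ (-r)) * gagK m r 1 (ρ⁻¹ • y) := by
    intro y
    have hn : ‖ρ⁻¹ • y‖ = ρ⁻¹ * ‖y‖ := by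
      rw [norm_smul, Real.norm_of_nonneg (by positivity)]
    have hiff : 1 < ‖ρ⁻¹ • y‖ ↔ ρ < ‖y‖ := by
      rw [hn, inv_mul_eq_div, one_lt_div hρ]
    unfold gagK
    by_cases hy : ρ < ‖y‖
    · rw [Set.indicator_of_mem (by exact hy), Set.indicator_of_mem (by exact hiff.2 hy),
        ← ENNReal.ofReal_mul (by positivity), hn, Real.mul_rpow (by positivity) (by positivity),
        Real.inv_rpow hρ.le, Real.rpow_neg hρ.le]
      congr 1
      have : ρ ^ r ≠ 0 := by positivity
      have : ‖y‖ ^ r ≠ 0 := (Real.rpow_pos_of_pos (hρ.trans hy) _).ne'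
      field_simp
    · rw [Set.indicator_of_notMem (by exact hy), Set.indicator_of_notMem (by exact fun h => hy (hiff.1 h)), mul_zero]
  have h3 : ∫⁻ y, gagK m r 1 (ρ⁻¹ • y) = ENNReal.ofReal (ρ ^ m) * ∫⁻ y, gagK m r 1 y := by
    rw [← h1]
    erw [hmap]
    rw [lintegral_smul_measure, finrank_euclideanSpace_fin, smul_eq_mul]
    congr 2
    rw [inv_pow, inv_inv, abs_of_pos (by positivity)]
  simp_rw [h2]
  rw [lintegral_const_mul' _ _ ENNReal.ofReal_ne_top, h3, ← mul_assoc,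
    ← ENNReal.ofReal_mul (by positivity)]
  congr 2
  rw [← Real.rpow_natCast, ← Real.rpow_add hρ]
  congr 1
  ring

/-- Localization estimate for the Gagliardo fractional seminorm of a difference
(Proposition 4.2). -/
theorem gagliardo_seminorm_difference_localization
    (m : ℕ) (hm : 1 ≤ m) (s : ℝ) (hs : s ∈ Set.Ioo (0:ℝ) 1)
    (p : ℝ) (hp : 1 ≤ p) :
    ∃ C : ℝ, 0 < C ∧ ∀ (ν : ℕ), 1 ≤ ν →
      ∀ (Ω : Set (EuclideanSpace ℝ (Fin m)))
        (u₀ u₁ : EuclideanSpace ℝ (Fin m) → EuclideanSpace ℝ (Fin ν)),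
        Measurable u₀ → Measurable u₁ →
      ∀ (ρ : ℝ), 0 < ρ →
        (∫⁻ z in Ω ×ˢ Ω,
            ENNReal.ofReal
              (‖(u₀ z.1 - u₁ z.1) - (u₀ z.2 - u₁ z.2)‖ ^ p
                / ‖z.1 - z.2‖ ^ ((m : ℝ) + s * p)))
          ≤ ENNReal.ofReal C *
            ((∫⁻ z in {z : EuclideanSpace ℝ (Fin m) × EuclideanSpace ℝ (Fin m) |
                  z.1 ∈ Ω ∧ z.2 ∈ Ω ∧ ‖z.1 - z.2‖ ≤ ρ},
                ENNReal.ofReal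
                  ((‖u₀ z.1 - u₀ z.2‖ ^ p + ‖u₁ z.1 - u₁ z.2‖ ^ p)
                    / ‖z.1 - z.2‖ ^ ((m : ℝ) + s * p)))
              + ENNReal.ofReal (ρ ^ (-(s * p))) *
                  ∫⁻ x in Ω, ENNReal.ofReal (‖u₀ x - u₁ x‖ ^ p)) := by
  have hsp : 0 < s * p := mul_pos hs.1 (by linarith)
  set r : ℝ := (m : ℝ) + s * p with hr
  have hK := gagK_fin m r (by linarith)
  set K := ∫⁻ y, gagK m r 1 y with hKdef
  have hKr : ENNReal.ofReal K.toReal = K := ENNReal.ofReal_toReal hK.ne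
  have hK0 : 0 ≤ K.toReal := ENNReal.toReal_nonneg
  refine ⟨2 ^ p * (1 + 2 * K.toReal), by positivity, ?_⟩
  intro ν _ Ω u₀ u₁ hu₀ hu₁ ρ hρ
  have hT := gagK_scale m r ρ hρ
  rw [show (m : ℝ) - r = -(s * p) by rw [hr]; ring, ← hKdef] at hT
  set V : EuclideanSpace ℝ (Fin m) → ℝ≥0∞ := fun x => ENNReal.ofReal (‖u₀ x - u₁ x‖ ^ p) with hV
  have hVm : Measurable V := by fun_prop
  have hkm := gagK_meas m r ρ
  set G : EuclideanSpace ℝ (Fin m) × EuclideanSpace ℝ (Fin m) → ℝ≥0∞ := fun z =>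
    ENNReal.ofReal ((‖u₀ z.1 - u₀ z.2‖ ^ p + ‖u₁ z.1 - u₁ z.2‖ ^ p) / ‖z.1 - z.2‖ ^ r) with hG
  have hGm : Measurable G := by fun_prop
  set D : Set (EuclideanSpace ℝ (Fin m) × EuclideanSpace ℝ (Fin m)) := {z | ‖z.1 - z.2‖ ≤ ρ} with hD
  have hDm : MeasurableSet D := measurableSet_le (by fun_prop) measurable_const
  have hpt : ∀ z : EuclideanSpace ℝ (Fin m) × EuclideanSpace ℝ (Fin m),
      ENNReal.ofReal (‖(u₀ z.1 - u₁ z.1) - (u₀ z.2 - u₁ z.2)‖ ^ p / ‖z.1 - z.2‖ ^ r)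
      ≤ ENNReal.ofReal (2 ^ p) * (D.indicator G z
          + (V z.1 * gagK m r ρ (z.1 - z.2) + V z.2 * gagK m r ρ (z.1 - z.2))) := by
    intro z
    by_cases hz : z ∈ D
    · rw [Set.indicator_of_mem hz]
      refine le_trans ?_ (mul_le_mul_right le_self_add _)
      rw [hG, ← ENNReal.ofReal_mul (by positivity)]
      apply ENNReal.ofReal_le_ofReal
      rw [← mul_div_assoc]
      have := gag_norm_sub_rpow (u₀ z.1 - u₀ z.2) (u₁ z.1 - u₁ z.2) hp
      rw [show u₀ z.1 - u₁ z.1 - (u₀ z.2 - u₁ z.2)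
        = u₀ z.1 - u₀ z.2 - (u₁ z.1 - u₁ z.2) by abel]
      gcongr
    · rw [Set.indicator_of_notMem hz, zero_add, ← add_mul]
      have hz' : ρ < ‖z.1 - z.2‖ := not_le.1 hz
      rw [gagK, Set.indicator_of_mem (by exact hz'), hV]
      rw [← ENNReal.ofReal_add (by positivity) (by positivity),
        ← ENNReal.ofReal_mul (by positivity), ← ENNReal.ofReal_mul (by positivity)]
      apply ENNReal.ofReal_le_ofReal
      rw [mul_one_div, ← mul_div_assoc]
      have := gag_norm_sub_rpow (u₀ z.1 - u₁ z.1) (u₀ z.2 - u₁ z.2) hp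
      gcongr
  have hset : {z : EuclideanSpace ℝ (Fin m) × EuclideanSpace ℝ (Fin m) |
      z.1 ∈ Ω ∧ z.2 ∈ Ω ∧ ‖z.1 - z.2‖ ≤ ρ} = D ∩ Ω ×ˢ Ω := by
    ext z
    simp only [hD, Set.mem_setOf_eq, Set.mem_inter_iff, Set.mem_prod]
    tauto
  have hI1 : ∫⁻ z in Ω ×ˢ Ω, D.indicator G z = ∫⁻ z in D ∩ Ω ×ˢ Ω, G z := by
    rw [lintegral_indicator hDm, Measure.restrict_restrict hDm]
  have hprod : (volume : Measure (EuclideanSpace ℝ (Fin m) × EuclideanSpace ℝ (Fin m))).restrict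
      (Ω ×ˢ Ω) = (volume.restrict Ω).prod (volume.restrict Ω) := by
    rw [Measure.prod_restrict]; rfl
  have hin1 : ∀ x, ∫⁻ y in Ω, gagK m r ρ (x - y) ≤ ENNReal.ofReal (ρ ^ (-(s * p))) * K := by
    intro x
    rw [← hT, ← lintegral_sub_left_eq_self (gagK m r ρ) x]
    exact setLIntegral_le_lintegral _ _
  have hin2 : ∀ y, ∫⁻ x in Ω, gagK m r ρ (x - y) ≤ ENNReal.ofReal (ρ ^ (-(s * p))) * K := by
    intro y
    rw [← hT, ← lintegral_sub_right_eq_self (gagK m r ρ) y]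
    exact setLIntegral_le_lintegral _ _
  have hI2 : ∫⁻ z in Ω ×ˢ Ω, V z.1 * gagK m r ρ (z.1 - z.2)
      ≤ (∫⁻ x in Ω, V x) * (ENNReal.ofReal (ρ ^ (-(s * p))) * K) := by
    rw [hprod, lintegral_prod _ (by fun_prop), ← lintegral_mul_const _ hVm]
    apply lintegral_mono
    intro x
    dsimp only
    rw [lintegral_const_mul _ (by fun_prop)]
    exact mul_le_mul_right (hin1 x) _
  have hI3 : ∫⁻ z in Ω ×ˢ Ω, V z.2 * gagK m r ρ (z.1 - z.2)
      ≤ (∫⁻ x in Ω, V x) * (ENNReal.ofReal (ρ ^ (-(s * p))) * K) := by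
    rw [hprod, lintegral_prod_symm _ (by fun_prop), ← lintegral_mul_const _ hVm]
    apply lintegral_mono
    intro x
    dsimp only
    rw [lintegral_const_mul _ (by fun_prop)]
    exact mul_le_mul_right (hin2 x) _
  rw [hset]
  set I := ∫⁻ z in D ∩ Ω ×ˢ Ω, G z
  set J := ∫⁻ x in Ω, V x
  set R := ENNReal.ofReal (ρ ^ (-(s * p)))
  calc _ ≤ ∫⁻ z in Ω ×ˢ Ω, ENNReal.ofReal (2 ^ p) * (D.indicator G z
          + (V z.1 * gagK m r ρ (z.1 - z.2) + V z.2 * gagK m r ρ (z.1 - z.2))) :=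
        lintegral_mono hpt
    _ = ENNReal.ofReal (2 ^ p) * (I + ((∫⁻ z in Ω ×ˢ Ω, V z.1 * gagK m r ρ (z.1 - z.2))
          + ∫⁻ z in Ω ×ˢ Ω, V z.2 * gagK m r ρ (z.1 - z.2))) := by
        rw [lintegral_const_mul' _ _ ENNReal.ofReal_ne_top,
          lintegral_add_left (hGm.indicator hDm), hI1, lintegral_add_left (by fun_prop)]
    _ ≤ ENNReal.ofReal (2 ^ p) * (I + (J * (R * K) + J * (R * K))) := by gcongr
    _ ≤ ENNReal.ofReal (2 ^ p) * ((1 + 2 * K) * (I + R * J)) := by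
        apply mul_le_mul_right
        calc I + (J * (R * K) + J * (R * K)) = I + 2 * K * (R * J) := by ring
          _ ≤ (I + 2 * K * (R * J)) + (R * J + 2 * K * I) := le_self_add
          _ = (1 + 2 * K) * (I + R * J) := by ring
    _ = _ := by
        rw [ENNReal.ofReal_mul (by positivity), ENNReal.ofReal_add (by norm_num) (by positivity),
          ENNReal.ofReal_mul (by norm_num), hKr, mul_assoc]
        simp
end

section
/- Let m ≥ 1 and ν ≥ 1 be integers, let Ω ⊆ ℝ^m be a convex set, let s ∈ (0,1), p ∈ [1,∞), ρ > 0, let ℓ ≥ 1 be an integer, and let u : Ω → ℝ^ν be Borel measurable. Then ∬_{{(x,y) ∈ Ω×Ω : ‖x−y‖ ≤ ℓρ}} ‖u(x)−u(y)‖^p / ‖x−y‖^{m+sp} dx dy ≤ ℓ^{(1−s)p} ∬_{{(x,y) ∈ Ω×Ω : ‖x−y‖ ≤ ρ}} ‖u(x)−u(y)‖^p / ‖x−y‖^{m+sp} dx dy. -/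
open MeasureTheory Filter Topology ENNReal

lemma gag_cov (m : ℕ) (G : EuclideanSpace ℝ (Fin m) × EuclideanSpace ℝ (Fin m) → ℝ≥0∞)
    (hG : Measurable G) (r : ℝ) (hr : r ≠ 0) (a : ℝ) :
    ∫⁻ z : EuclideanSpace ℝ (Fin m) × EuclideanSpace ℝ (Fin m),
      G (z.1 + (a * r) • (z.2 - z.1), z.1 + ((a + 1) * r) • (z.2 - z.1))
      = ENNReal.ofReal (|(r ^ m)⁻¹|) * ∫⁻ z, G z := by
  have h1 : ∀ x : EuclideanSpace ℝ (Fin m),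
      ∫⁻ y, G (x + (a * r) • (y - x), x + ((a + 1) * r) • (y - x))
      = ENNReal.ofReal (|(r ^ m)⁻¹|) * ∫⁻ h, G (x + a • h, x + (a + 1) • h) := by
    intro x
    rw [← lintegral_add_right_eq_self _ x]
    simp only [add_sub_cancel_right, mul_smul]
    have hm : Measurable (fun h : EuclideanSpace ℝ (Fin m) => G (x + a • h, x + (a + 1) • h)) := by
      fun_prop
    rw [← lintegral_map (μ := volume) (g := fun h : EuclideanSpace ℝ (Fin m) => r • h) hm
      (by fun_prop), Measure.map_addHaar_smul _ hr, lintegral_smul_measure]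
    simp
  rw [Measure.volume_eq_prod, lintegral_prod _ (by fun_prop)]
  simp only [h1]
  rw [lintegral_const_mul' _ _ (by simp), lintegral_lintegral_swap (by fun_prop)]
  congr 1
  have h2 : ∀ h : EuclideanSpace ℝ (Fin m),
      ∫⁻ x, G (x + a • h, x + (a + 1) • h) = ∫⁻ x, G (x, x + h) := by
    intro h
    rw [← lintegral_add_right_eq_self (fun x => G (x, x + h)) (a • h)]
    simp only [add_smul, one_smul, add_assoc]
  simp only [h2]
  rw [lintegral_lintegral_swap (by fun_prop), lintegral_prod _ (by fun_prop)]
  refine lintegral_congr fun x => ?_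
  exact lintegral_add_left_eq_self (fun y => G (x, y)) x

lemma gag_pt (m ν : ℕ) (s p : ℝ) (hp : 1 ≤ p) (ℓ : ℕ) (hℓ : 1 ≤ ℓ)
    (u : EuclideanSpace ℝ (Fin m) → EuclideanSpace ℝ (Fin ν))
    (x y : EuclideanSpace ℝ (Fin m)) (P : ℕ → EuclideanSpace ℝ (Fin m))
    (h0 : P 0 = x) (hl : P ℓ = y) (hd : ∀ i, ‖x - y‖ = ℓ * ‖P i - P (i + 1)‖) :
    ‖u x - u y‖ ^ p / ‖x - y‖ ^ ((m : ℝ) + s * p) ≤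
      ∑ i ∈ Finset.range ℓ, (ℓ : ℝ) ^ (p - 1 - (m + s * p)) *
        (‖u (P i) - u (P (i + 1))‖ ^ p / ‖P i - P (i + 1)‖ ^ ((m : ℝ) + s * p)) := by
  have hl0 : (0 : ℝ) < ℓ := by exact_mod_cast hℓ
  have h1 : ‖u x - u y‖ ≤ ∑ i ∈ Finset.range ℓ, ‖u (P i) - u (P (i + 1))‖ := by
    have := dist_le_range_sum_dist (fun i => u (P i)) ℓ
    simpa only [dist_eq_norm, h0, hl] using this
  have h2 : ‖u x - u y‖ ^ p ≤
      (ℓ : ℝ) ^ (p - 1) * ∑ i ∈ Finset.range ℓ, ‖u (P i) - u (P (i + 1))‖ ^ p := by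
    have := Real.rpow_sum_le_const_mul_sum_rpow_of_nonneg (Finset.range ℓ)
      (f := fun i => ‖u (P i) - u (P (i + 1))‖) hp (fun _ _ => norm_nonneg _)
    rw [Finset.card_range] at this
    exact (Real.rpow_le_rpow (norm_nonneg _) h1 (by linarith)).trans this
  calc _ ≤ ((ℓ : ℝ) ^ (p - 1) * ∑ i ∈ Finset.range ℓ, ‖u (P i) - u (P (i + 1))‖ ^ p) /
        ‖x - y‖ ^ ((m : ℝ) + s * p) := by gcongr
    _ = _ := by
      rw [Finset.mul_sum, Finset.sum_div]
      refine Finset.sum_congr rfl fun i _ => ?_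
      rw [hd i, Real.mul_rpow hl0.le (norm_nonneg _), Real.rpow_sub hl0 (p - 1), mul_div_mul_comm]

lemma gag_open (m ν : ℕ)
    (Ω : Set (EuclideanSpace ℝ (Fin m))) (hΩ : Convex ℝ Ω) (hO : IsOpen Ω)
    (s : ℝ) (p : ℝ) (hp : 1 ≤ p)
    (ρ : ℝ) (ℓ : ℕ) (hℓ : 1 ≤ ℓ)
    (u : EuclideanSpace ℝ (Fin m) → EuclideanSpace ℝ (Fin ν)) (hu : Measurable u) :
    (∫⁻ z in {z : EuclideanSpace ℝ (Fin m) × EuclideanSpace ℝ (Fin m) |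
          z.1 ∈ Ω ∧ z.2 ∈ Ω ∧ ‖z.1 - z.2‖ ≤ (ℓ : ℝ) * ρ},
        ENNReal.ofReal (‖u z.1 - u z.2‖ ^ p / ‖z.1 - z.2‖ ^ ((m : ℝ) + s * p)))
      ≤ ENNReal.ofReal ((ℓ : ℝ) ^ ((1 - s) * p)) *
        ∫⁻ z in {z : EuclideanSpace ℝ (Fin m) × EuclideanSpace ℝ (Fin m) |
            z.1 ∈ Ω ∧ z.2 ∈ Ω ∧ ‖z.1 - z.2‖ ≤ ρ},
          ENNReal.ofReal (‖u z.1 - u z.2‖ ^ p / ‖z.1 - z.2‖ ^ ((m : ℝ) + s * p)) := by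
  have hl0 : (0 : ℝ) < ℓ := by exact_mod_cast hℓ
  have hmeas : ∀ R : ℝ, MeasurableSet {z : EuclideanSpace ℝ (Fin m) × EuclideanSpace ℝ (Fin m) |
      z.1 ∈ Ω ∧ z.2 ∈ Ω ∧ ‖z.1 - z.2‖ ≤ R} := by
    intro R
    refine (measurable_fst hO.measurableSet).inter ((measurable_snd hO.measurableSet).inter ?_)
    exact measurableSet_le (f := fun z : EuclideanSpace ℝ (Fin m) × EuclideanSpace ℝ (Fin m) =>
      ‖z.1 - z.2‖) (g := fun _ => R) (by fun_prop) (by fun_prop)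
  set f : EuclideanSpace ℝ (Fin m) × EuclideanSpace ℝ (Fin m) → ℝ≥0∞ := fun z =>
    ENNReal.ofReal (‖u z.1 - u z.2‖ ^ p / ‖z.1 - z.2‖ ^ ((m : ℝ) + s * p)) with hf
  have hfm : Measurable f := by fun_prop
  set S := {z : EuclideanSpace ℝ (Fin m) × EuclideanSpace ℝ (Fin m) |
      z.1 ∈ Ω ∧ z.2 ∈ Ω ∧ ‖z.1 - z.2‖ ≤ ρ} with hS
  have hGm : Measurable (S.indicator f) := hfm.indicator (hmeas ρ)
  set C : ℝ := (ℓ : ℝ) ^ (p - 1 - (m + s * p)) with hC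
  have hC0 : 0 ≤ C := by positivity
  have key : ∀ z ∈ {z : EuclideanSpace ℝ (Fin m) × EuclideanSpace ℝ (Fin m) |
      z.1 ∈ Ω ∧ z.2 ∈ Ω ∧ ‖z.1 - z.2‖ ≤ (ℓ : ℝ) * ρ},
      f z ≤ ∑ i ∈ Finset.range ℓ, ENNReal.ofReal C * S.indicator f
        (z.1 + ((i : ℝ) * (ℓ : ℝ)⁻¹) • (z.2 - z.1),
          z.1 + (((i : ℝ) + 1) * (ℓ : ℝ)⁻¹) • (z.2 - z.1)) := by
    rintro ⟨x, y⟩ ⟨hx, hy, hxy⟩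
    simp only at hx hy hxy ⊢
    set P : ℕ → EuclideanSpace ℝ (Fin m) := fun i => x + ((i : ℝ) * (ℓ : ℝ)⁻¹) • (y - x) with hP
    have hP1 : ∀ i : ℕ, x + (((i : ℝ) + 1) * (ℓ : ℝ)⁻¹) • (y - x) = P (i + 1) := by
      intro i; simp [hP]
    have hd : ∀ i, ‖x - y‖ = ℓ * ‖P i - P (i + 1)‖ := by
      intro i
      have : P i - P (i + 1) = (ℓ : ℝ)⁻¹ • (x - y) := by
        simp only [hP]; push_cast; module
      rw [this, norm_smul, Real.norm_of_nonneg (by positivity)]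
      field_simp
    have hmem : ∀ i ≤ ℓ, P i ∈ Ω := by
      intro i hi
      refine hΩ.add_smul_sub_mem hx hy ⟨by positivity, ?_⟩
      rw [← div_eq_mul_inv, div_le_one hl0]
      exact_mod_cast hi
    have hpt := gag_pt m ν s p hp ℓ hℓ u x y P (by simp [hP]) (by simp [hP, hl0.ne']) hd
    simp only [hP1]
    refine (ENNReal.ofReal_le_ofReal hpt).trans ?_
    rw [ENNReal.ofReal_sum_of_nonneg (fun i _ => by positivity)]
    refine Finset.sum_le_sum fun i hi => ?_
    rw [ENNReal.ofReal_mul hC0]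
    have hi' := Finset.mem_range.1 hi
    have hin : (P i, P (i + 1)) ∈ S := by
      refine ⟨hmem i hi'.le, hmem _ hi', ?_⟩
      have := hd i
      simp only
      rw [this] at hxy
      exact le_of_mul_le_mul_left hxy hl0
    rw [Set.indicator_of_mem hin]
  calc _ ≤ ∫⁻ z in {z : EuclideanSpace ℝ (Fin m) × EuclideanSpace ℝ (Fin m) |
      z.1 ∈ Ω ∧ z.2 ∈ Ω ∧ ‖z.1 - z.2‖ ≤ (ℓ : ℝ) * ρ}, ∑ i ∈ Finset.range ℓ,
        ENNReal.ofReal C * S.indicator f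
        (z.1 + ((i : ℝ) * (ℓ : ℝ)⁻¹) • (z.2 - z.1),
          z.1 + (((i : ℝ) + 1) * (ℓ : ℝ)⁻¹) • (z.2 - z.1)) :=
        setLIntegral_mono' (hmeas _) key
    _ ≤ _ := setLIntegral_le_lintegral _ _
    _ = ∑ i ∈ Finset.range ℓ, ENNReal.ofReal C *
        (ENNReal.ofReal (|(((ℓ : ℝ)⁻¹) ^ m)⁻¹|) * ∫⁻ z, S.indicator f z) := by
      rw [lintegral_finsetSum _ (fun i _ => by fun_prop)]
      refine Finset.sum_congr rfl fun i _ => ?_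
      rw [lintegral_const_mul' _ _ (by simp), gag_cov m _ hGm _ (by positivity)]
    _ = _ := by
      rw [lintegral_indicator (hmeas ρ), Finset.sum_const, Finset.card_range, nsmul_eq_mul,
        ← mul_assoc, ← mul_assoc]
      congr 1
      rw [← ENNReal.ofReal_natCast, ← ENNReal.ofReal_mul hl0.le, ← ENNReal.ofReal_mul (by positivity)]
      congr 1
      rw [abs_of_nonneg (by positivity), inv_pow, inv_inv, hC, ← Real.rpow_natCast (ℓ : ℝ) m]
      nth_rewrite 1 [← Real.rpow_one (ℓ : ℝ)]
      rw [← Real.rpow_add hl0, ← Real.rpow_add hl0]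
      congr 1
      ring

/-- Global control of the Gagliardo fractional energy by its localization at
small scales on a convex domain (Proposition 4.4). -/
theorem gagliardo_energy_rescaling
    (m ν : ℕ) (hm : 1 ≤ m) (hν : 1 ≤ ν)
    (Ω : Set (EuclideanSpace ℝ (Fin m))) (hΩ : Convex ℝ Ω)
    (s : ℝ) (hs : s ∈ Set.Ioo (0:ℝ) 1) (p : ℝ) (hp : 1 ≤ p)
    (ρ : ℝ) (hρ : 0 < ρ) (ℓ : ℕ) (hℓ : 1 ≤ ℓ)
    (u : EuclideanSpace ℝ (Fin m) → EuclideanSpace ℝ (Fin ν)) (hu : Measurable u) :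
    (∫⁻ z in {z : EuclideanSpace ℝ (Fin m) × EuclideanSpace ℝ (Fin m) |
          z.1 ∈ Ω ∧ z.2 ∈ Ω ∧ ‖z.1 - z.2‖ ≤ (ℓ : ℝ) * ρ},
        ENNReal.ofReal (‖u z.1 - u z.2‖ ^ p / ‖z.1 - z.2‖ ^ ((m : ℝ) + s * p)))
      ≤ ENNReal.ofReal ((ℓ : ℝ) ^ ((1 - s) * p)) *
        ∫⁻ z in {z : EuclideanSpace ℝ (Fin m) × EuclideanSpace ℝ (Fin m) |
            z.1 ∈ Ω ∧ z.2 ∈ Ω ∧ ‖z.1 - z.2‖ ≤ ρ},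
          ENNReal.ofReal (‖u z.1 - u z.2‖ ^ p / ‖z.1 - z.2‖ ^ ((m : ℝ) + s * p)) := by
  have hae : ∀ᵐ x : EuclideanSpace ℝ (Fin m), x ∈ Ω → x ∈ interior Ω := by
    have h := hΩ.addHaar_frontier volume
    filter_upwards [measure_eq_zero_iff_ae_notMem.1 h] with x hx hxΩ
    by_contra hni
    exact hx ⟨subset_closure hxΩ, hni⟩
  have h1 : ∀ᵐ z : EuclideanSpace ℝ (Fin m) × EuclideanSpace ℝ (Fin m),
      z.1 ∈ Ω → z.1 ∈ interior Ω := Measure.quasiMeasurePreserving_fst.ae hae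
  have h2 : ∀ᵐ z : EuclideanSpace ℝ (Fin m) × EuclideanSpace ℝ (Fin m),
      z.2 ∈ Ω → z.2 ∈ interior Ω := Measure.quasiMeasurePreserving_snd.ae hae
  refine (lintegral_mono_set' ?_).trans
    ((gag_open m ν (interior Ω) hΩ.interior isOpen_interior s p hp ρ ℓ hℓ u hu).trans ?_)
  · filter_upwards [h1, h2] with z hz1 hz2 hz
    exact ⟨hz1 hz.1, hz2 hz.2.1, hz.2.2⟩
  · gcongr <;> exact interior_subset
end

section
/- For all integers m ≥ 1 and k ≥ 1 there exists a constant C > 0 such that for every integer ν ≥ 1, every open set Ω ⊆ ℝ^m, every bounded k-times continuously differentiable map u : Ω → ℝ^ν, every ρ > 0 and every x ∈ Ω with the open ball B_ρ(x) contained in Ω, one has ‖Du(x)‖ ≤ C ( ‖u‖_∞^{1−1/k} ((M‖D^k u‖)(x))^{1/k} + ‖u‖_∞ / ρ ), where ‖u‖_∞ := sup_{y ∈ Ω} ‖u(y)‖. -/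
open MeasureTheory Filter Topology ENNReal

/-- The maximal function of `f : Ω → [0,∞]`:
`(Mf)(x) = sup_{r>0} λ(B_r(x))⁻¹ ∫_{Ω ∩ B_r(x)} f`. -/
noncomputable def maximalFn {m : ℕ} (Ω : Set (EuclideanSpace ℝ (Fin m)))
    (f : EuclideanSpace ℝ (Fin m) → ℝ≥0∞) (x : EuclideanSpace ℝ (Fin m)) : ℝ≥0∞ :=
  ⨆ (r : ℝ) (_ : 0 < r),
    (volume (Metric.ball x r))⁻¹ * ∫⁻ y in Ω ∩ Metric.ball x r, f y


lemma taylor1 {F : Type*} [NormedAddCommGroup F] [NormedSpace ℝ F] [CompleteSpace F] (n : ℕ) :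
    ∀ (G : ℕ → ℝ → F)
    (_ : ∀ j ≤ n, ∀ t ∈ Set.Icc (0:ℝ) 1, HasDerivAt (G j) (G (j+1) t) t)
    (_ : ContinuousOn (G (n+1)) (Set.Icc 0 1)), ∀ t ∈ Set.Icc (0:ℝ) 1,
    ‖G 0 t - ∑ j ∈ Finset.range (n+1), (t^j / (j.factorial : ℝ)) • G j 0‖
      ≤ ∫ s in (0:ℝ)..1, ‖G (n+1) s‖ := by
  induction n with
  | zero =>
    intro G hG hc t ht
    simp only [zero_add, Finset.range_one, Finset.sum_singleton, pow_zero, Nat.factorial_zero,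
      Nat.cast_one, div_one, one_smul] at *
    have hsub : Set.uIcc 0 t ⊆ Set.Icc (0:ℝ) 1 := by
      rw [Set.uIcc_of_le ht.1]; exact Set.Icc_subset_Icc le_rfl ht.2
    have h1 := intervalIntegral.integral_eq_sub_of_hasDerivAt (f := G 0) (f' := G 1) (a := 0) (b := t)
      (fun s hs => hG 0 le_rfl s (hsub hs)) ((hc.mono hsub).intervalIntegrable)
    rw [← h1]
    refine (intervalIntegral.norm_integral_le_integral_norm ht.1).trans ?_
    refine intervalIntegral.integral_mono_interval le_rfl ht.1 ht.2
      (Eventually.of_forall fun _ => norm_nonneg _) ?_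
    apply ContinuousOn.intervalIntegrable
    rw [Set.uIcc_of_le zero_le_one]; exact hc.norm
  | succ n ih =>
    intro G hG hc t ht
    have key := ih (fun j => G (j+1)) (fun j hj => hG (j+1) (by omega)) hc
    set I := ∫ s in (0:ℝ)..1, ‖G (n+1+1) s‖ with hI
    have hI0 : 0 ≤ I := intervalIntegral.integral_nonneg zero_le_one fun _ _ => norm_nonneg _
    have hd : ∀ s ∈ Set.Icc (0:ℝ) 1, HasDerivWithinAt
        (fun s => G 0 s - ∑ j ∈ Finset.range (n+1+1), (s^j / (j.factorial : ℝ)) • G j 0)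
        (G 1 s - ∑ j ∈ Finset.range (n+1), (s^j / (j.factorial : ℝ)) • G (j+1) 0)
        (Set.Icc 0 1) s := by
      intro s hs
      apply HasDerivAt.hasDerivWithinAt
      apply (hG 0 (by omega) s hs).sub
      simp_rw [Finset.sum_range_succ' _ (n+1)]
      simp only [pow_zero]
      apply HasDerivAt.add_const
      apply HasDerivAt.fun_sum
      intro j _
      apply HasDerivAt.smul_const
      have := (hasDerivAt_pow (j+1) s).div_const (((j+1).factorial : ℕ) : ℝ)
      convert this using 1
      rw [Nat.factorial_succ]
      have : (j.factorial : ℝ) ≠ 0 := by positivity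
      push_cast
      field_simp
    have := norm_image_sub_le_of_norm_deriv_le_segment' hd
      (fun s hs => key s (Set.Ico_subset_Icc_self hs)) t ht
    have h0 : G 0 0 - ∑ j ∈ Finset.range (n+1+1), ((0:ℝ)^j / (j.factorial : ℝ)) • G j 0 = 0 := by
      rw [Finset.sum_range_succ']
      simp
    simp only [h0, sub_zero] at this
    refine this.trans ?_
    nlinarith [ht.1, ht.2]

lemma weights (n : ℕ) : ∃ c t : Fin (n+2) → ℝ, (∀ i, t i ∈ Set.Icc (0:ℝ) 1) ∧
    ∀ j : Fin (n+2), ∑ i, c i * t i ^ (j : ℕ) = if j = 1 then 1 else 0 := by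
  let t : Fin (n+2) → ℝ := fun i => 1 / ((i : ℕ) + 1 : ℝ)
  have hinj : Function.Injective t := by
    intro i j h
    simp only [t, one_div, inv_inj] at h
    exact Fin.ext (by exact_mod_cast (_root_.add_right_cancel h))
  let V := Matrix.vandermonde t
  have hV : IsUnit V.det := (Matrix.det_vandermonde_ne_zero_iff.2 hinj).isUnit
  refine ⟨Matrix.vecMul (Pi.single 1 1) V⁻¹, t, ?_, ?_⟩
  · intro i
    refine ⟨by positivity, ?_⟩
    simp only [t]
    rw [div_le_one (by positivity)]
    have : (0:ℝ) ≤ (i : ℕ) := by positivity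
    linarith
  · intro j
    have : Matrix.vecMul (Matrix.vecMul (Pi.single 1 (1:ℝ)) V⁻¹) V = Pi.single 1 1 := by
      rw [Matrix.vecMul_vecMul, Matrix.nonsing_inv_mul _ hV, Matrix.vecMul_one]
    have := congrFun this j
    rw [Pi.single_apply] at this
    rw [← this]
    rfl

lemma oneD_s5 (n : ℕ) : ∃ C : ℝ, 0 < C ∧ ∀ {F : Type} [NormedAddCommGroup F] [NormedSpace ℝ F]
    [CompleteSpace F] (G : ℕ → ℝ → F) (S : ℝ)
    (_ : ∀ j ≤ n+1, ∀ t ∈ Set.Icc (0:ℝ) 1, HasDerivAt (G j) (G (j+1) t) t)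
    (_ : ContinuousOn (G (n+2)) (Set.Icc 0 1)) (_ : ∀ t ∈ Set.Icc (0:ℝ) 1, ‖G 0 t‖ ≤ S),
    ‖G 1 0‖ ≤ C * (S + ∫ s in (0:ℝ)..1, ‖G (n+2) s‖) := by
  obtain ⟨c, t, ht, hc⟩ := weights n
  refine ⟨∑ i, |c i| + 1, by positivity, ?_⟩
  intro F _ _ _ G S hG hcont hS
  have hT := taylor1 (n+1) G hG hcont
  set I := ∫ s in (0:ℝ)..1, ‖G (n+2) s‖ with hI
  have hI0 : 0 ≤ I := intervalIntegral.integral_nonneg zero_le_one fun _ _ => norm_nonneg _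
  have hS0 : 0 ≤ S := (norm_nonneg _).trans (hS 0 (by simp))
  have h1 : G 1 0 = ∑ i, c i • ∑ j ∈ Finset.range (n+2), (t i ^j / (j.factorial : ℝ)) • G j 0 := by
    simp_rw [Finset.smul_sum]
    rw [Finset.sum_comm, Finset.sum_range]
    have : ∀ j : Fin (n+2), ∑ i, c i • (t i ^ (j:ℕ) / ((j:ℕ).factorial : ℝ)) • G j 0
        = if j = 1 then G 1 0 else 0 := by
      intro j
      have h2 : ∑ i, c i • (t i ^ (j:ℕ) / ((j:ℕ).factorial : ℝ)) • G j 0 =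
        (∑ i, c i * t i ^ (j:ℕ)) • (((j:ℕ).factorial : ℝ)⁻¹ • G j 0) := by
        rw [Finset.sum_smul]
        refine Finset.sum_congr rfl fun i _ => ?_
        simp only [smul_smul]
        congr 1
        ring
      rw [h2, hc j]
      split_ifs with h
      · subst h; simp
      · simp
    rw [Finset.sum_congr rfl fun j _ => this j]
    simp
  rw [h1]
  have : ∀ i, ‖c i • ∑ j ∈ Finset.range (n+2), (t i ^j / (j.factorial : ℝ)) • G j 0‖ ≤ |c i| * (S + I) := by
    intro i
    rw [norm_smul, Real.norm_eq_abs]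
    gcongr
    have a := hT (t i) (ht i)
    have b := hS (t i) (ht i)
    have := norm_sub_le (G 0 (t i)) (G 0 (t i) - ∑ j ∈ Finset.range (n+2), (t i ^j / (j.factorial : ℝ)) • G j 0)
    rw [_root_.sub_sub_cancel] at this
    linarith
  calc _ ≤ _ := norm_sum_le _ _
    _ ≤ ∑ i, |c i| * (S + I) := Finset.sum_le_sum fun i _ => this i
    _ = (∑ i, |c i|) * (S + I) := by rw [Finset.sum_mul]
    _ ≤ _ := by nlinarith

lemma ray (n : ℕ) : ∃ C : ℝ, 0 < C ∧ ∀ {E F : Type} [NormedAddCommGroup E] [NormedSpace ℝ E]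
    [NormedAddCommGroup F] [NormedSpace ℝ F]
    [CompleteSpace F] (Ω : Set E) (_ : IsOpen Ω) (u : E → F) (_ : ContDiffOn ℝ (n+2 : ℕ) u Ω)
    (S : ℝ) (_ : ∀ z ∈ Ω, ‖u z‖ ≤ S) (x y : E) (_ : ∀ t ∈ Set.Icc (0:ℝ) 1, x + t • y ∈ Ω),
    ENNReal.ofReal ‖fderivWithin ℝ u Ω x y‖ ≤ ENNReal.ofReal C * (ENNReal.ofReal S
      + ENNReal.ofReal (‖y‖^(n+2)) *
        ∫⁻ t in Set.Ioc (0:ℝ) 1, (‖iteratedFDerivWithin ℝ (n+2) u Ω (x + t • y)‖₊ : ℝ≥0∞)) := by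
  obtain ⟨C, hC, h⟩ := oneD_s5 n
  refine ⟨C, hC, ?_⟩
  intro E F _ _ _ _ _ Ω hΩ u hu S hS x y hxy
  let G : ℕ → ℝ → F := fun j t => iteratedFDerivWithin ℝ j u Ω (x + t • y) (fun _ => y)
  have hl : ∀ t : ℝ, HasDerivAt (fun t : ℝ => x + t • y) y t := by
    intro t
    simpa using ((hasDerivAt_id t).smul_const y).const_add x
  have hcl : Continuous (fun t : ℝ => x + t • y) := by fun_prop
  have hcD : ContinuousOn (fun t : ℝ => iteratedFDerivWithin ℝ (n+2) u Ω (x + t • y)) (Set.Icc 0 1) :=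
    (hu.continuousOn_iteratedFDerivWithin le_rfl hΩ.uniqueDiffOn).comp hcl.continuousOn hxy
  have h0 : x ∈ Ω := by simpa using hxy 0 (by simp)
  have := h G S ?_ ?_ ?_
  · have e1 : G 1 0 = fderivWithin ℝ u Ω x y := by
      simp only [G, zero_smul, add_zero]
      rw [iteratedFDerivWithin_one_apply (hΩ.uniqueDiffOn x h0)]
    rw [e1] at this
    have hS0 : 0 ≤ S := (norm_nonneg _).trans (hS x h0)
    have hIle : ∫ s in (0:ℝ)..1, ‖G (n+2) s‖ ≤ ‖y‖^(n+2) *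
        ∫ s in (0:ℝ)..1, ‖iteratedFDerivWithin ℝ (n+2) u Ω (x + s • y)‖ := by
      rw [← intervalIntegral.integral_const_mul]
      apply intervalIntegral.integral_mono_on zero_le_one
      · apply ContinuousOn.intervalIntegrable
        rw [Set.uIcc_of_le zero_le_one]
        apply ContinuousOn.norm
        exact (ContinuousMultilinearMap.apply ℝ (fun _ : Fin (n+2) => E) F (fun _ => y)).continuous.comp_continuousOn hcD
      · apply ContinuousOn.intervalIntegrable
        rw [Set.uIcc_of_le zero_le_one]
        exact continuousOn_const.mul hcD.norm
      · intro t ht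
        refine (ContinuousMultilinearMap.le_opNorm _ _).trans ?_
        simp [mul_comm]
    have h3 : ‖fderivWithin ℝ u Ω x y‖ ≤ C * (S + ‖y‖^(n+2) *
        ∫ s in (0:ℝ)..1, ‖iteratedFDerivWithin ℝ (n+2) u Ω (x + s • y)‖) :=
      this.trans (by gcongr)
    refine (ENNReal.ofReal_le_ofReal h3).trans ?_
    have hI0 : 0 ≤ ∫ s in (0:ℝ)..1, ‖iteratedFDerivWithin ℝ (n+2) u Ω (x + s • y)‖ :=
      intervalIntegral.integral_nonneg zero_le_one fun _ _ => norm_nonneg _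
    rw [ENNReal.ofReal_mul hC.le, ENNReal.ofReal_add hS0 (by positivity),
      ENNReal.ofReal_mul (by positivity), intervalIntegral.integral_of_le zero_le_one,
      ofReal_integral_norm_eq_lintegral_enorm]
    · rfl
    · exact (hcD.integrableOn_Icc).mono_set Set.Ioc_subset_Icc_self
  · intro j hj t ht
    have hd : DifferentiableAt ℝ (iteratedFDerivWithin ℝ j u Ω) (x + t • y) :=
      (hu.differentiableOn_iteratedFDerivWithin (by exact_mod_cast (by omega : j < n+2)) hΩ.uniqueDiffOn).differentiableAt
        (hΩ.mem_nhds (hxy t ht))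
    have h1 := hd.hasFDerivAt.comp_hasDerivAt t (hl t)
    have h2 := (ContinuousMultilinearMap.apply ℝ (fun _ : Fin j => E) F (fun _ => y)).hasFDerivAt.comp_hasDerivAt t h1
    have e : G (j+1) t = (ContinuousMultilinearMap.apply ℝ (fun _ : Fin j => E) F (fun _ => y)) ((fderiv ℝ (iteratedFDerivWithin ℝ j u Ω) (x + t • y)) y) := by
      simp only [G]
      rw [iteratedFDerivWithin_succ_apply_left, fderivWithin_of_isOpen hΩ (hxy t ht)]
      rfl
    rw [e]
    exact h2
  · exact (ContinuousMultilinearMap.apply ℝ (fun _ : Fin (n+2) => E) F (fun _ => y)).continuous.comp_continuousOn hcD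
  · intro t ht
    simpa [G] using hS _ (hxy t ht)
lemma int_le_max {m : ℕ} (Ω : Set (EuclideanSpace ℝ (Fin m)))
    (f : EuclideanSpace ℝ (Fin m) → ℝ≥0∞) (x : EuclideanSpace ℝ (Fin m)) {r : ℝ} (hr : 0 < r) :
    ∫⁻ y in Ω ∩ Metric.ball x r, f y ≤ volume (Metric.ball x r) * maximalFn Ω f x := by
  have h : (volume (Metric.ball x r))⁻¹ * ∫⁻ y in Ω ∩ Metric.ball x r, f y ≤ maximalFn Ω f x :=
    le_iSup₂ (f := fun (r : ℝ) (_ : 0 < r) =>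
      (volume (Metric.ball x r))⁻¹ * ∫⁻ y in Ω ∩ Metric.ball x r, f y) r hr
  have h0 : volume (Metric.ball x r) ≠ 0 := (Metric.measure_ball_pos volume x hr).ne'
  have h1 : volume (Metric.ball x r) ≠ ∞ := measure_ball_lt_top.ne
  calc _ = volume (Metric.ball x r) * ((volume (Metric.ball x r))⁻¹ * ∫⁻ y in Ω ∩ Metric.ball x r, f y) := by
        rw [← mul_assoc, ENNReal.mul_inv_cancel h0 h1, one_mul]
    _ ≤ _ := by gcongr

lemma scale {m : ℕ} (Ω : Set (EuclideanSpace ℝ (Fin m))) (hΩ : IsOpen Ω)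
    (f : EuclideanSpace ℝ (Fin m) → ℝ≥0∞) (hf : Measurable (Ω.indicator f))
    (x : EuclideanSpace ℝ (Fin m)) {r t : ℝ} (hr : 0 < r) (ht : 0 < t) :
    ∫⁻ y in Metric.ball 0 r, Ω.indicator f (x + t • y)
      ≤ volume (Metric.ball x r) * maximalFn Ω f x := by
  let H := (Metric.ball x (t * r)).indicator (Ω.indicator f)
  have hH : Measurable H := hf.indicator Metric.isOpen_ball.measurableSet
  have e1 : ∫⁻ y in Metric.ball 0 r, Ω.indicator f (x + t • y) = ∫⁻ y, H (x + t • y) := by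
    rw [← lintegral_indicator Metric.isOpen_ball.measurableSet]
    refine lintegral_congr fun y => ?_
    have : (x + t • y ∈ Metric.ball x (t*r)) ↔ y ∈ Metric.ball 0 r := by
      simp [norm_smul, abs_of_pos ht, ht]
    by_cases hy : y ∈ Metric.ball 0 r
    · rw [Set.indicator_of_mem hy]
      exact (Set.indicator_of_mem (this.2 hy) _).symm
    · rw [Set.indicator_of_notMem hy]
      exact (Set.indicator_of_notMem (fun h => hy (this.1 h)) _).symm
  have e2 : ∫⁻ y, H (x + t • y) = ENNReal.ofReal |(t ^ m)⁻¹| * ∫⁻ z, H z := by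
    have : ∫⁻ y, H (x + t • y) = ∫⁻ z, H (x + z) ∂(Measure.map (t • ·) volume) := by
      rw [lintegral_map (by fun_prop) (by fun_prop)]
    rw [this, Measure.map_addHaar_smul _ ht.ne', lintegral_smul_measure,
      lintegral_add_left_eq_self, finrank_euclideanSpace_fin, smul_eq_mul]
  have e3 : ∫⁻ z, H z = ∫⁻ z in Ω ∩ Metric.ball x (t*r), f z := by
    simp only [H]
    rw [Set.indicator_indicator, lintegral_indicator (Metric.isOpen_ball.inter hΩ).measurableSet, Set.inter_comm]
  rw [e1, e2, e3]
  calc _ ≤ ENNReal.ofReal |(t ^ m)⁻¹| * (volume (Metric.ball x (t*r)) * maximalFn Ω f x) := by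
        gcongr; exact int_le_max _ _ _ (by positivity)
    _ = _ := by
        rw [Measure.addHaar_ball_mul_of_pos _ _ ht, finrank_euclideanSpace_fin, ← mul_assoc, ← mul_assoc,
          ← ENNReal.ofReal_mul (abs_nonneg _), abs_of_pos (by positivity), inv_mul_cancel₀ (by positivity),
          ENNReal.ofReal_one, one_mul, Measure.addHaar_ball_center _ x]

lemma le_max {m : ℕ} (Ω : Set (EuclideanSpace ℝ (Fin m))) (hΩ : IsOpen Ω)
    (f : EuclideanSpace ℝ (Fin m) → ℝ≥0∞) (hf : ContinuousOn f Ω)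
    (x : EuclideanSpace ℝ (Fin m)) (hx : x ∈ Ω) : f x ≤ maximalFn Ω f x := by
  refine le_of_forall_lt fun c hc => ?_
  obtain ⟨c', hcc, hc'⟩ := exists_between hc
  refine hcc.trans_le ?_
  have h1 : ∀ᶠ y in 𝓝 x, c' < f y := (hf.continuousAt (hΩ.mem_nhds hx)).eventually_const_lt hc'
  obtain ⟨r, hr, hb⟩ := Metric.eventually_nhds_iff_ball.1 (h1.and (hΩ.mem_nhds hx))
  have h2 := int_le_max Ω f x hr
  have h0 : volume (Metric.ball x r) ≠ 0 := (Metric.measure_ball_pos volume x hr).ne'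
  have h3 : volume (Metric.ball x r) ≠ ∞ := measure_ball_lt_top.ne
  have h4 : Ω ∩ Metric.ball x r = Metric.ball x r :=
    Set.inter_eq_right.2 fun y hy => (hb y hy).2
  rw [h4] at h2
  have h5 : c' * volume (Metric.ball x r) ≤ ∫⁻ y in Metric.ball x r, f y := by
    rw [← setLIntegral_const]
    exact setLIntegral_mono' Metric.isOpen_ball.measurableSet fun y hy => (hb y hy).1.le
  have h6 := h5.trans h2
  rw [mul_comm] at h6
  exact (ENNReal.mul_le_mul_iff_right h0 h3).1 h6

lemma core (m n : ℕ) : ∃ C : ℝ, 0 < C ∧ ∀ (ν : ℕ) (Ω : Set (EuclideanSpace ℝ (Fin m))) (_ : IsOpen Ω)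
      (u : EuclideanSpace ℝ (Fin m) → EuclideanSpace ℝ (Fin ν)) (_ : ContDiffOn ℝ (n+2 : ℕ) u Ω)
      (S : ℝ) (_ : ∀ z ∈ Ω, ‖u z‖ ≤ S) (r : ℝ) (_ : 0 < r) (x) (_ : x ∈ Ω) (_ : Metric.ball x r ⊆ Ω),
      ENNReal.ofReal (r * ‖fderivWithin ℝ u Ω x‖) ≤ ENNReal.ofReal C * (ENNReal.ofReal S +
        ENNReal.ofReal (r^(n+2)) * maximalFn Ω
                (fun y => (‖iteratedFDerivWithin ℝ (n+2) u Ω y‖₊ : ℝ≥0∞)) x) := by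
  obtain ⟨C, hC, hray⟩ := ray n
  refine ⟨8 * C * 4^m, by positivity, ?_⟩
  intro ν Ω hΩ u hu S hS r hr x hx hball
  set A := fderivWithin ℝ u Ω x with hA
  set f : EuclideanSpace ℝ (Fin m) → ℝ≥0∞ := fun y => (‖iteratedFDerivWithin ℝ (n+2) u Ω y‖₊ : ℝ≥0∞) with hf
  rcases eq_or_ne A 0 with h0 | h0
  · simp [h0]
  have hApos : 0 < ‖A‖ := norm_pos_iff.2 h0
  obtain ⟨e, he1, he2⟩ := A.exists_lt_apply_of_lt_opNorm (r := 3/4 * ‖A‖) (by linarith)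
  set B := Metric.ball ((r/2) • e) (r/4) with hB
  have hBsub : B ⊆ Metric.ball 0 r := by
    apply Metric.ball_subset_ball'
    rw [dist_zero_right, norm_smul, Real.norm_of_nonneg (by positivity)]
    nlinarith
  have hBlow : ∀ y ∈ B, r * ‖A‖ / 8 ≤ ‖A y‖ := by
    intro y hy
    have h1 : ‖A ((r/2) • e - y)‖ ≤ ‖A‖ * (r/4) := by
      refine (A.le_opNorm _).trans ?_
      gcongr
      rw [norm_sub_rev, ← dist_eq_norm]
      exact (Metric.mem_ball.1 hy).le
    rw [map_sub, map_smul] at h1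
    have h2 := norm_sub_norm_le ((r/2) • A e) (A y)
    rw [norm_smul, Real.norm_of_nonneg (by positivity)] at h2
    nlinarith
  have hfc : ContinuousOn f Ω := by
    have := hu.continuousOn_iteratedFDerivWithin (m := n+2) le_rfl hΩ.uniqueDiffOn
    exact this.enorm
  have hfm : Measurable (Ω.indicator f) := by
    classical
    have := hfc.measurable_piecewise (g := fun _ => 0) continuousOn_const hΩ.measurableSet
    rwa [← Set.piecewise_eq_indicator]
  have hin : ∀ y ∈ B, ∀ t ∈ Set.Icc (0:ℝ) 1, x + t • y ∈ Ω := by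
    intro y hy t ht
    apply hball
    have := mem_ball_zero_iff.1 (hBsub hy)
    rw [mem_ball_iff_norm, add_sub_cancel_left, norm_smul, Real.norm_of_nonneg ht.1]
    nlinarith [ht.2, norm_nonneg y]
  have hpt : ∀ y ∈ B, ENNReal.ofReal (r * ‖A‖ / 8) ≤ ENNReal.ofReal C * (ENNReal.ofReal S
      + ENNReal.ofReal (r^(n+2)) * ∫⁻ t in Set.Ioc (0:ℝ) 1, Ω.indicator f (x + t • y)) := by
    intro y hy
    refine (ENNReal.ofReal_le_ofReal (hBlow y hy)).trans ?_
    refine (hray Ω hΩ u hu S hS x y (hin y hy)).trans ?_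
    have : ∫⁻ t in Set.Ioc (0:ℝ) 1, (‖iteratedFDerivWithin ℝ (n+2) u Ω (x + t • y)‖₊ : ℝ≥0∞)
       = ∫⁻ t in Set.Ioc (0:ℝ) 1, Ω.indicator f (x + t • y) := by
      refine setLIntegral_congr_fun measurableSet_Ioc fun t ht => ?_
      rw [Set.indicator_of_mem (hin y hy t ⟨ht.1.le, ht.2⟩)]
    rw [this]
    gcongr
    exact (mem_ball_zero_iff.1 (hBsub hy)).le
  have hjm : Measurable (fun p : EuclideanSpace ℝ (Fin m) × ℝ => Ω.indicator f (x + p.2 • p.1)) :=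
    hfm.comp (by fun_prop)
  have hint := setLIntegral_mono' (μ := volume) (s := B) Metric.isOpen_ball.measurableSet hpt
  set M := maximalFn Ω f x with hM
  have hvol : volume (Metric.ball x r) = ENNReal.ofReal (4^m) * volume B := by
    rw [hB, Measure.addHaar_ball_center, Measure.addHaar_ball_center _ ((r/2) • e)]
    have := Measure.addHaar_ball_mul_of_pos (volume : Measure (EuclideanSpace ℝ (Fin m))) 0 (r := 4) (by norm_num) (r/4)
    rw [finrank_euclideanSpace_fin] at this
    rw [← this]; congr 2; ring
  have hswap : ∫⁻ y in B, ∫⁻ t in Set.Ioc (0:ℝ) 1, Ω.indicator f (x + t • y) ≤ ENNReal.ofReal (4^m) * volume B * M := by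
    rw [lintegral_lintegral_swap hjm.aemeasurable]
    calc _ ≤ ∫⁻ t in Set.Ioc (0:ℝ) 1, volume (Metric.ball x r) * M := by
          refine setLIntegral_mono' measurableSet_Ioc fun t ht => ?_
          exact (lintegral_mono_set hBsub).trans (scale Ω hΩ f hfm x hr ht.1)
      _ = _ := by rw [setLIntegral_const, hvol]; simp
  have him : Measurable (fun y => ∫⁻ t in Set.Ioc (0:ℝ) 1, Ω.indicator f (x + t • y)) :=
    Measurable.lintegral_prod_right' hjm
  rw [setLIntegral_const, lintegral_const_mul _ (by fun_prop), lintegral_add_left measurable_const,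
    setLIntegral_const, lintegral_const_mul _ him] at hint
  have hV0 : volume B ≠ 0 := (Metric.measure_ball_pos volume _ (by positivity)).ne'
  have hV1 : volume B ≠ ∞ := measure_ball_lt_top.ne
  have h7 : volume B * ENNReal.ofReal (r * ‖A‖ / 8) ≤ volume B * (ENNReal.ofReal C * ENNReal.ofReal (4^m) * (ENNReal.ofReal S + ENNReal.ofReal (r^(n+2)) * M)) := by
    have h1 : (1:ℝ≥0∞) ≤ ENNReal.ofReal (4^m) := by
      rw [ENNReal.one_le_ofReal]; exact one_le_pow₀ (by norm_num)
    calc _ = ENNReal.ofReal (r * ‖A‖ / 8) * volume B := mul_comm _ _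
      _ ≤ _ := hint
      _ ≤ ENNReal.ofReal C * (1 * (ENNReal.ofReal S * volume B) + ENNReal.ofReal (r^(n+2)) * (ENNReal.ofReal (4^m) * volume B * M)) := by
          rw [one_mul]; gcongr
      _ ≤ ENNReal.ofReal C * (ENNReal.ofReal (4^m) * (ENNReal.ofReal S * volume B) + ENNReal.ofReal (r^(n+2)) * (ENNReal.ofReal (4^m) * volume B * M)) := by
          gcongr
      _ = _ := by ring
  have h8 := (ENNReal.mul_le_mul_iff_right hV0 hV1).1 h7
  calc ENNReal.ofReal (r * ‖A‖) = ENNReal.ofReal 8 * ENNReal.ofReal (r * ‖A‖ / 8) := by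
        rw [← ENNReal.ofReal_mul (by norm_num)]; congr 1; ring
    _ ≤ ENNReal.ofReal 8 * (ENNReal.ofReal C * ENNReal.ofReal (4^m) * (ENNReal.ofReal S + ENNReal.ofReal (r^(n+2)) * M)) := by
        gcongr
    _ = _ := by
        rw [← mul_assoc, ← mul_assoc, ← ENNReal.ofReal_mul (by norm_num), ← ENNReal.ofReal_mul (by positivity)]

/-- Pointwise Maz'ya–Shaposhnikova-type interpolation inequality
(Proposition 3.4). -/
theorem pointwise_interpolation (m k : ℕ) (hm : 1 ≤ m) (hk : 1 ≤ k) :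
    ∃ C : ℝ, 0 < C ∧ ∀ (ν : ℕ), 1 ≤ ν →
      ∀ (Ω : Set (EuclideanSpace ℝ (Fin m))), IsOpen Ω →
      ∀ (u : EuclideanSpace ℝ (Fin m) → EuclideanSpace ℝ (Fin ν)),
        ContDiffOn ℝ k u Ω → Bornology.IsBounded (u '' Ω) →
      ∀ (ρ : ℝ), 0 < ρ → ∀ x ∈ Ω, Metric.ball x ρ ⊆ Ω →
        (‖fderivWithin ℝ u Ω x‖₊ : ℝ≥0∞) ≤ ENNReal.ofReal C *
          ((⨆ y ∈ Ω, (‖u y‖₊ : ℝ≥0∞)) ^ (1 - 1 / (k : ℝ)) *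
              (maximalFn Ω
                (fun y => (‖iteratedFDerivWithin ℝ k u Ω y‖₊ : ℝ≥0∞)) x) ^ (1 / (k : ℝ))
            + (⨆ y ∈ Ω, (‖u y‖₊ : ℝ≥0∞)) / ENNReal.ofReal ρ) := by
  obtain rfl | ⟨n, rfl⟩ : k = 1 ∨ ∃ n, k = n + 2 := by
    rcases k with _ | _ | n
    · omega
    · left; rfl
    · right; exact ⟨n, rfl⟩
  · refine ⟨1, one_pos, ?_⟩
    intro ν _ Ω hΩ u hu _ ρ hρ x hx _
    have hfc : ContinuousOn (fun y => (‖iteratedFDerivWithin ℝ 1 u Ω y‖₊ : ℝ≥0∞)) Ω := by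
      have := hu.continuousOn_iteratedFDerivWithin (m := 1) le_rfl hΩ.uniqueDiffOn
      exact this.enorm
    have h := le_max Ω hΩ _ hfc x hx
    have e : (‖iteratedFDerivWithin ℝ 1 u Ω x‖₊ : ℝ≥0∞) = ‖fderivWithin ℝ u Ω x‖₊ := by
      congr 1
      exact NNReal.eq (norm_iteratedFDerivWithin_one u (hΩ.uniqueDiffOn x hx))
    rw [e] at h
    refine h.trans ?_
    simp
  obtain ⟨C, hC, hcore⟩ := core m n
  refine ⟨2 * C, by positivity, ?_⟩
  intro ν _ Ω hΩ u hu hbd ρ hρ x hx hball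
  set A := fderivWithin ℝ u Ω x with hA
  set M := maximalFn Ω (fun y => (‖iteratedFDerivWithin ℝ (n+2) u Ω y‖₊ : ℝ≥0∞)) x with hM
  set S : ℝ≥0∞ := ⨆ y ∈ Ω, (‖u y‖₊ : ℝ≥0∞) with hSdef
  have hle : ∀ z ∈ Ω, (‖u z‖₊ : ℝ≥0∞) ≤ S := fun z hz =>
    le_iSup₂ (f := fun y (_ : y ∈ Ω) => (‖u y‖₊ : ℝ≥0∞)) z hz
  have hStop : S ≠ ∞ := by
    obtain ⟨R, hR⟩ := hbd.exists_norm_le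
    refine ne_top_of_le_ne_top (ENNReal.ofReal_ne_top (r := R)) ?_
    refine iSup₂_le fun y hy => ?_
    have := ENNReal.ofReal_le_ofReal (hR _ ⟨y, hy, rfl⟩)
    rwa [ofReal_norm] at this
  obtain ⟨s, hs⟩ : ∃ s : ℝ, s = S.toReal := ⟨_, rfl⟩
  have hs0 : 0 ≤ s := hs ▸ ENNReal.toReal_nonneg
  have hSs : S = ENNReal.ofReal s := by rw [hs, ENNReal.ofReal_toReal hStop]
  have hSle : ∀ z ∈ Ω, ‖u z‖ ≤ s := by
    intro z hz
    have := hle z hz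
    rw [hSs] at this
    have h2 : ENNReal.ofReal ‖u z‖ ≤ ENNReal.ofReal s := by
      rwa [ofReal_norm]
    exact (ENNReal.ofReal_le_ofReal_iff hs0).1 h2
  have hAe : (‖A‖₊ : ℝ≥0∞) = ENNReal.ofReal ‖A‖ := (ofReal_norm A).symm
  have hk1 : (0:ℝ) < 1 / ((n+2 : ℕ) : ℝ) := by positivity
  have hk2 : (0:ℝ) < 1 - 1 / ((n+2 : ℕ) : ℝ) := by
    have : 1 / ((n+2 : ℕ) : ℝ) < 1 := by
      rw [div_lt_one (by positivity)]; push_cast; linarith [(Nat.cast_nonneg n : (0:ℝ) ≤ n)]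
    linarith
  rcases hs0.eq_or_lt with h0 | hspos
  · have : A = 0 := by
      have h1 : Set.EqOn u (fun _ => 0) Ω := by
        intro z hz
        have := hSle z hz
        rw [← h0] at this
        exact norm_le_zero_iff.1 this
      rw [hA, fderivWithin_congr h1 (h1 hx)]
      simp
    simp [this]
  rcases eq_or_ne M ∞ with hMt | hMt
  · rw [hMt, ENNReal.top_rpow_of_pos hk1, ENNReal.mul_top, top_add, ENNReal.mul_top]
    · exact le_top
    · simp [hC]
    · rw [hSs]
      exact (ENNReal.rpow_pos (by simpa using hspos) (by simp)).ne'
  obtain ⟨μ, hμ⟩ : ∃ s : ℝ, s = M.toReal := ⟨_, rfl⟩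
  have hμ0 : 0 ≤ μ := hμ ▸ ENNReal.toReal_nonneg
  have hMμ : M = ENNReal.ofReal μ := by rw [hμ, ENNReal.ofReal_toReal hMt]
  have hreal : ∀ r, 0 < r → r ≤ ρ → r * ‖A‖ ≤ C * (s + r^(n+2) * μ) := by
    intro r hr hrρ
    have := hcore ν Ω hΩ u hu s hSle r hr x hx ((Metric.ball_subset_ball hrρ).trans hball)
    rw [← hM, hMμ, ← ENNReal.ofReal_mul (by positivity), ← ENNReal.ofReal_add hs0 (by positivity),
      ← ENNReal.ofReal_mul hC.le] at this
    exact (ENNReal.ofReal_le_ofReal_iff (by positivity)).1 this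
  rw [hAe, hSs, hMμ, ENNReal.ofReal_rpow_of_nonneg hs0 hk2.le, ENNReal.ofReal_rpow_of_nonneg hμ0 hk1.le,
    ← ENNReal.ofReal_mul (by positivity), ← ENNReal.ofReal_div_of_pos hρ,
    ← ENNReal.ofReal_add (by positivity) (by positivity), ← ENNReal.ofReal_mul (by positivity)]
  apply ENNReal.ofReal_le_ofReal
  have hX : 0 ≤ s ^ (1 - 1 / ((n+2 : ℕ) : ℝ)) * μ ^ (1 / ((n+2 : ℕ) : ℝ)) := by positivity
  by_cases hcase : ρ^(n+2) * μ ≤ s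
  · have h1 := hreal ρ hρ le_rfl
    have h2 : ‖A‖ ≤ 2 * C * (s / ρ) := by
      rw [← mul_div_assoc, le_div_iff₀ hρ]
      nlinarith
    refine h2.trans ?_
    gcongr
    linarith
  · push Not at hcase
    have hμpos : 0 < μ := by
      rcases hμ0.eq_or_lt with h | h
      · rw [← h] at hcase; simp at hcase; linarith
      · exact h
    set r := (s / μ) ^ (1 / ((n+2 : ℕ) : ℝ)) with hr
    have hrpos : 0 < r := by positivity
    have hrk : r ^ (n+2) = s / μ := by
      rw [hr, one_div, Real.rpow_inv_natCast_pow (by positivity) (by omega)]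
    have hrρ : r ≤ ρ := by
      refine le_of_pow_le_pow_left₀ (n := n+2) (by omega) hρ.le ?_
      rw [hrk, div_le_iff₀ hμpos]; exact hcase.le
    have h1 := hreal r hrpos hrρ
    rw [hrk, div_mul_cancel₀ _ hμpos.ne'] at h1
    have h3 : r * (s ^ (1 - 1 / ((n+2 : ℕ) : ℝ)) * μ ^ (1 / ((n+2 : ℕ) : ℝ))) = s := by
      rw [hr, Real.div_rpow hs0 hμ0, Real.rpow_sub hspos, Real.rpow_one]
      have a : s ^ (1 / ((n+2 : ℕ) : ℝ)) ≠ 0 := by positivity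
      have b : μ ^ (1 / ((n+2 : ℕ) : ℝ)) ≠ 0 := by positivity
      field_simp
    have h2 : ‖A‖ ≤ 2 * C * (s ^ (1 - 1 / ((n+2 : ℕ) : ℝ)) * μ ^ (1 / ((n+2 : ℕ) : ℝ))) := by
      refine le_of_mul_le_mul_left ?_ hrpos
      calc _ ≤ _ := h1
        _ = 2 * C * s := by ring
        _ = 2 * C * (r * (s ^ (1 - 1 / ((n+2 : ℕ) : ℝ)) * μ ^ (1 / ((n+2 : ℕ) : ℝ)))) := by rw [h3]
        _ = _ := by ring
    refine h2.trans ?_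
    gcongr
    have : 0 ≤ s / ρ := by positivity
    linarith
end

section
/- For all integers m ≥ 1, k ≥ 1 and every real p with 1 < p < ∞, there exist constants C > 0 and κ > 0 such that the following holds for every integer ν ≥ 1: if Ω ⊆ ℝ^m is open, u : Ω → ℝ^ν is bounded and k-times continuously differentiable, t > 0 and ρ > 0 satisfy (sup_{Ω}‖u‖)^k ≤ κ t^k ρ^k, and K ⊆ ℝ^m is a measurable set such that {x + y : x ∈ K, ‖y‖ < ρ} ⊆ Ω, then ∫_K (‖Du‖ − t)_+^{kp} ≤ C ∫_Ω ( (sup_{Ω}‖u‖)^{k−1} ‖D^k u‖ − κ t^k )_+^{p}. -/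
open MeasureTheory Filter Topology ENNReal

theorem tgn_small (j : ℕ) : ∃ C : ℝ, 0 < C ∧ ∀ (G : ℕ → ℝ → ℝ) (a b S : ℝ), a < b →
    (∀ i < j, ∀ x ∈ Set.Icc a b, HasDerivAt (G i) (G (i+1) x) x) →
    (∀ x ∈ Set.Icc a b, |G 0 x| ≤ S) →
    ∃ ξ ∈ Set.Icc a b, |G j ξ| * (b-a)^j ≤ C * S := by
  induction j with
  | zero =>
    refine ⟨1, one_pos, fun G a b S hab _ h0 => ⟨a, ⟨le_rfl, hab.le⟩, ?_⟩⟩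
    simpa using h0 a ⟨le_rfl, hab.le⟩
  | succ j ih =>
    obtain ⟨C, hC, H⟩ := ih
    refine ⟨2 * 3^(j+1) * C, by positivity, fun G a b S hab hd h0 => ?_⟩
    obtain ⟨x, hx, hxb⟩ := H G a (a + (b-a)/3) S (by linarith)
      (fun i hi x hx => hd i (by omega) x ⟨hx.1, by linarith [hx.2]⟩)
      (fun x hx => h0 x ⟨hx.1, by linarith [hx.2]⟩)
    obtain ⟨y, hy, hyb⟩ := H G (b - (b-a)/3) b S (by linarith)
      (fun i hi x hx => hd i (by omega) x ⟨by linarith [hx.1], hx.2⟩)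
      (fun x hx => h0 x ⟨by linarith [hx.1], hx.2⟩)
    have hxy : (b-a)/3 ≤ y - x := by linarith [hx.2, hy.1]
    have hlt : x < y := by linarith
    obtain ⟨c, hc, hce⟩ := exists_hasDerivAt_eq_slope (G j) (G (j+1)) hlt
      (fun z hz => (hd j (by omega) z
        ⟨by linarith [hx.1, hz.1], by linarith [hy.2, hz.2]⟩).continuousAt.continuousWithinAt)
      (fun z hz => hd j (by omega) z ⟨by linarith [hx.1, hz.1], by linarith [hy.2, hz.2]⟩)
    refine ⟨c, ⟨by linarith [hx.1, hc.1], by linarith [hy.2, hc.2]⟩, ?_⟩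
    have e1 : a + (b-a)/3 - a = (b-a)/3 := by ring
    have e2 : b - (b - (b-a)/3) = (b-a)/3 := by ring
    rw [e1] at hxb
    rw [e2] at hyb
    have hl : 0 < (b-a)/3 := by linarith
    have h1 : |G (j+1) c| * ((b-a)/3) ≤ |G j y| + |G j x| := by
      calc |G (j+1) c| * ((b-a)/3) ≤ |G (j+1) c| * (y-x) := by gcongr
        _ = |G j y - G j x| := by
          rw [hce, abs_div, abs_of_pos (sub_pos.2 hlt)]
          field_simp [(sub_pos.2 hlt).ne']
        _ ≤ _ := abs_sub _ _
    have h2 : |G (j+1) c| * ((b-a)/3) * ((b-a)/3)^j ≤ 2 * (C * S) := by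
      have := mul_le_mul_of_nonneg_right h1 (pow_pos hl j).le
      linarith
    have e3 : |G (j+1) c| * (b-a)^(j+1) = 3^(j+1) * (|G (j+1) c| * ((b-a)/3) * ((b-a)/3)^j) := by
      rw [mul_assoc, ← pow_succ', div_pow]; field_simp
    rw [e3]
    calc _ ≤ 3^(j+1) * (2 * (C * S)) := by gcongr
      _ = _ := by ring

theorem tgn_interp (d : ℕ) : ∀ n : ℕ, ∃ A : ℝ, 0 < A ∧ ∀ (G : ℕ → ℝ → ℝ) (a b S : ℝ), a < b →
    (∀ i < n+d+1, ∀ x ∈ Set.Icc a b, HasDerivAt (G i) (G (i+1) x) x) →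
    ContinuousOn (G (n+d+1)) (Set.Icc a b) →
    (∀ x ∈ Set.Icc a b, |G 0 x| ≤ S) →
    ∀ y ∈ Set.Icc a b, |G n y| * (b-a)^n ≤ A * (S + (b-a)^(n+d) * ∫ s in a..b, |G (n+d+1) s|) := by
  induction d with
  | zero =>
    intro n
    obtain ⟨C, hC, H⟩ := tgn_small n
    refine ⟨C + 1, by positivity, fun G a b S hab hd hc h0 y hy => ?_⟩
    obtain ⟨x, hx, hxb⟩ := H G a b S hab (fun i hi => hd i (by omega)) h0
    have hS : 0 ≤ S := (abs_nonneg _).trans (h0 a ⟨le_rfl, hab.le⟩)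
    have hl : 0 < b - a := by linarith
    simp only [add_zero] at *
    have hsub : Set.uIcc x y ⊆ Set.Icc a b := Set.uIcc_subset_Icc hx hy
    have hint : IntervalIntegrable (G (n+1)) volume a b :=
      ContinuousOn.intervalIntegrable (by rwa [Set.uIcc_of_le hab.le])
    have hint' : IntervalIntegrable (G (n+1)) volume x y :=
      ContinuousOn.intervalIntegrable (hc.mono hsub)
    have hftc := intervalIntegral.integral_eq_sub_of_hasDerivAt (f := G n) (f' := G (n+1))
      (fun z hz => hd n (by omega) z (hsub hz)) hint'
    have hb : |G n y - G n x| ≤ ∫ s in a..b, |G (n+1) s| := by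
      rw [← hftc]
      have h1 := intervalIntegral.norm_integral_le_integral_norm_uIoc (f := G (n+1)) (a := x) (b := y) (μ := volume)
      refine h1.trans ?_
      rw [intervalIntegral.integral_of_le hab.le]
      refine setIntegral_mono_set ?_ ?_ ?_
      · exact (hint.abs).1
      · exact Eventually.of_forall fun _ => abs_nonneg _
      · refine LE.le.eventuallyLE ?_
        rw [Set.uIoc]
        exact Set.Ioc_subset_Ioc (le_min hx.1 hy.1) (max_le hx.2 hy.2)
    set I := ∫ s in a..b, |G (n+1) s|
    have hI : 0 ≤ I := (abs_nonneg _).trans hb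
    have h2 : |G n y| ≤ |G n x| + I := by
      have := abs_add_le (G n x) (G n y - G n x)
      rw [add_sub_cancel] at this
      linarith
    have hp : 0 ≤ (b-a)^n * I := by positivity
    have h3 := mul_le_mul_of_nonneg_right h2 (pow_pos hl n).le
    nlinarith [mul_nonneg hC.le hp]
  | succ d ih =>
    intro n
    obtain ⟨C, hC, H⟩ := tgn_small n
    obtain ⟨A, hA, HA⟩ := ih (n+1)
    refine ⟨C + A, by positivity, fun G a b S hab hd hc h0 y hy => ?_⟩
    obtain ⟨x, hx, hxb⟩ := H G a b S hab (fun i hi => hd i (by omega)) h0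
    have hS : 0 ≤ S := (abs_nonneg _).trans (h0 a ⟨le_rfl, hab.le⟩)
    have hl : 0 < b - a := by linarith
    have e : n + 1 + d = n + (d + 1) := by ring
    rw [e] at HA
    have HA' := HA G a b S hab hd hc h0
    set I := ∫ s in a..b, |G (n+(d+1)+1) s|
    have hI : 0 ≤ I := intervalIntegral.integral_nonneg hab.le fun _ _ => abs_nonneg _
    set Q := S + (b-a)^(n+(d+1)) * I
    have hQ : S ≤ Q := le_add_of_nonneg_right (by positivity)
    have hbd : ∀ z ∈ Set.Icc a b, ‖G (n+1) z‖ ≤ A * Q / (b-a)^(n+1) := fun z hz => by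
      rw [le_div_iff₀ (by positivity)]; exact HA' z hz
    have hmv := Convex.norm_image_sub_le_of_norm_hasDerivWithin_le (f := G n) (f' := G (n+1))
      (s := Set.Icc a b) (fun z hz => (hd n (by omega) z hz).hasDerivWithinAt) hbd (convex_Icc a b) hx hy
    have hxy : ‖y - x‖ ≤ b - a := by
      rw [Real.norm_eq_abs, abs_le]; constructor <;> linarith [hx.1, hx.2, hy.1, hy.2]
    have h2 : |G n y| ≤ |G n x| + A * Q / (b-a)^(n+1) * (b-a) := by
      have h := abs_add_le (G n x) (G n y - G n x)
      rw [add_sub_cancel] at h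
      rw [Real.norm_eq_abs] at hmv
      have : A * Q / (b-a)^(n+1) * ‖y - x‖ ≤ A * Q / (b-a)^(n+1) * (b-a) := by gcongr
      linarith
    have h3 := mul_le_mul_of_nonneg_right h2 (pow_pos hl n).le
    have e4 : A * Q / (b-a)^(n+1) * (b-a) * (b-a)^n = A * Q := by
      rw [mul_assoc, ← pow_succ']; field_simp
    nlinarith [mul_le_mul_of_nonneg_left hQ hC.le]

theorem tgn_interp_vec (k : ℕ) (hk : 2 ≤ k) : ∃ A : ℝ, 0 < A ∧ ∀ (F : Type) [NormedAddCommGroup F]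
    [NormedSpace ℝ F] (V : ℕ → ℝ → F) (x r S : ℝ), 0 < r →
    (∀ i < k, ∀ y ∈ Set.Icc (x-r) (x+r), HasDerivAt (V i) (V (i+1) y) y) →
    ContinuousOn (V k) (Set.Icc (x-r) (x+r)) →
    (∀ y ∈ Set.Icc (x-r) (x+r), ‖V 0 y‖ ≤ S) →
    ∀ y ∈ Set.Icc (x-r) (x+r),
      ‖V 1 y‖ * r ≤ A * (S + r^(k-1) * ∫ s in (x-r)..(x+r), ‖V k s‖) := by
  obtain ⟨A, hA, H⟩ := tgn_interp (k-2) 1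
  have e1 : 1 + (k-2) + 1 = k := by omega
  have e2 : 1 + (k-2) = k - 1 := by omega
  rw [e1, e2] at H
  refine ⟨A * 2^(k-1), by positivity, fun F _ _ V x r S hr hd hc h0 y hy => ?_⟩
  obtain ⟨L, hL, hLy⟩ := exists_dual_vector'' ℝ (V 1 y)
  have hLb : ∀ z : F, |L z| ≤ ‖z‖ := fun z => by
    have := L.le_of_opNorm_le hL z
    simpa using this
  have hab : x - r < x + r := by linarith
  have h := H (fun j s => L (V j s)) (x-r) (x+r) S hab
    (fun i hi z hz => L.hasFDerivAt.comp_hasDerivAt z (hd i hi z hz))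
    (L.continuous.comp_continuousOn hc) (fun z hz => (hLb _).trans (h0 z hz)) y hy
  simp only [hLy] at h
  have hS : 0 ≤ S := (norm_nonneg _).trans (h0 y hy)
  have hI : ∫ s in (x-r)..(x+r), |L (V k s)| ≤ ∫ s in (x-r)..(x+r), ‖V k s‖ := by
    refine intervalIntegral.integral_mono_on hab.le ?_ ?_ (fun s _ => hLb _)
    · exact ContinuousOn.intervalIntegrable (by
        rw [Set.uIcc_of_le hab.le]; exact (L.continuous.comp_continuousOn hc).abs)
    · exact ContinuousOn.intervalIntegrable (by
        rw [Set.uIcc_of_le hab.le]; exact hc.norm)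
  have e3 : x + r - (x - r) = 2 * r := by ring
  rw [e3] at h
  have h' : ‖V 1 y‖ * (2*r) ≤ A * (S + (2*r)^(k-1) * ∫ s in (x-r)..(x+r), ‖V k s‖) := by
    calc _ = |((‖V 1 y‖ : ℝ))| * (2*r)^1 := by rw [abs_of_nonneg (norm_nonneg _), pow_one]
      _ ≤ _ := h
      _ ≤ _ := by gcongr
  have hI0 : 0 ≤ ∫ s in (x-r)..(x+r), ‖V k s‖ :=
    intervalIntegral.integral_nonneg hab.le fun _ _ => norm_nonneg _
  have h2 : (1:ℝ) ≤ 2^(k-1) := one_le_pow₀ (by norm_num)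
  calc ‖V 1 y‖ * r ≤ ‖V 1 y‖ * (2*r) := by gcongr; linarith
    _ ≤ _ := h'
    _ ≤ A * (2^(k-1) * S + (2*r)^(k-1) * ∫ s in (x-r)..(x+r), ‖V k s‖) := by
      gcongr; nlinarith
    _ = _ := by rw [mul_pow]; ring

theorem tgn_local (k : ℕ) (hk : 2 ≤ k) (p : ℝ) (hp : 1 ≤ p) : ∃ C κ : ℝ, 0 < C ∧ 0 < κ ∧
    ∀ (F : Type) [NormedAddCommGroup F] [NormedSpace ℝ F] (V : ℕ → ℝ → F) (Ω : Set ℝ) (S t ρ x : ℝ),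
    IsOpen Ω → (∀ i < k, ∀ y ∈ Ω, HasDerivAt (V i) (V (i+1) y) y) → ContinuousOn (V k) Ω →
    (∀ y ∈ Ω, ‖V 0 y‖ ≤ S) → 0 < t → 0 < ρ → S^k ≤ κ * t^k * ρ^k →
    Metric.ball x ρ ⊆ Ω → t < ‖V 1 x‖ →
    ∃ r, 0 < r ∧ r ≤ ρ/2 ∧
      ∫⁻ y in Metric.closedBall x r, ENNReal.ofReal (‖V 1 y‖ ^ ((k:ℝ)*p)) ≤
        ENNReal.ofReal C * ∫⁻ y in Metric.closedBall x r,
          ENNReal.ofReal ((max (S^(k-1) * ‖V k y‖ - κ * t^k) 0)^p) := by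
  obtain ⟨A, hA, H⟩ := tgn_interp_vec k hk
  refine ⟨(4 * (2*A)^k)^p, 1 / (4 * (4*A)^k), by positivity, by positivity, ?_⟩
  set κ := 1 / (4 * (4*A)^k) with hκ
  have hκ0 : 0 < κ := by positivity
  intro F _ _ V Ω S t ρ x hΩ hd hc h0 ht hρ hS hball htx
  have hxΩ : x ∈ Ω := hball (Metric.mem_ball_self hρ)
  have hS0 : 0 ≤ S := (norm_nonneg _).trans (h0 x hxΩ)
  have hsub : ∀ r ≤ ρ/2, Set.Icc (x-r) (x+r) ⊆ Ω := fun r hr => by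
    rw [← Real.closedBall_eq_Icc]
    exact (Metric.closedBall_subset_ball (by linarith)).trans hball
  have Hr : ∀ r, 0 < r → r ≤ ρ/2 → ∀ y ∈ Set.Icc (x-r) (x+r),
      ‖V 1 y‖ * r ≤ A * (S + r^(k-1) * ∫ s in (x-r)..(x+r), ‖V k s‖) := fun r hr hr2 =>
    H F V x r S hr (fun i hi y hy => hd i hi y (hsub r hr2 hy)) (hc.mono (hsub r hr2))
      (fun y hy => h0 y (hsub r hr2 hy))
  have hk0 : k ≠ 0 := by omega
  have hk1 : k - 1 ≠ 0 := by omega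
  -- S is positive
  have hSpos : 0 < S := by
    rcases hS0.lt_or_eq with h | h
    · exact h
    · exfalso
      have h1 := hd 0 (by omega) x hxΩ
      have h2 : V 0 =ᶠ[𝓝 x] fun _ => 0 := by
        filter_upwards [hΩ.mem_nhds hxΩ] with y hy
        have := h0 y hy
        rw [← h] at this
        simpa using this
      have h3 := (hasDerivAt_const x (0:F)).congr_of_eventuallyEq h2
      have h4 := h1.unique h3
      simp only [zero_add] at h4
      rw [h4, norm_zero] at htx
      linarith
  have hSt : 4 * A * S ≤ t * ρ := by
    have : (4 * A * S)^k ≤ (t*ρ)^k := by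
      have h1 : (4*A*S)^k = (4*A)^k * S^k := by rw [mul_pow]
      have h2 : (4*A)^k * S^k ≤ (4*A)^k * (κ * t^k * ρ^k) := by gcongr
      have h3 : (4*A)^k * (κ * t^k * ρ^k) = (t*ρ)^k / 4 := by
        rw [hκ, mul_pow t]; field_simp
      have h4 : 0 ≤ (t*ρ)^k := by positivity
      linarith
    exact le_of_pow_le_pow_left₀ hk0 (by positivity) this
  -- balanced radius
  set φ : ℝ → ℝ := fun r => r^(k-1) * ∫ s in (x-r)..(x+r), ‖V k s‖ with hφ
  have hρ2 : 0 < ρ/2 := by linarith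
  have hfint : ∀ a ∈ Set.Icc (x-ρ/2) (x+ρ/2), ∀ b ∈ Set.Icc (x-ρ/2) (x+ρ/2),
      IntervalIntegrable (fun s => ‖V k s‖) volume a b := fun a ha b hb =>
    ContinuousOn.intervalIntegrable
      ((hc.norm).mono ((Set.uIcc_subset_Icc ha hb).trans (hsub _ le_rfl)))
  have hφc : ContinuousOn φ (Set.Icc 0 (ρ/2)) := by
    have hP : ContinuousOn (fun y => ∫ s in (x-ρ/2)..y, ‖V k s‖) (Set.Icc (x-ρ/2) (x+ρ/2)) := by
      have := intervalIntegral.continuousOn_primitive_interval (μ := volume)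
        (f := fun s => ‖V k s‖) (a := x-ρ/2) (b := x+ρ/2) (by
          rw [Set.uIcc_of_le (by linarith)]
          exact ((hc.norm).mono (hsub _ le_rfl)).integrableOn_Icc)
      rwa [Set.uIcc_of_le (by linarith)] at this
    have h1 : ContinuousOn (fun r => (∫ s in (x-ρ/2)..(x+r), ‖V k s‖) -
        ∫ s in (x-ρ/2)..(x-r), ‖V k s‖) (Set.Icc 0 (ρ/2)) := by
      refine ContinuousOn.sub (hP.comp (by fun_prop) ?_) (hP.comp (by fun_prop) ?_)
      · intro r hr; constructor <;> linarith [hr.1, hr.2]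
      · intro r hr; constructor <;> linarith [hr.1, hr.2]
    refine ContinuousOn.mul (by fun_prop) (h1.congr ?_)
    intro r hr
    have m1 : x - ρ/2 ∈ Set.Icc (x-ρ/2) (x+ρ/2) := ⟨le_rfl, by linarith⟩
    exact (intervalIntegral.integral_interval_sub_left
      (hfint _ m1 _ ⟨by linarith [hr.1], by linarith [hr.2]⟩)
      (hfint _ m1 _ ⟨by linarith [hr.2], by linarith [hr.1]⟩)).symm
  have hφ0 : φ 0 = 0 := by simp [hφ, hk1]
  have hφ1 : S ≤ φ (ρ/2) := by
    by_contra hlt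
    push Not at hlt
    have h1 := Hr (ρ/2) hρ2 le_rfl x ⟨by linarith, by linarith⟩
    have h2 : A * (S + φ (ρ/2)) < A * (2 * S) := by
      apply mul_lt_mul_of_pos_left _ hA; linarith
    have h3 : t * (ρ/2) < ‖V 1 x‖ * (ρ/2) := by gcongr
    change _ ≤ A * (S + φ (ρ/2)) at h1
    nlinarith
  obtain ⟨r, hr, hrS⟩ := intermediate_value_Icc hρ2.le hφc
    (show S ∈ Set.Icc (φ 0) (φ (ρ/2)) from ⟨by rw [hφ0]; exact hS0, hφ1⟩)
  have hr0 : 0 < r := by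
    rcases hr.1.lt_or_eq with h | h
    · exact h
    · rw [← h, hφ0] at hrS; linarith
  refine ⟨r, hr0, hr.2, ?_⟩
  have hr2 := hr.2
  set J := Set.Icc (x-r) (x+r) with hJ
  have hJΩ : J ⊆ Ω := hsub r hr2
  rw [Real.closedBall_eq_Icc]
  set lam := 2 * A * S / r with hlam
  have hV1 : ∀ y ∈ J, ‖V 1 y‖ ≤ lam := fun y hy => by
    have h1 := Hr r hr0 hr2 y hy
    change _ ≤ A * (S + φ r) at h1
    rw [hrS] at h1
    rw [hlam, le_div_iff₀ hr0]; linarith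
  have hxJ : x ∈ J := ⟨by linarith, by linarith⟩
  have htl : t < lam := htx.trans_le (hV1 x hxJ)
  have hl0 : 0 < lam := ht.trans htl
  set w : ℝ → ℝ := fun y => max (S^(k-1) * ‖V k y‖ - κ * t^k) 0 with hw
  have hwc : ContinuousOn w J := by
    have := (hc.norm).mono hJΩ
    exact ((continuousOn_const.mul this).sub continuousOn_const).sup continuousOn_const
  have hw0 : ∀ y, 0 ≤ w y := fun y => le_max_right _ _
  have hwp : ContinuousOn (fun y => w y ^ p) J := hwc.rpow_const fun _ _ => Or.inr (by linarith)
  have hvol : volume.real J = 2 * r := by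
    rw [hJ, Real.volume_real_Icc_of_le (by linarith)]; ring
  -- main estimate
  have hkey : lam^k ≤ (4 * (2*A)^k) * ⨍ y in J, w y := by
    have hint : S^(k-1) * ∫ y in J, ‖V k y‖ ≤ (∫ y in J, w y) + 2 * r * (κ * t^k) := by
      rw [← integral_const_mul]
      have hcst : ∫ y in J, κ * t^k = 2 * r * (κ * t^k) := by
        rw [setIntegral_const, hvol, smul_eq_mul]
      rw [← hcst, ← integral_add hwc.integrableOn_Icc (continuousOn_const.integrableOn_Icc)]
      refine setIntegral_mono_on
        (ContinuousOn.integrableOn_Icc (continuousOn_const.mul ((hc.norm).mono hJΩ)))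
        (ContinuousOn.integrableOn_Icc (hwc.add continuousOn_const)) measurableSet_Icc ?_
      intro y _
      have := le_max_left (S^(k-1) * ‖V k y‖ - κ * t^k) 0
      change _ ≤ w y at this
      linarith
    have hφr : r^(k-1) * ∫ y in J, ‖V k y‖ = S := by
      rw [hJ, integral_Icc_eq_integral_Ioc, ← intervalIntegral.integral_of_le (by linarith)]
      exact hrS
    rw [setAverage_eq, hvol, smul_eq_mul]
    set I := ∫ y in J, w y
    have hSk : S^k = r^(k-1) * (S^(k-1) * ∫ y in J, ‖V k y‖) := by
      calc S^k = S^(k-1) * S := by rw [← pow_succ, Nat.sub_add_cancel (by omega)]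
        _ = S^(k-1) * (r^(k-1) * ∫ y in J, ‖V k y‖) := by rw [hφr]
        _ = _ := by ring
    have hlk : lam^k * r = (2*A)^k * (S^(k-1) * ∫ y in J, ‖V k y‖) := by
      have e : r^k = r^(k-1) * r := by rw [← pow_succ, Nat.sub_add_cancel (by omega)]
      rw [hlam, div_pow, mul_pow, hSk, e]
      field_simp
    have htk : t^k ≤ lam^k := by gcongr
    have hc1 : (2*A)^k * κ ≤ 1/8 := by
      have e : (4*A)^k = 2^k * (2*A)^k := by rw [← mul_pow]; ring_nf
      have h2 : (2:ℝ) ≤ 2^k := by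
        calc (2:ℝ) = 2^1 := by norm_num
          _ ≤ 2^k := pow_le_pow_right₀ (by norm_num) (by omega)
      have hpos : 0 < (2*A)^k := by positivity
      rw [hκ, e, mul_one_div, div_le_div_iff₀ (by positivity) (by norm_num)]
      nlinarith
    have h5 : lam^k * r ≤ (2*A)^k * (I + 2 * r * (κ * t^k)) := by
      rw [hlk]; gcongr
    have h6 : (2*A)^k * (2 * r * (κ * t^k)) ≤ 1/4 * (lam^k * r) := by
      calc _ = ((2*A)^k * κ) * (2 * r * t^k) := by ring
        _ ≤ 1/8 * (2 * r * lam^k) := by gcongr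
        _ = _ := by ring
    have h7 : lam^k * r ≤ 2 * ((2*A)^k * I) := by
      have : 0 < lam^k * r := by positivity
      nlinarith
    have e8 : 4 * (2*A)^k * ((2*r)⁻¹ * I) = 2 * ((2*A)^k * I) / r := by field_simp; ring
    rw [e8, le_div_iff₀ hr0]; exact h7
  have hJens : (⨍ y in J, w y)^p ≤ ⨍ y in J, w y ^ p := by
    refine (convexOn_rpow hp).map_set_average_le
      (Real.continuous_rpow_const (by linarith)).continuousOn isClosed_Ici ?_ ?_ ?_ ?_ ?_
    · rw [hJ, Real.volume_Icc]; simp; linarith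
    · rw [hJ, Real.volume_Icc]; exact ENNReal.ofReal_ne_top
    · exact Eventually.of_forall hw0
    · exact hwc.integrableOn_Icc
    · exact hwp.integrableOn_Icc
  have hav0 : 0 ≤ ⨍ y in J, w y := by
    rw [setAverage_eq]
    exact smul_nonneg (by positivity) (integral_nonneg hw0)
  have hfin : 2 * r * lam^((k:ℝ)*p) ≤ (4 * (2*A)^k)^p * ∫ y in J, w y ^ p := by
    rw [Real.rpow_mul hl0.le, Real.rpow_natCast]
    have h1 : (lam^k)^p ≤ (4 * (2*A)^k)^p * ⨍ y in J, w y ^ p := by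
      calc (lam^k)^p ≤ ((4 * (2*A)^k) * ⨍ y in J, w y)^p := by gcongr
        _ = (4 * (2*A)^k)^p * (⨍ y in J, w y)^p := Real.mul_rpow (by positivity) hav0
        _ ≤ _ := by gcongr
    rw [setAverage_eq, hvol, smul_eq_mul] at h1
    calc 2 * r * (lam^k)^p
        ≤ 2 * r * ((4 * (2*A)^k)^p * ((2*r)⁻¹ * ∫ y in J, w y ^ p)) := by gcongr
      _ = _ := by field_simp
  calc ∫⁻ y in J, ENNReal.ofReal (‖V 1 y‖ ^ ((k:ℝ)*p))
      ≤ ∫⁻ y in J, ENNReal.ofReal (lam ^ ((k:ℝ)*p)) := by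
        refine setLIntegral_mono' measurableSet_Icc fun y hy => ENNReal.ofReal_le_ofReal ?_
        have := hV1 y hy
        gcongr
    _ = ENNReal.ofReal (2 * r * lam^((k:ℝ)*p)) := by
        rw [setLIntegral_const, hJ, Real.volume_Icc, mul_comm, ← ENNReal.ofReal_mul (by linarith)]
        congr 1; ring
    _ ≤ ENNReal.ofReal ((4 * (2*A)^k)^p * ∫ y in J, w y ^ p) := ENNReal.ofReal_le_ofReal hfin
    _ = _ := by
        rw [ENNReal.ofReal_mul (by positivity), ofReal_integral_eq_lintegral_ofReal
          hwp.integrableOn_Icc (Eventually.of_forall fun y => Real.rpow_nonneg (hw0 y) p)]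

theorem tgn_oneD (k : ℕ) (hk : 1 ≤ k) (p : ℝ) (hp : 1 ≤ p) : ∃ C κ : ℝ, 0 < C ∧ 0 < κ ∧
    ∀ (F : Type) [NormedAddCommGroup F] [NormedSpace ℝ F] (V : ℕ → ℝ → F) (Ω : Set ℝ) (S t ρ : ℝ),
    IsOpen Ω → (∀ i < k, ∀ y ∈ Ω, HasDerivAt (V i) (V (i+1) y) y) → ContinuousOn (V k) Ω →
    (∀ y ∈ Ω, ‖V 0 y‖ ≤ S) → 0 < t → 0 < ρ → S^k ≤ κ * t^k * ρ^k →
    ∀ K : Set ℝ, MeasurableSet K → (∀ x ∈ K, Metric.ball x ρ ⊆ Ω) → (∀ x ∈ K, t < ‖V 1 x‖) →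
      ∫⁻ y in K, ENNReal.ofReal (‖V 1 y‖ ^ ((k:ℝ)*p)) ≤
        ENNReal.ofReal C * ∫⁻ y in Ω,
          ENNReal.ofReal ((max (S^(k-1) * ‖V k y‖ - κ * t^k) 0)^p) := by
  rcases hk.eq_or_lt with rfl | hk2
  · refine ⟨2^p, 1/2, by positivity, by norm_num, ?_⟩
    intro F _ _ V Ω S t ρ hΩ hd hc h0 ht hρ hS K hKm hK hKt
    have hKΩ : K ⊆ Ω := fun x hx => hK x hx (Metric.mem_ball_self hρ)
    rw [← lintegral_const_mul' _ _ ENNReal.ofReal_ne_top]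
    refine le_trans ?_ (lintegral_mono_set hKΩ)
    refine setLIntegral_mono' hKm fun y hy => ?_
    rw [← ENNReal.ofReal_mul (by positivity)]
    apply ENNReal.ofReal_le_ofReal
    rw [← Real.mul_rpow (by norm_num) (le_max_right _ _)]
    simp only [Nat.cast_one, one_mul, Nat.sub_self, pow_zero, pow_one]
    have h1 := hKt y hy
    have h2 := le_max_left (‖V 1 y‖ - 1/2*t) 0
    gcongr
    linarith
  · obtain ⟨C, κ, hC, hκ, H⟩ := tgn_local k hk2 p hp
    obtain ⟨N, τ, hτ, hN⟩ := HasBesicovitchCovering.no_satelliteConfig (α := ℝ)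
    refine ⟨(N+1) * C, κ, by positivity, hκ, ?_⟩
    intro F _ _ V Ω S t ρ hΩ hd hc h0 ht hρ hS K hKm hK hKt
    have H' := fun x : K => H F V Ω S t ρ x hΩ hd hc h0 ht hρ hS (hK x x.2) (hKt x x.2)
    choose r hr0 hr2 hr using H'
    obtain ⟨s, hs, hcov⟩ := Besicovitch.exist_disjoint_covering_families hτ hN
      (⟨fun x : K => (x:ℝ), r, hr0, ρ/2, hr2⟩ : Besicovitch.BallPackage K ℝ)
    simp only [Subtype.range_coe_subtype, Set.ofPred_mem_eq] at hs hcov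
    set W : ℝ → ℝ≥0∞ := fun y => ENNReal.ofReal ((max (S^(k-1) * ‖V k y‖ - κ * t^k) 0)^p)
    set f : ℝ → ℝ≥0∞ := fun y => ENNReal.ofReal (‖V 1 y‖ ^ ((k:ℝ)*p))
    have hcount : ∀ i, (s i).Countable := fun i => by
      refine (hs i).countable_of_nonempty_interior fun x _ => ?_
      refine ⟨x, Metric.ball_subset_interior_closedBall (Metric.mem_ball_self (hr0 x))⟩
    have hfam : ∀ i, ∫⁻ y in ⋃ j ∈ s i, Metric.closedBall (j:ℝ) (r j), f y ≤
        ENNReal.ofReal C * ∫⁻ y in Ω, W y := fun i => by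
      rw [lintegral_biUnion (hcount i) (fun _ _ => measurableSet_closedBall) (hs i)]
      calc ∑' j : s i, ∫⁻ y in Metric.closedBall ((j:K):ℝ) (r j), f y
          ≤ ∑' j : s i, ENNReal.ofReal C * ∫⁻ y in Metric.closedBall ((j:K):ℝ) (r j), W y :=
            ENNReal.tsum_le_tsum fun j => hr j
        _ = ENNReal.ofReal C * ∫⁻ y in ⋃ j ∈ s i, Metric.closedBall (j:ℝ) (r j), W y := by
            rw [ENNReal.tsum_mul_left,
              lintegral_biUnion (hcount i) (fun _ _ => measurableSet_closedBall) (hs i)]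
        _ ≤ _ := by
            gcongr
            refine Set.iUnion₂_subset fun j _ => ?_
            refine (Metric.closedBall_subset_ball ?_).trans (hK j j.2)
            linarith [hr2 j]
    calc ∫⁻ y in K, f y ≤ ∫⁻ y in ⋃ i, ⋃ j ∈ s i, Metric.closedBall (j:ℝ) (r j), f y := by
          refine lintegral_mono_set (hcov.trans ?_)
          exact Set.iUnion_mono fun i => Set.iUnion₂_mono fun j _ => Metric.ball_subset_closedBall
      _ ≤ ∑' i, ∫⁻ y in ⋃ j ∈ s i, Metric.closedBall (j:ℝ) (r j), f y := lintegral_iUnion_le _ _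
      _ ≤ ∑' i : Fin N, ENNReal.ofReal C * ∫⁻ y in Ω, W y := ENNReal.tsum_le_tsum hfam
      _ = N * (ENNReal.ofReal C * ∫⁻ y in Ω, W y) := by
          rw [tsum_fintype]; simp
      _ ≤ ENNReal.ofReal ((N+1) * C) * ∫⁻ y in Ω, W y := by
          rw [ENNReal.ofReal_mul (by positivity), mul_assoc]
          gcongr
          rw [← ENNReal.ofReal_natCast]
          exact ENNReal.ofReal_le_ofReal (by linarith)

theorem tgn_fubini (n : ℕ) (i : Fin (n+1)) (f g : EuclideanSpace ℝ (Fin (n+1)) → ℝ≥0∞)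
    (hf : AEMeasurable f) (hg : AEMeasurable g) (C : ℝ≥0∞) (hC : C ≠ ∞)
    (h : ∀ a, ∫⁻ s : ℝ, f (a + s • EuclideanSpace.single i 1) ≤
      C * ∫⁻ s : ℝ, g (a + s • EuclideanSpace.single i 1)) :
    ∫⁻ x, f x ≤ C * ∫⁻ x, g x := by
  have hmp := (PiLp.volume_preserving_toLp (Fin (n+1))).comp
    (volume_preserving_piFinSuccAbove (fun _ : Fin (n+1) => ℝ) i).symm
  have hemb := (MeasurableEquiv.toLp 2 (Fin (n+1) → ℝ)).measurableEmbedding.comp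
    (MeasurableEquiv.piFinSuccAbove (fun _ : Fin (n+1) => ℝ) i).symm.measurableEmbedding
  set Ψ : ℝ × (Fin n → ℝ) → EuclideanSpace ℝ (Fin (n+1)) :=
    (@WithLp.toLp 2 (Fin (n+1) → ℝ)) ∘ (MeasurableEquiv.piFinSuccAbove (fun _ : Fin (n+1) => ℝ) i).symm
    with hΨ
  have hΨa : ∀ (s : ℝ) (y : Fin n → ℝ) (j : Fin (n+1)),
      Ψ (s, y) j = Fin.insertNth (α := fun _ => ℝ) i s y j := fun s y j => rfl
  have hform : ∀ (s : ℝ) (y : Fin n → ℝ), Ψ (s, y) = Ψ (0, y) + s • EuclideanSpace.single i 1 := by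
    intro s y
    ext j
    rw [PiLp.add_apply, PiLp.smul_apply, hΨa, hΨa]
    refine Fin.succAboveCases i ?_ (fun j => ?_) j
    · simp
    · simp
  have key : ∀ φ : EuclideanSpace ℝ (Fin (n+1)) → ℝ≥0∞, AEMeasurable φ →
      ∫⁻ x, φ x = ∫⁻ y : Fin n → ℝ, ∫⁻ s : ℝ, φ (Ψ (0, y) + s • EuclideanSpace.single i 1) := by
    intro φ hφ
    rw [← hmp.lintegral_comp_emb hemb φ, Measure.volume_eq_prod, lintegral_prod_symm]
    · simp only [← hform]
    · exact hφ.comp_quasiMeasurePreserving hmp.quasiMeasurePreserving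
  rw [key f hf, key g hg, ← lintegral_const_mul' _ _ hC]
  exact lintegral_mono fun y => h _

theorem tgn_opnorm {m : ℕ} {F : Type} [NormedAddCommGroup F] [NormedSpace ℝ F]
    (L : EuclideanSpace ℝ (Fin m) →L[ℝ] F) :
    ‖L‖ ≤ ∑ i, ‖L (EuclideanSpace.single i 1)‖ := by
  refine L.opNorm_le_bound (Finset.sum_nonneg fun _ _ => norm_nonneg _) fun x => ?_
  have hx : x = ∑ i, x i • EuclideanSpace.single i (1:ℝ) := by
    ext j
    simp [Finset.sum_apply, Pi.single_apply]
  calc ‖L x‖ = ‖∑ i, x i • L (EuclideanSpace.single i (1:ℝ))‖ := by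
        conv_lhs => rw [hx, map_sum]
        simp only [map_smul]
    _ ≤ ∑ i, ‖x i • L (EuclideanSpace.single i (1:ℝ))‖ := norm_sum_le _ _
    _ ≤ ∑ i, ‖L (EuclideanSpace.single i 1)‖ * ‖x‖ := by
        refine Finset.sum_le_sum fun i _ => ?_
        rw [norm_smul, mul_comm]
        gcongr
        exact PiLp.norm_apply_le x i
    _ = _ := by rw [Finset.sum_mul]

/-- Truncated Gagliardo–Nirenberg interpolation inequality (Proposition 3.3). -/
theorem truncated_gagliardo_nirenberg
    (m k : ℕ) (hm : 1 ≤ m) (hk : 1 ≤ k) (p : ℝ) (hp : 1 < p) :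
    ∃ C κ : ℝ, 0 < C ∧ 0 < κ ∧ ∀ (ν : ℕ), 1 ≤ ν →
      ∀ (Ω : Set (EuclideanSpace ℝ (Fin m))), IsOpen Ω →
      ∀ (u : EuclideanSpace ℝ (Fin m) → EuclideanSpace ℝ (Fin ν)),
        ContDiffOn ℝ k u Ω → Bornology.IsBounded (u '' Ω) →
      ∀ (t ρ : ℝ), 0 < t → 0 < ρ →
        (sSup ((fun y => ‖u y‖) '' Ω)) ^ k ≤ κ * t ^ k * ρ ^ k →
      ∀ (K : Set (EuclideanSpace ℝ (Fin m))), MeasurableSet K →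
        (∀ x ∈ K, ∀ y : EuclideanSpace ℝ (Fin m), ‖y‖ < ρ → x + y ∈ Ω) →
        (∫⁻ x in K,
            ENNReal.ofReal
              ((max (‖fderivWithin ℝ u Ω x‖ - t) 0) ^ ((k : ℝ) * p)))
          ≤ ENNReal.ofReal C *
            ∫⁻ x in Ω,
              ENNReal.ofReal
                ((max ((sSup ((fun y => ‖u y‖) '' Ω)) ^ (k - 1) *
                    ‖iteratedFDerivWithin ℝ k u Ω x‖ - κ * t ^ k) 0) ^ p) := by
  obtain ⟨n, rfl⟩ : ∃ n, m = n + 1 := ⟨m - 1, by omega⟩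
  obtain ⟨C, κ₁, hC, hκ₁, H⟩ := tgn_oneD k hk p hp.le
  set M : ℝ := ((n+1 : ℕ) : ℝ) with hM
  have hM0 : 0 < M := by rw [hM]; positivity
  set q : ℝ := (k:ℝ) * p with hq
  have hq0 : 0 < q := by
    have : (0:ℝ) < k := by exact_mod_cast hk
    rw [hq]; nlinarith
  refine ⟨M * (M^q * C), κ₁ / M^k, by positivity, by positivity, ?_⟩
  intro ν _ Ω hΩ u hu hub t ρ ht hρ hS K hKm hK
  set S := sSup ((fun y => ‖u y‖) '' Ω) with hSdef
  have hKΩ : K ⊆ Ω := fun x hx => by simpa using hK x hx 0 (by simpa using hρ)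
  have hbdd : BddAbove ((fun y => ‖u y‖) '' Ω) := by
    obtain ⟨R, hR⟩ := hub.exists_norm_le
    exact ⟨R, by rintro _ ⟨y, hy, rfl⟩; exact hR _ ⟨y, hy, rfl⟩⟩
  have huS : ∀ x ∈ Ω, ‖u x‖ ≤ S := fun x hx => le_csSup hbdd ⟨x, hx, rfl⟩
  have hS0 : 0 ≤ S := Real.sSup_nonneg (by rintro _ ⟨y, _, rfl⟩; exact norm_nonneg _)
  have hκt : κ₁ / M^k * t^k = κ₁ * (t/M)^k := by rw [div_pow]; ring
  rw [hκt] at hS ⊢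
  have htM : 0 < t / M := by positivity
  have huniq := hΩ.uniqueDiffOn (𝕜 := ℝ)
  let e : Fin (n+1) → EuclideanSpace ℝ (Fin (n+1)) := fun i => EuclideanSpace.single i 1
  have he : ∀ i, ‖e i‖ = 1 := fun i => by simp [e]
  let D : Fin (n+1) → EuclideanSpace ℝ (Fin (n+1)) → EuclideanSpace ℝ (Fin ν) :=
    fun i x => iteratedFDerivWithin ℝ 1 u Ω x (fun _ => e i)
  have hVc : ∀ j ≤ k, ∀ i, ContinuousOn (fun x => iteratedFDerivWithin ℝ j u Ω x (fun _ => e i)) Ω := by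
    intro j hj i
    have h1 := hu.continuousOn_iteratedFDerivWithin (m := j) (by exact_mod_cast hj) huniq
    exact (ContinuousMultilinearMap.apply ℝ (fun _ : Fin j => EuclideanSpace ℝ (Fin (n+1)))
      (EuclideanSpace ℝ (Fin ν)) (fun _ => e i)).continuous.comp_continuousOn h1
  have hDc : ∀ i, ContinuousOn (D i) Ω := fun i => hVc 1 hk i
  let Ki : Fin (n+1) → Set (EuclideanSpace ℝ (Fin (n+1))) := fun i =>
    K ∩ (Ω ∩ (fun x => ‖D i x‖) ⁻¹' Set.Ioi (t/M))
  have hKim : ∀ i, MeasurableSet (Ki i) := fun i =>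
    hKm.inter ((hDc i).norm.isOpen_inter_preimage hΩ isOpen_Ioi).measurableSet
  let f : Fin (n+1) → EuclideanSpace ℝ (Fin (n+1)) → ℝ≥0∞ := fun i =>
    (Ki i).indicator fun x => ENNReal.ofReal (‖D i x‖ ^ q)
  let W : EuclideanSpace ℝ (Fin (n+1)) → ℝ≥0∞ := fun x =>
    ENNReal.ofReal ((max (S^(k-1) * ‖iteratedFDerivWithin ℝ k u Ω x‖ - κ₁ * (t/M)^k) 0)^p)
  have hfm : ∀ i, AEMeasurable (f i) := fun i => by
    rw [aemeasurable_indicator_iff (hKim i)]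
    refine ContinuousOn.aemeasurable ?_ (hKim i)
    refine ENNReal.continuous_ofReal.comp_continuousOn ?_
    exact ((hDc i).norm.mono fun x hx => hx.2.1).rpow_const fun _ _ => Or.inr hq0.le
  have hWm : AEMeasurable (Ω.indicator W) := by
    rw [aemeasurable_indicator_iff hΩ.measurableSet]
    refine ContinuousOn.aemeasurable ?_ hΩ.measurableSet
    refine ENNReal.continuous_ofReal.comp_continuousOn ?_
    have h1 := (hu.continuousOn_iteratedFDerivWithin (m := k) le_rfl huniq).norm
    exact (((continuousOn_const.mul h1).sub continuousOn_const).sup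
      continuousOn_const).rpow_const fun _ _ => Or.inr (by linarith)
  have hline : ∀ i, ∫⁻ x, f i x ≤ ENNReal.ofReal C * ∫⁻ x, Ω.indicator W x := by
    intro i
    refine tgn_fubini n i _ _ (hfm i) hWm _ ENNReal.ofReal_ne_top fun a => ?_
    let ℓ : ℝ → EuclideanSpace ℝ (Fin (n+1)) := fun s => a + s • e i
    have hℓc : Continuous ℓ := by fun_prop
    have hℓd : ∀ s, HasDerivAt ℓ (e i) s := fun s => by
      have := ((hasDerivAt_id s).smul_const (e i)).const_add a
      rw [one_smul] at this
      exact this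
    have h := H (EuclideanSpace ℝ (Fin ν))
      (fun j s => iteratedFDerivWithin ℝ j u Ω (ℓ s) (fun _ => e i)) (ℓ ⁻¹' Ω) S (t/M) ρ
      (hΩ.preimage hℓc) ?_ ((hVc k le_rfl i).comp hℓc.continuousOn fun _ h => h) ?_ htM hρ hS
      (ℓ ⁻¹' Ki i) (hℓc.measurable (hKim i)) ?_ ?_
    · change ∫⁻ s, (Ki i).indicator (fun x => ENNReal.ofReal (‖D i x‖ ^ q)) (ℓ s) ≤
        _ * ∫⁻ s, Ω.indicator W (ℓ s)
      have e1 : ∀ (T : Set (EuclideanSpace ℝ (Fin (n+1)))) (φ : EuclideanSpace ℝ (Fin (n+1)) → ℝ≥0∞),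
          MeasurableSet T → ∫⁻ s, T.indicator φ (ℓ s) = ∫⁻ s in ℓ ⁻¹' T, φ (ℓ s) := by
        intro T φ hT
        rw [← lintegral_indicator (hℓc.measurable hT)]
        rfl
      rw [e1 _ _ (hKim i), e1 _ _ hΩ.measurableSet]
      refine h.trans ?_
      gcongr with s
      refine ENNReal.ofReal_le_ofReal ?_
      have h2 : ‖iteratedFDerivWithin ℝ k u Ω (ℓ s) (fun _ => e i)‖ ≤
          ‖iteratedFDerivWithin ℝ k u Ω (ℓ s)‖ := by
        have := (iteratedFDerivWithin ℝ k u Ω (ℓ s)).le_opNorm (fun _ => e i)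
        simpa [he] using this
      gcongr
    · intro j hj s hs
      have h1 := (hu.differentiableOn_iteratedFDerivWithin (m := j) (by exact_mod_cast hj) huniq
        (ℓ s) hs).hasFDerivWithinAt.hasFDerivAt (hΩ.mem_nhds hs)
      have h2 := h1.comp_hasDerivAt s (hℓd s)
      have h3 := (ContinuousMultilinearMap.apply ℝ (fun _ : Fin j => EuclideanSpace ℝ (Fin (n+1)))
        (EuclideanSpace ℝ (Fin ν)) (fun _ => e i)).hasFDerivAt.comp_hasDerivAt s h2
      exact h3
    · intro s hs
      simpa using huS (ℓ s) hs
    · intro s hs s' hs'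
      have h1 := hK (ℓ s) hs.1 ((s' - s) • e i) (by
        rw [norm_smul, he, mul_one]; simpa [Real.dist_eq] using hs')
      have h2 : ℓ s + (s' - s) • e i = ℓ s' := by simp only [ℓ]; module
      rw [h2] at h1
      exact h1
    · intro s hs
      exact hs.2.2
  have hpt : ∀ x ∈ K, ENNReal.ofReal ((max (‖fderivWithin ℝ u Ω x‖ - t) 0) ^ q) ≤
      ∑ i, ENNReal.ofReal (M^q) * f i x := by
    intro x hx
    rcases le_or_gt ‖fderivWithin ℝ u Ω x‖ t with hle | hlt
    · rw [max_eq_right (by linarith), Real.zero_rpow hq0.ne']; simp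
    · have hD : ∀ i, D i x = fderivWithin ℝ u Ω x (e i) := fun i =>
        iteratedFDerivWithin_one_apply (huniq x (hKΩ hx)) _
      obtain ⟨i, hi⟩ : ∃ i, ‖fderivWithin ℝ u Ω x‖ / M ≤ ‖D i x‖ := by
        by_contra! hcon
        have h1 := tgn_opnorm (fderivWithin ℝ u Ω x)
        have h2 : ∑ i, ‖D i x‖ < ∑ i : Fin (n+1), ‖fderivWithin ℝ u Ω x‖ / M :=
          Finset.sum_lt_sum_of_nonempty Finset.univ_nonempty fun i _ => hcon i
        rw [Finset.sum_const, Finset.card_univ, Fintype.card_fin, nsmul_eq_mul, ← hM,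
          mul_div_cancel₀ _ hM0.ne'] at h2
        simp only [hD] at h2
        exact absurd h1 (not_le.2 h2)
      have hxi : x ∈ Ki i := ⟨hx, hKΩ hx, lt_of_lt_of_le (by gcongr) hi⟩
      refine le_trans ?_ (Finset.single_le_sum (f := fun i => ENNReal.ofReal (M^q) * f i x)
        (fun _ _ => zero_le) (Finset.mem_univ i))
      simp only [f, Set.indicator_of_mem hxi]
      rw [← ENNReal.ofReal_mul (by positivity), ← Real.mul_rpow hM0.le (norm_nonneg _)]
      refine ENNReal.ofReal_le_ofReal ?_
      rw [div_le_iff₀ hM0] at hi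
      refine Real.rpow_le_rpow (le_max_right _ _) (max_le ?_ (by positivity)) hq0.le
      linarith
  calc ∫⁻ x in K, ENNReal.ofReal ((max (‖fderivWithin ℝ u Ω x‖ - t) 0) ^ q)
      ≤ ∫⁻ x in K, ∑ i, ENNReal.ofReal (M^q) * f i x := setLIntegral_mono' hKm hpt
    _ ≤ ∫⁻ x, ∑ i, ENNReal.ofReal (M^q) * f i x := setLIntegral_le_lintegral _ _
    _ = ∑ i, ENNReal.ofReal (M^q) * ∫⁻ x, f i x := by
        rw [lintegral_finsetSum' _ fun i _ => (hfm i).const_mul _]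
        exact Finset.sum_congr rfl fun i _ => lintegral_const_mul' _ _ ENNReal.ofReal_ne_top
    _ ≤ ∑ i : Fin (n+1), ENNReal.ofReal (M^q) * (ENNReal.ofReal C * ∫⁻ x, Ω.indicator W x) := by
        gcongr with i; exact hline i
    _ = ENNReal.ofReal (M * (M^q * C)) * ∫⁻ x in Ω, W x := by
        rw [Finset.sum_const, Finset.card_univ, Fintype.card_fin, nsmul_eq_mul,
          lintegral_indicator hΩ.measurableSet, ENNReal.ofReal_mul hM0.le,
          ENNReal.ofReal_mul (by positivity), hM, ENNReal.ofReal_natCast]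
        ring
end

section
/- Let m ≥ 1, ν ≥ 1, k ≥ 2 be integers and let p ∈ ℝ with 1 < p < ∞. Let (u_n) be a sequence of k-times continuously differentiable maps ℝ^m → ℝ^ν such that sup_n sup_{x ∈ ℝ^m} ‖u_n(x)‖ < ∞ and lim_{t→∞} sup_n ∫_{ℝ^m} (‖D^k u_n‖ − t)_+^{p} = 0. Then lim_{t→∞} sup_n ∫_{ℝ^m} (‖Du_n‖ − t)_+^{kp} = 0. -/
open MeasureTheory Filter Topology ENNReal

lemma aux_coeffs (k : ℕ) : ∃ c : ℕ → ℝ, ∀ i < k,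
    ∑ j ∈ Finset.range k, c j * (j : ℝ) ^ i = if i = 1 then 1 else 0 := by
  refine ⟨fun j => (Polynomial.derivative
    (Lagrange.basis (Finset.range k) (fun j : ℕ => (j : ℝ)) j)).eval 0, fun i hi => ?_⟩
  have h := Lagrange.eq_interpolate (s := Finset.range k) (v := fun j : ℕ => (j : ℝ))
    (f := (Polynomial.X : Polynomial ℝ) ^ i) (fun a _ b _ h => by simpa using h)
    (by simpa using hi)
  have h2 := congrArg (fun P => (Polynomial.derivative P).eval 0) h
  simp only [Lagrange.interpolate_apply, Polynomial.derivative_sum, Polynomial.eval_finsetSum,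
    Polynomial.derivative_C_mul, Polynomial.eval_mul, Polynomial.eval_C, Polynomial.eval_pow,
    Polynomial.eval_X] at h2
  simp_rw [mul_comm _ ((_ : ℝ) ^ i)]
  rw [← h2, Polynomial.derivative_X_pow]
  rcases i with _ | _ | i <;> simp

lemma aux_pointwise {E F : Type*} [NormedAddCommGroup E] [NormedSpace ℝ E]
    [NormedAddCommGroup F] [NormedSpace ℝ F] [CompleteSpace F] (k : ℕ) (hk : 2 ≤ k) :
    ∃ C : ℝ, 0 < C ∧ ∀ (f : E → F) (M : ℝ), 0 < M → ContDiff ℝ k f → (∀ x, ‖f x‖ ≤ M) →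
      ∀ x h, ‖fderiv ℝ f x h‖ ≤ C * (M + ‖h‖ ^ k * ∑ j ∈ Finset.range k,
        ∫ t in (0:ℝ)..1, ‖iteratedFDeriv ℝ k f (x + t • ((j : ℝ) • h))‖) := by
  obtain ⟨c, hc⟩ := aux_coeffs k
  refine ⟨1 + ∑ j ∈ Finset.range k, |c j| * (1 + (j : ℝ) ^ k), by positivity, ?_⟩
  intro f M hM hf hb x h
  obtain ⟨n, rfl⟩ : ∃ n, k = n + 1 := ⟨k - 1, by omega⟩
  set R : ℕ → F := fun j => ((n.factorial : ℝ)⁻¹ • ∫ t in (0:ℝ)..1,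
    (1 - t)^n • iteratedFDeriv ℝ (n + 1) f (x + t • ((j : ℝ) • h)) (fun _ ↦ (j : ℝ) • h)) with hR
  set I : ℕ → ℝ := fun j =>
    ∫ t in (0:ℝ)..1, ‖iteratedFDeriv ℝ (n + 1) f (x + t • ((j : ℝ) • h))‖ with hI
  have hcont : Continuous (iteratedFDeriv ℝ (n + 1) f) :=
    hf.continuous_iteratedFDeriv (by norm_cast)
  have hI0 : ∀ j, 0 ≤ I j := fun j =>
    intervalIntegral.integral_nonneg zero_le_one (fun _ _ => norm_nonneg _)
  have hRI : ∀ j, ‖R j‖ ≤ (j : ℝ) ^ (n + 1) * ‖h‖ ^ (n + 1) * I j := by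
    intro j
    rw [hR]
    simp only
    rw [norm_smul]
    have h1 : ‖(n.factorial : ℝ)⁻¹‖ ≤ 1 := by
      rw [norm_inv, Real.norm_natCast]
      exact inv_le_one_of_one_le₀ (by exact_mod_cast Nat.one_le_iff_ne_zero.2 n.factorial_ne_zero)
    refine (mul_le_of_le_one_left (norm_nonneg _) h1).trans ?_
    rw [hI, ← intervalIntegral.integral_const_mul]
    refine intervalIntegral.norm_integral_le_of_norm_le zero_le_one ?_ ?_
    · refine Eventually.of_forall fun t ht => ?_
      rw [norm_smul]
      have h2 : ‖(1 - t) ^ n‖ ≤ 1 := by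
        rw [norm_pow]
        apply pow_le_one₀ (norm_nonneg _)
        rw [Real.norm_eq_abs, abs_le]
        constructor <;> linarith [ht.1, ht.2]
      refine (mul_le_of_le_one_left (norm_nonneg _) h2).trans ?_
      refine (ContinuousMultilinearMap.le_opNorm _ _).trans (le_of_eq ?_)
      simp [norm_smul, mul_pow]
      ring
    · apply Continuous.intervalIntegrable
      fun_prop
  have hT : ∀ j : ℕ, f (x + (j : ℝ) • h) = ∑ i ∈ Finset.range (n + 1),
      ((i.factorial : ℝ)⁻¹ * (j : ℝ) ^ i) • (iteratedFDeriv ℝ i f x (fun _ ↦ h)) + R j := by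
    intro j
    rw [map_add_eq_sum_add_integral_iteratedFDeriv (f := f) (x := x)
      (y := (j : ℝ) • h) (n := n)
      (fun t _ => by exact_mod_cast hf.contDiffAt)]
    congr 1
    refine Finset.sum_congr rfl fun i _ => ?_
    rw [ContinuousMultilinearMap.map_smul_univ _ (fun _ => (j : ℝ))]
    simp [smul_smul]
  have hS : ∑ j ∈ Finset.range (n + 1), c j • f (x + (j : ℝ) • h) =
      fderiv ℝ f x h + ∑ j ∈ Finset.range (n + 1), c j • R j := by
    simp_rw [hT, smul_add, Finset.sum_add_distrib, Finset.smul_sum]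
    congr 1
    rw [Finset.sum_comm]
    have : ∀ i ∈ Finset.range (n + 1), ∑ j ∈ Finset.range (n + 1),
        c j • ((i.factorial : ℝ)⁻¹ * (j : ℝ) ^ i) • (iteratedFDeriv ℝ i f x (fun _ ↦ h))
        = if i = 1 then fderiv ℝ f x h else 0 := by
      intro i hi
      have := hc i (Finset.mem_range.1 hi)
      simp_rw [smul_smul, ← Finset.sum_smul]
      have e : ∑ j ∈ Finset.range (n + 1), c j * ((i.factorial : ℝ)⁻¹ * (j : ℝ) ^ i)
          = (i.factorial : ℝ)⁻¹ * ∑ j ∈ Finset.range (n + 1), c j * (j : ℝ) ^ i := by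
        rw [Finset.mul_sum]
        exact Finset.sum_congr rfl fun _ _ => by ring
      rw [e, this]
      split_ifs with h1
      · subst h1
        simp
      · simp
    rw [Finset.sum_congr rfl this]
    simp
    omega
  have hD : fderiv ℝ f x h = ∑ j ∈ Finset.range (n + 1), c j • (f (x + (j : ℝ) • h) - R j) := by
    simp_rw [smul_sub, Finset.sum_sub_distrib, hS]
    simp
  have hsum0 : 0 ≤ ∑ j ∈ Finset.range (n + 1), I j := Finset.sum_nonneg fun j _ => hI0 j
  set X := M + ‖h‖ ^ (n + 1) * ∑ j ∈ Finset.range (n + 1), I j with hX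
  have hX0 : 0 ≤ X := by positivity
  rw [hD, add_mul, Finset.sum_mul]
  refine (norm_sum_le _ _).trans ?_
  refine le_trans (Finset.sum_le_sum fun j hj => ?_) (le_add_of_nonneg_left (by linarith))
  rw [norm_smul, Real.norm_eq_abs, mul_assoc]
  refine mul_le_mul_of_nonneg_left ?_ (abs_nonneg _)
  refine (norm_sub_le _ _).trans ?_
  have h1 : I j ≤ ∑ j ∈ Finset.range (n + 1), I j :=
    Finset.single_le_sum (fun j _ => hI0 j) hj
  have h2 : ‖h‖ ^ (n + 1) * I j ≤ X := by
    have := mul_le_mul_of_nonneg_left h1 (by positivity : 0 ≤ ‖h‖ ^ (n + 1))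
    linarith
  have h3 : M ≤ X := by
    have : 0 ≤ ‖h‖ ^ (n + 1) * ∑ j ∈ Finset.range (n + 1), I j := by positivity
    linarith
  have h4 := mul_le_mul_of_nonneg_left h2 (by positivity : 0 ≤ (j : ℝ) ^ (n + 1))
  have := hRI j
  have := hb (x + (j : ℝ) • h)
  linarith

lemma aux_inner (p y : ℝ) (hp : 1 < p) (hy : 0 ≤ y) :
    ∫⁻ l in Set.Ioi (0:ℝ), ENNReal.ofReal (l ^ (p - 2)) * ENNReal.ofReal (max (y - l) 0)
      ≤ ENNReal.ofReal (1 / (p - 1)) * ENNReal.ofReal (y ^ p) := by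
  have h1 : ∫⁻ l in Set.Ioi (0:ℝ), ENNReal.ofReal (l ^ (p - 2)) * ENNReal.ofReal (max (y - l) 0)
      ≤ ∫⁻ l in Set.Ioc (0:ℝ) y, ENNReal.ofReal (l ^ (p - 2)) * ENNReal.ofReal y := by
    rw [← lintegral_indicator measurableSet_Ioi, ← lintegral_indicator measurableSet_Ioc]
    refine lintegral_mono fun l => ?_
    by_cases h0 : 0 < l
    · by_cases hly : l ≤ y
      · rw [Set.indicator_of_mem (show l ∈ Set.Ioi 0 from h0),
          Set.indicator_of_mem (show l ∈ Set.Ioc 0 y from ⟨h0, hly⟩)]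
        gcongr
        exact max_le (by linarith) hy
      · rw [Set.indicator_of_mem (show l ∈ Set.Ioi 0 from h0), max_eq_right (by linarith)]
        simp
    · rw [Set.indicator_of_notMem (by simpa using h0)]
      simp
  refine h1.trans ?_
  rw [lintegral_mul_const' _ _ ENNReal.ofReal_ne_top]
  have hint : IntervalIntegrable (fun l : ℝ => l ^ (p - 2)) volume 0 y :=
    intervalIntegral.intervalIntegrable_rpow' (by linarith)
  rw [← ofReal_integral_eq_lintegral_ofReal hint.1
    (by
      filter_upwards [ae_restrict_mem measurableSet_Ioc] with l hl
      exact Real.rpow_nonneg hl.1.le _),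
    ← intervalIntegral.integral_of_le hy, integral_rpow (Or.inl (by linarith)),
    ← ENNReal.ofReal_mul' hy, ← ENNReal.ofReal_mul (by apply div_nonneg <;> linarith)]
  apply ENNReal.ofReal_le_ofReal
  rw [show p - 2 + 1 = p - 1 by ring, Real.zero_rpow (by linarith)]
  rcases hy.eq_or_lt with rfl | hy'
  · simp [Real.zero_rpow (by linarith : p ≠ 0)]
  · have : y ^ p = y ^ (p - 1) * y := by
      rw [← Real.rpow_add_one hy'.ne']; ring_nf
    rw [this]
    apply le_of_eq
    ring

lemma aux_strong {α : Type*} [MeasurableSpace α] (μ : Measure α) [SFinite μ]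
    (A g : α → ℝ) (hA : Measurable A) (hg : Measurable g) (N : ℝ) (hN : 0 ≤ N) (p : ℝ) (hp : 1 < p)
    (hw : ∀ l : ℝ, 0 < l → μ {x | l < A x} ≤
      ENNReal.ofReal (N / l) * ∫⁻ x, ENNReal.ofReal (max (g x - l) 0) ∂μ)
    (S : ℝ) (hS : 0 ≤ S) :
    ∫⁻ x, ENNReal.ofReal ((max (A x - S) 0) ^ p) ∂μ ≤
      ENNReal.ofReal (p * N / (p - 1)) * ∫⁻ x, ENNReal.ofReal ((max (g x - S) 0) ^ p) ∂μ := by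
  rw [lintegral_rpow_eq_lintegral_meas_lt_mul μ (f := fun x => max (A x - S) 0)
    (Eventually.of_forall fun x => le_max_right _ _)
    (by fun_prop) (by linarith : 0 < p)]
  have h1 : ∫⁻ l in Set.Ioi (0:ℝ), μ {x | l < max (A x - S) 0} * ENNReal.ofReal (l ^ (p - 1)) ≤
      ∫⁻ l in Set.Ioi (0:ℝ), ENNReal.ofReal N * ∫⁻ x, ENNReal.ofReal (l ^ (p - 2)) *
        ENNReal.ofReal (max (max (g x - S) 0 - l) 0) ∂μ := by
    refine setLIntegral_mono' measurableSet_Ioi fun l hl => ?_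
    have hl : 0 < l := hl
    have hsub : {x | l < max (A x - S) 0} ⊆ {x | S + l < A x} := by
      intro x hx
      simp only [Set.mem_ofPred_eq, lt_max_iff] at hx ⊢
      rcases hx with hx | hx <;> linarith
    rw [lintegral_const_mul' _ _ ENNReal.ofReal_ne_top, ← mul_assoc, ← ENNReal.ofReal_mul hN]
    calc _ ≤ (ENNReal.ofReal (N / (S + l)) * ∫⁻ x, ENNReal.ofReal (max (g x - (S + l)) 0) ∂μ)
          * ENNReal.ofReal (l ^ (p - 1)) := by
          gcongr
          exact (measure_mono hsub).trans (hw _ (by linarith))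
      _ = ENNReal.ofReal (N / (S + l) * l ^ (p - 1)) *
          ∫⁻ x, ENNReal.ofReal (max (g x - (S + l)) 0) ∂μ := by
          rw [ENNReal.ofReal_mul (by positivity)]
          ring
      _ ≤ _ := by
          refine mul_le_mul' (ENNReal.ofReal_le_ofReal ?_)
            (lintegral_mono fun x => ENNReal.ofReal_le_ofReal ?_)
          · have : l ^ (p - 1) = l ^ (p - 2) * l := by
              rw [← Real.rpow_add_one hl.ne']; ring_nf
            rw [this]
            have h2 : N / (S + l) * l ≤ N := by
              rw [div_mul_eq_mul_div, div_le_iff₀ (by linarith)]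
              nlinarith
            calc _ = (N / (S + l) * l) * l ^ (p - 2) := by ring
              _ ≤ _ := by gcongr
          · apply max_le_max _ le_rfl
            linarith [le_max_left (g x - S) 0]
  calc _ ≤ ENNReal.ofReal p * ∫⁻ l in Set.Ioi (0:ℝ), ENNReal.ofReal N * ∫⁻ x,
        ENNReal.ofReal (l ^ (p - 2)) * ENNReal.ofReal (max (max (g x - S) 0 - l) 0) ∂μ := by gcongr
    _ = ENNReal.ofReal p * (ENNReal.ofReal N * ∫⁻ x, (∫⁻ l in Set.Ioi (0:ℝ),
        ENNReal.ofReal (l ^ (p - 2)) * ENNReal.ofReal (max (max (g x - S) 0 - l) 0)) ∂μ) := by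
        rw [lintegral_const_mul' _ _ ENNReal.ofReal_ne_top, lintegral_lintegral_swap]
        apply Measurable.aemeasurable
        unfold Function.uncurry
        fun_prop
    _ ≤ ENNReal.ofReal p * (ENNReal.ofReal N * ∫⁻ x,
          ENNReal.ofReal (1 / (p - 1)) * ENNReal.ofReal ((max (g x - S) 0) ^ p) ∂μ) := by
        gcongr with x
        exact aux_inner p _ hp (le_max_right _ _)
    _ = _ := by
        rw [lintegral_const_mul' _ _ ENNReal.ofReal_ne_top, ← mul_assoc, ← mul_assoc,
          ← ENNReal.ofReal_mul (by linarith), ← ENNReal.ofReal_mul (by positivity)]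
        congr 2
        ring

lemma aux_weak (m ν k : ℕ) (hm : 1 ≤ m) (hk : 2 ≤ k) :
    ∃ C : ℝ, 0 < C ∧ ∀ (f : EuclideanSpace ℝ (Fin m) → EuclideanSpace ℝ (Fin ν)) (M : ℝ), 0 < M →
      ContDiff ℝ k f → (∀ x, ‖f x‖ ≤ M) → ∀ l : ℝ, 0 < l →
      volume {x | l < ‖fderiv ℝ f x‖ ^ k / (C * M ^ (k - 1))} ≤
        ENNReal.ofReal ((m * k : ℝ) / l) *
          ∫⁻ x, ENNReal.ofReal (max (‖iteratedFDeriv ℝ k f x‖ - l) 0) := by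
  obtain ⟨C, hC, hpt⟩ := aux_pointwise (E := EuclideanSpace ℝ (Fin m))
    (F := EuclideanSpace ℝ (Fin ν)) k hk
  refine ⟨(C * (m * (1 + k) + 1)) ^ k, by positivity, ?_⟩
  intro f M hM hf hb l hl
  set C' := C * (m * (1 + k) + 1 : ℝ) with hC'
  have hC'0 : 0 < C' := by positivity
  set g := fun x => ‖iteratedFDeriv ℝ k f x‖ with hg
  have hgc : Continuous g := (hf.continuous_iteratedFDeriv le_rfl).norm
  set G : EuclideanSpace ℝ (Fin m) → ℝ := fun x => max (g x - l) 0 with hG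
  have hGc : Continuous G := by fun_prop
  have hG0 : ∀ x, 0 ≤ G x := fun x => le_max_right _ _
  obtain ⟨r, hr, hrk⟩ : ∃ r : ℝ, 0 < r ∧ r ^ k = M / l := by
    refine ⟨(M / l) ^ (1 / (k : ℝ)), by positivity, ?_⟩
    rw [one_div, Real.rpow_inv_natCast_pow (by positivity) (by omega)]
  set e : Fin m → EuclideanSpace ℝ (Fin m) := fun i => r • EuclideanSpace.single i (1 : ℝ) with he
  have hen : ∀ i, ‖e i‖ = r := by
    intro i
    simp [he, norm_smul, abs_of_pos hr]
  set S : EuclideanSpace ℝ (Fin m) → ℝ := fun x => ∑ i, ∑ j ∈ Finset.range k,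
    ∫ t in (0:ℝ)..1, G (x + t • ((j : ℝ) • e i)) with hS
  have hint : ∀ x i (j : ℕ), IntervalIntegrable (fun t : ℝ => G (x + t • ((j : ℝ) • e i)))
      volume 0 1 := fun x i j => (by fun_prop : Continuous _).intervalIntegrable _ _
  have hop : ∀ x, ‖fderiv ℝ f x‖ * r ≤ ∑ i, ‖fderiv ℝ f x (e i)‖ := by
    intro x
    have h1 : ‖fderiv ℝ f x‖ ≤ ∑ i, ‖fderiv ℝ f x (EuclideanSpace.single i (1 : ℝ))‖ := by
      refine ContinuousLinearMap.opNorm_le_bound _ (by positivity) fun v => ?_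
      have hv : v = ∑ i, v i • EuclideanSpace.single i (1 : ℝ) := by
        ext j
        simp [Finset.sum_apply, Pi.single_apply]
      conv_lhs => rw [hv]
      rw [map_sum, Finset.sum_mul]
      refine (norm_sum_le _ _).trans (Finset.sum_le_sum fun i _ => ?_)
      rw [map_smul, norm_smul, mul_comm]
      gcongr
      exact PiLp.norm_apply_le v i
    refine (mul_le_mul_of_nonneg_right h1 hr.le).trans (le_of_eq ?_)
    rw [Finset.sum_mul]
    refine Finset.sum_congr rfl fun i _ => ?_
    simp [he, norm_smul, abs_of_pos hr, mul_comm]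
  have hmain : ∀ x, ‖fderiv ℝ f x‖ * r ≤ C * (m * (1 + k) * M + M / l * S x) := by
    intro x
    refine (hop x).trans ?_
    have h1 : ∀ i ∈ Finset.univ, ‖fderiv ℝ f x (e i)‖ ≤ C * ((1 + k) * M + M / l *
        ∑ j ∈ Finset.range k, ∫ t in (0:ℝ)..1, G (x + t • ((j : ℝ) • e i))) := by
      intro i _
      refine (hpt f M hM hf hb x (e i)).trans ?_
      refine mul_le_mul_of_nonneg_left ?_ hC.le
      rw [hen, hrk]
      have h2 : ∑ j ∈ Finset.range k, ∫ t in (0:ℝ)..1, g (x + t • ((j : ℝ) • e i)) ≤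
          ∑ j ∈ Finset.range k, (l + ∫ t in (0:ℝ)..1, G (x + t • ((j : ℝ) • e i))) := by
        refine Finset.sum_le_sum fun j _ => ?_
        have h3 : l + ∫ t in (0:ℝ)..1, G (x + t • ((j : ℝ) • e i)) =
            ∫ t in (0:ℝ)..1, (l + G (x + t • ((j : ℝ) • e i))) := by
          rw [intervalIntegral.integral_add (by simp) (hint x i j)]
          simp
        rw [h3]
        refine intervalIntegral.integral_mono_on zero_le_one
          ((by fun_prop : Continuous _).intervalIntegrable _ _)
          ((by fun_prop : Continuous _).intervalIntegrable _ _) fun t _ => ?_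
        have := le_max_left (g (x + t • ((j : ℝ) • e i)) - l) 0
        simp only [hG]
        linarith
      rw [Finset.sum_add_distrib] at h2
      simp only [Finset.sum_const, Finset.card_range, nsmul_eq_mul] at h2
      have h4 := mul_le_mul_of_nonneg_left h2 (by positivity : 0 ≤ M / l)
      have h5 : M / l * (k * l) = k * M := by field_simp
      rw [mul_add, h5] at h4
      linarith
    refine (Finset.sum_le_sum h1).trans (le_of_eq ?_)
    rw [← Finset.mul_sum, Finset.sum_add_distrib]
    simp only [← Finset.mul_sum, Finset.sum_const, Finset.card_univ, Fintype.card_fin, nsmul_eq_mul, hS]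
    ring
  have hsub : {x | l < ‖fderiv ℝ f x‖ ^ k / (C' ^ k * M ^ (k - 1))} ⊆
      {x | ENNReal.ofReal l ≤ ENNReal.ofReal (S x)} := by
    intro x hx
    simp only [Set.mem_ofPred_eq] at hx ⊢
    apply ENNReal.ofReal_le_ofReal
    by_contra! hlt
    have h1 : M / l * S x ≤ M := by
      rw [div_mul_eq_mul_div, div_le_iff₀ hl]
      gcongr
    have h2 : ‖fderiv ℝ f x‖ * r ≤ C' * M := by
      refine (hmain x).trans ?_
      rw [hC', mul_assoc C]
      refine mul_le_mul_of_nonneg_left ?_ hC.le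
      linarith
    have h3 := pow_le_pow_left₀ (by positivity) h2 k
    rw [mul_pow, mul_pow, hrk] at h3
    have h4 : M ^ k = M ^ (k - 1) * M := by
      rw [← pow_succ]; congr 1; omega
    rw [lt_div_iff₀ (by positivity)] at hx
    rw [h4, ← mul_div_assoc, div_le_iff₀ hl] at h3
    have h5 : ‖fderiv ℝ f x‖ ^ k ≤ l * (C' ^ k * M ^ (k - 1)) := by
      refine le_of_mul_le_mul_right ?_ hM
      linarith
    linarith
  have hSo : ∀ x, ENNReal.ofReal (S x) = ∑ i, ∑ j ∈ Finset.range k,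
      ∫⁻ t in Set.Ioc (0:ℝ) 1, ENNReal.ofReal (G (x + t • ((j : ℝ) • e i))) := by
    intro x
    have h0 : ∀ i (j : ℕ), 0 ≤ ∫ t in (0:ℝ)..1, G (x + t • ((j : ℝ) • e i)) := fun i j =>
      intervalIntegral.integral_nonneg zero_le_one fun _ _ => hG0 _
    rw [hS]
    simp only
    rw [ENNReal.ofReal_sum_of_nonneg fun i _ => Finset.sum_nonneg fun j _ => h0 i j]
    refine Finset.sum_congr rfl fun i _ => ?_
    rw [ENNReal.ofReal_sum_of_nonneg fun j _ => h0 i j]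
    refine Finset.sum_congr rfl fun j _ => ?_
    rw [intervalIntegral.integral_of_le zero_le_one, ofReal_integral_eq_lintegral_ofReal
      (hint x i j).1 (Eventually.of_forall fun _ => hG0 _)]
  have hmeas : ∀ i (j : ℕ), Measurable (Function.uncurry
      (fun (x : EuclideanSpace ℝ (Fin m)) (t : ℝ) =>
        ENNReal.ofReal (G (x + t • ((j : ℝ) • e i))))) := by
    intro i j
    apply Measurable.ennreal_ofReal
    apply Continuous.measurable
    fun_prop
  have hmeas2 : ∀ i (j : ℕ), Measurable (fun x : EuclideanSpace ℝ (Fin m) =>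
      ∫⁻ t in Set.Ioc (0:ℝ) 1, ENNReal.ofReal (G (x + t • ((j : ℝ) • e i)))) := fun i j =>
    (hmeas i j).lintegral_prod_right'
  have hSm : Measurable fun x => ENNReal.ofReal (S x) := by
    simp_rw [hSo]
    exact Finset.measurable_sum _ fun i _ => Finset.measurable_sum _ fun j _ => hmeas2 i j
  have hSi : ∫⁻ x, ENNReal.ofReal (S x) = ENNReal.ofReal (m * k) * ∫⁻ x, ENNReal.ofReal (G x) := by
    simp_rw [hSo]
    rw [lintegral_finsetSum _ fun i _ => Finset.measurable_sum _ fun j _ => hmeas2 i j]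
    have : ∀ i ∈ Finset.univ, ∫⁻ x, ∑ j ∈ Finset.range k,
        ∫⁻ t in Set.Ioc (0:ℝ) 1, ENNReal.ofReal (G (x + t • ((j : ℝ) • e i))) =
        k * ∫⁻ x, ENNReal.ofReal (G x) := by
      intro i _
      rw [lintegral_finsetSum _ fun j _ => hmeas2 i j]
      have : ∀ j ∈ Finset.range k, ∫⁻ x, ∫⁻ t in Set.Ioc (0:ℝ) 1,
          ENNReal.ofReal (G (x + t • ((j : ℝ) • e i))) = ∫⁻ x, ENNReal.ofReal (G x) := by
        intro j _
        rw [lintegral_lintegral_swap (hmeas i j).aemeasurable]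
        have : ∀ t : ℝ, ∫⁻ x, ENNReal.ofReal (G (x + t • ((j : ℝ) • e i))) =
            ∫⁻ x, ENNReal.ofReal (G x) := fun t =>
          lintegral_add_right_eq_self (fun x => ENNReal.ofReal (G x)) _
        simp_rw [this]
        simp
      rw [Finset.sum_congr rfl this]
      simp
    rw [Finset.sum_congr rfl this]
    rw [ENNReal.ofReal_mul (by positivity)]
    simp [mul_assoc]
  refine (measure_mono hsub).trans ((meas_ge_le_lintegral_div hSm.aemeasurable
    (by simpa using hl) ENNReal.ofReal_ne_top).trans (le_of_eq ?_))
  rw [hSi, ENNReal.ofReal_div_of_pos hl, ENNReal.div_eq_inv_mul, ENNReal.div_eq_inv_mul, mul_assoc]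


/-- `W^{k,p}`-equi-integrability together with a uniform `L^∞` bound implies
`W^{1,kp}`-equi-integrability (Proposition 3.5). -/
theorem Wkp_equiintegrable_implies_W1kp_equiintegrable
    (m ν k : ℕ) (hm : 1 ≤ m) (hν : 1 ≤ ν) (hk : 2 ≤ k)
    (p : ℝ) (hp1 : 1 < p)
    (u : ℕ → EuclideanSpace ℝ (Fin m) → EuclideanSpace ℝ (Fin ν))
    (hu : ∀ n, ContDiff ℝ k (u n))
    (hbdd : ∃ M : ℝ, ∀ n x, ‖u n x‖ ≤ M)
    (hequi : Tendsto
      (fun t : ℝ => ⨆ n, ∫⁻ x,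
        ENNReal.ofReal ((max (‖iteratedFDeriv ℝ k (u n) x‖ - t) 0) ^ p))
      atTop (𝓝 0)) :
    Tendsto
      (fun t : ℝ => ⨆ n, ∫⁻ x,
        ENNReal.ofReal ((max (‖fderiv ℝ (u n) x‖ - t) 0) ^ ((k : ℝ) * p)))
      atTop (𝓝 0) := by
  obtain ⟨M₀, hM₀⟩ := hbdd
  obtain ⟨M, hM, hb⟩ : ∃ M : ℝ, 0 < M ∧ ∀ n x, ‖u n x‖ ≤ M :=
    ⟨max M₀ 1, by positivity, fun n x => (hM₀ n x).trans (le_max_left _ _)⟩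
  obtain ⟨C, hC, hw⟩ := aux_weak m ν k hm hk
  set B := C * M ^ (k - 1) with hB
  have hB0 : 0 < B := by positivity
  have hp0 : 0 < p := by linarith
  set K : ENNReal := ENNReal.ofReal (B ^ p) * ENNReal.ofReal (p * (m * k) / (p - 1)) with hK
  have hKtop : K ≠ ∞ := ENNReal.mul_ne_top ENNReal.ofReal_ne_top ENNReal.ofReal_ne_top
  have hS : Tendsto (fun T : ℝ => T ^ k / B) atTop atTop :=
    (tendsto_pow_atTop (by omega)).atTop_div_const hB0
  have h1 := ENNReal.Tendsto.const_mul (hequi.comp hS) (Or.inr hKtop)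
  rw [mul_zero] at h1
  refine tendsto_of_tendsto_of_tendsto_of_le_of_le' tendsto_const_nhds h1
    (Eventually.of_forall fun _ => zero_le) ?_
  filter_upwards [eventually_ge_atTop 0] with T hT
  refine iSup_le fun n => ?_
  have hk1 : (1 : WithTop ℕ∞) ≤ k := by exact_mod_cast (by omega : 1 ≤ k)
  have hd : Continuous fun x => ‖fderiv ℝ (u n) x‖ :=
    ((hu n).continuous_fderiv (by positivity)).norm
  have hi : Continuous fun x => ‖iteratedFDeriv ℝ k (u n) x‖ :=
    ((hu n).continuous_iteratedFDeriv le_rfl).norm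
  have hs := aux_strong volume (fun x => ‖fderiv ℝ (u n) x‖ ^ k / B)
    (fun x => ‖iteratedFDeriv ℝ k (u n) x‖) (by fun_prop) hi.measurable (m * k) (by positivity)
    p hp1 (fun l hl => hw (u n) M hM (hu n) (hb n) l hl) (T ^ k / B) (by positivity)
  have hpt : ∀ x, ENNReal.ofReal ((max (‖fderiv ℝ (u n) x‖ - T) 0) ^ ((k : ℝ) * p)) ≤
      ENNReal.ofReal (B ^ p) *
        ENNReal.ofReal ((max (‖fderiv ℝ (u n) x‖ ^ k / B - T ^ k / B) 0) ^ p) := by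
    intro x
    rw [← ENNReal.ofReal_mul (by positivity), ← Real.mul_rpow hB0.le (le_max_right _ _)]
    apply ENNReal.ofReal_le_ofReal
    rw [Real.rpow_mul (le_max_right _ _), Real.rpow_natCast]
    refine Real.rpow_le_rpow (by positivity) ?_ hp0.le
    rcases le_total (‖fderiv ℝ (u n) x‖) T with h | h
    · rw [max_eq_right (by linarith : ‖fderiv ℝ (u n) x‖ - T ≤ 0), zero_pow (by omega)]
      positivity
    · rw [max_eq_left (by linarith : 0 ≤ ‖fderiv ℝ (u n) x‖ - T)]
      refine le_trans ?_ (mul_le_mul_of_nonneg_left (le_max_left _ _) hB0.le)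
      have h2 : B * (‖fderiv ℝ (u n) x‖ ^ k / B - T ^ k / B) = ‖fderiv ℝ (u n) x‖ ^ k - T ^ k := by
        field_simp
      rw [h2]
      have := pow_add_pow_le
        (by linarith : 0 ≤ ‖fderiv ℝ (u n) x‖ - T) hT (by omega : k ≠ 0)
      rw [sub_add_cancel] at this
      linarith
  refine (lintegral_mono hpt).trans ?_
  rw [lintegral_const_mul' _ _ ENNReal.ofReal_ne_top, hK, mul_assoc]
  gcongr
  refine hs.trans ?_
  gcongr
  exact le_iSup (fun n => ∫⁻ x, ENNReal.ofReal
    ((max (‖iteratedFDeriv ℝ k (u n) x‖ - T ^ k / B) 0) ^ p)) n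
end
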